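/- Let 2 ≤ p ≤ ∞ and q satisfy 2/p + 3/q = 3/2. There exists a constant C > 0 such that for every Schwartz function u₀ on ℝ³ the free KP-II evolution u(t) = S(t)u₀ satisfies the Strichartz estimate ‖u‖_{L^p_t L^q_{x,y}(ℝ×ℝ³)} ≤ C ‖ |D_x|^{1/(3p)} u₀ ‖_{L²(ℝ³)}, where |D_x|^s denotes the Fourier multiplier with symbol |ξ|^s and the mixed norm is ‖u‖_{L^p_t L^q_{x,y}} = ( ∫_ℝ ‖u(t,·)‖_{L^q(ℝ³)}^p dt )^{1/p} (with the usual modification for p = ∞). -/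

import Mathlib

/-!
STATEMENT 0: Strichartz estimate for the free 3D KP-II evolution,
2 ≤ p ≤ ∞, 2/p + 3/q = 3/2:
‖S(t)u₀‖_{L^p_t L^q_{x,y}} ≤ C ‖|D_x|^{1/(3p)} u₀‖_{L²}.
The norm ‖|D_x|^s u₀‖_{L²} is expressed (via Plancherel) as the L² norm of
|ξ|^s û₀ on the Fourier side.
-/

noncomputable section

open MeasureTheory Filter
open scoped ENNReal

abbrev E2 := EuclideanSpace ℝ (Fin 2)

/-- (Nonunitary) Fourier transform on ℝ × ℝ². -/
def ft (f : ℝ × E2 → ℂ) (ζ : ℝ × E2) : ℂ :=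
  ∫ z : ℝ × E2, Complex.exp (-Complex.I * ((z.1 * ζ.1 + inner ℝ z.2 ζ.2 : ℝ) : ℂ)) * f z

/-- KP-II dispersion relation ω(ξ,η) = ξ³ − |η|²/ξ. -/
def omega (ζ : ℝ × E2) : ℝ := ζ.1 ^ 3 - ‖ζ.2‖ ^ 2 / ζ.1

/-- Free KP-II evolution u(t) = S(t)u₀ of Schwartz data, as inverse Fourier
integral of e^{itω(ξ,η)} û₀(ξ,η). -/
def kpEvol (u₀ : SchwartzMap (ℝ × E2) ℂ) (t : ℝ) (z : ℝ × E2) : ℂ :=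
  ∫ ζ : ℝ × E2,
    Complex.exp (Complex.I * ((t * omega ζ + z.1 * ζ.1 + inner ℝ z.2 ζ.2 : ℝ) : ℂ)) * ft (fun w => u₀ w) ζ

/-- `L^p` norm (in `ℝ≥0∞`) of an `ℝ≥0∞`-valued function, with the usual
modification for `p = ∞`. -/
def lpENN {ι : Type*} [MeasurableSpace ι] (μ : Measure ι) (p : ℝ≥0∞) (f : ι → ℝ≥0∞) : ℝ≥0∞ :=
  if p = ∞ then essSup f μ else (∫⁻ t, f t ^ p.toReal ∂μ) ^ (1 / p.toReal)

/-- Mixed norm ‖u‖_{L^p_t L^q_{x,y}}. -/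
def mixedNorm (p q : ℝ≥0∞) (u : ℝ → ℝ × E2 → ℂ) : ℝ≥0∞ :=
  lpENN volume p fun t => eLpNorm (u t) q volume


def ex (r : ℝ) : ℂ := Complex.exp (Complex.I * (r : ℂ))
def ph (z ζ : ℝ × E2) : ℝ := z.1 * ζ.1 + inner ℝ z.2 ζ.2
def FT (g : ℝ × E2 → ℂ) (z : ℝ × E2) : ℂ := ∫ ζ, ex (ph z ζ) * g ζ

lemma ex_add (a b : ℝ) : ex (a + b) = ex a * ex b := by
  simp [ex, ← Complex.exp_add, mul_add]

@[simp] lemma norm_ex (r : ℝ) : ‖ex r‖ = 1 := by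
  rw [ex, mul_comm]; exact Complex.norm_exp_ofReal_mul_I r

@[simp] lemma enorm_ex (r : ℝ) : ‖ex r‖ₑ = 1 := by
  rw [← ofReal_norm, norm_ex]; simp

lemma conj_ex (r : ℝ) : (starRingEnd ℂ) (ex r) = ex (-r) := by
  simp [ex, ← Complex.exp_conj]

lemma ex_zero : ex 0 = 1 := by simp [ex]

@[fun_prop] lemma continuous_ex : Continuous ex := by unfold ex; fun_prop
@[fun_prop] lemma measurable_ex : Measurable ex := continuous_ex.measurable

@[fun_prop] lemma Continuous.ph {X : Type*} [TopologicalSpace X] {f g : X → ℝ × E2}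
    (hf : Continuous f) (hg : Continuous g) : Continuous (fun x => _root_.ph (f x) (g x)) := by
  unfold _root_.ph; fun_prop

@[fun_prop] lemma Measurable.ph {X : Type*} [MeasurableSpace X] {f g : X → ℝ × E2}
    (hf : Measurable f) (hg : Measurable g) : Measurable (fun x => _root_.ph (f x) (g x)) := by
  have h : Continuous (fun p : (ℝ × E2) × (ℝ × E2) => _root_.ph p.1 p.2) := by fun_prop
  exact h.measurable.comp (hf.prodMk hg)

@[fun_prop] lemma measurable_omega : Measurable omega := by unfold omega; fun_prop

lemma ph_comm (z ζ : ℝ × E2) : ph z ζ = ph ζ z := by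
  unfold ph; rw [real_inner_comm, mul_comm]
lemma ph_sub_left (z w ζ : ℝ × E2) : ph (z - w) ζ = ph z ζ - ph w ζ := by
  unfold ph; simp [inner_sub_left]; ring
lemma ph_sub_right (z ζ w : ℝ × E2) : ph z (ζ - w) = ph z ζ - ph z w := by
  rw [ph_comm, ph_sub_left, ph_comm ζ, ph_comm w]
lemma ph_add_right (z ζ w : ℝ × E2) : ph z (ζ + w) = ph z ζ + ph z w := by
  unfold ph; simp [inner_add_right]; ring
lemma ph_neg_right (z ζ : ℝ × E2) : ph z (-ζ) = - ph z ζ := by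
  unfold ph; simp [inner_neg_right]; ring

lemma integrable_ex_mul {X : Type*} [MeasurableSpace X] {μ : Measure X} {g : X → ℂ} {r : X → ℝ}
    (hg : Integrable g μ) (hr : Measurable r) : Integrable (fun x => ex (r x) * g x) μ := by
  refine hg.bdd_mul (c := 1) (measurable_ex.comp hr).aestronglyMeasurable ?_
  simp

instance : (volume : Measure (ℝ × E2)).IsNegInvariant := by
  constructor
  exact (MeasureTheory.MeasurePreserving.prod (Measure.measurePreserving_neg (volume : Measure ℝ))
    (Measure.measurePreserving_neg (volume : Measure E2))).map_eq

instance : (volume : Measure (ℝ × E2)).IsAddLeftInvariant := by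
  rw [Measure.volume_eq_prod]; infer_instance

def gs (ε : ℝ) (z : ℝ × E2) : ℝ := Real.exp (-ε * (z.1 ^ 2 + ‖z.2‖ ^ 2))
def gh (ε : ℝ) (z : ℝ × E2) : ℝ :=
  (Real.sqrt (Real.pi / ε) * (Real.pi / ε)) * gs (1 / (4 * ε)) z

@[fun_prop] lemma continuous_gs (ε : ℝ) : Continuous (gs ε) := by unfold gs; fun_prop
@[fun_prop] lemma continuous_gh (ε : ℝ) : Continuous (gh ε) := by unfold gh; fun_prop
lemma gs_pos (ε : ℝ) (z) : 0 < gs ε z := Real.exp_pos _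
lemma gh_nonneg {ε : ℝ} (hε : 0 < ε) (z) : 0 ≤ gh ε z := by
  have := gs_pos (1 / (4 * ε)) z
  unfold gh; positivity

lemma gs_ft {ε : ℝ} (hε : 0 < ε) (ζ : ℝ × E2) :
    ∫ z, ex (ph z ζ) * (gs ε z : ℂ) = (gh ε ζ : ℂ) := by
  have h1 := GaussianFourier.integral_cexp_neg_mul_sq_norm_add (V := ℝ) (b := (ε : ℂ))
    (by simpa using hε) Complex.I ζ.1
  have h2 := GaussianFourier.integral_cexp_neg_mul_sq_norm_add (V := E2) (b := (ε : ℂ))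
    (by simpa using hε) Complex.I ζ.2
  have h3 := integral_prod_mul (μ := (volume : Measure ℝ)) (ν := (volume : Measure E2))
    (fun v : ℝ => Complex.exp (-(ε : ℂ) * ‖v‖ ^ 2 + Complex.I * (inner ℝ ζ.1 v : ℝ)))
    (fun v : E2 => Complex.exp (-(ε : ℂ) * ‖v‖ ^ 2 + Complex.I * (inner ℝ ζ.2 v : ℝ)))
  rw [h1, h2] at h3
  refine Eq.trans ?_ (h3.trans ?_)
  rotate_left
  · show _ = ((gh ε ζ : ℝ) : ℂ)
    have e1 : (((Module.finrank ℝ ℝ : ℕ) : ℂ) / 2) = ((1/2 : ℝ) : ℂ) := by simp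
    have e2 : (((Module.finrank ℝ E2 : ℕ) : ℂ) / 2) = 1 := by simp
    rw [e1, e2]
    rw [show (Real.pi : ℂ) / (ε : ℂ) = ((Real.pi / ε : ℝ) : ℂ) by push_cast; rfl]
    rw [← Complex.ofReal_cpow (by positivity), Complex.cpow_one, ← Real.sqrt_eq_rpow]
    rw [gh, gs]
    push_cast
    rw [mul_mul_mul_comm, ← Complex.exp_add]
    congr 2
    simp [Complex.I_sq]
    norm_cast
    simp
    field_simp
    ring
  · rw [← Measure.volume_eq_prod]
    refine integral_congr_ae (Eventually.of_forall fun z => ?_)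
    simp only [ex, gs, ph]
    push_cast
    rw [← Complex.exp_add, ← Complex.exp_add]
    congr 1
    norm_cast
    simp [real_inner_comm]
    push_cast
    ring

lemma integrable_gs {ε : ℝ} (hε : 0 < ε) : Integrable (gs ε) := by
  have h1 : Integrable (fun v : ℝ => Real.exp (-ε * v ^ 2)) := integrable_exp_neg_mul_sq hε
  have h2 : Integrable (fun v : E2 => Real.exp (-ε * ‖v‖ ^ 2)) := by
    have := (GaussianFourier.integrable_cexp_neg_mul_sq_norm_add (V := E2) (b := (ε : ℂ))
      (by simpa using hε) 0 0).norm
    refine this.congr (Eventually.of_forall fun v => ?_)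
    simp [Complex.norm_exp]
    left; norm_cast
  have := h1.mul_prod h2
  rw [← Measure.volume_eq_prod] at this
  refine this.congr (Eventually.of_forall fun v => ?_)
  simp [gs, ← Real.exp_add]; ring

lemma integral_gs {ε : ℝ} (hε : 0 < ε) : ∫ z, gs ε z = Real.sqrt (Real.pi / ε) * (Real.pi / ε) := by
  have := gs_ft hε 0
  simp [ph, ex_zero, gh, gs] at this
  norm_cast at this
  simpa [gs] using this

lemma integrable_gh {ε : ℝ} (hε : 0 < ε) : Integrable (gh ε) := by
  unfold gh
  exact (integrable_gs (by positivity)).const_mul _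

lemma integral_gh {ε : ℝ} (hε : 0 < ε) : ∫ z, gh ε z = 8 * Real.pi ^ 3 := by
  unfold gh
  rw [integral_const_mul, integral_gs (by positivity)]
  have : Real.sqrt (Real.pi / ε) * Real.sqrt (Real.pi / (1 / (4 * ε))) = 2 * Real.pi := by
    rw [← Real.sqrt_mul (by positivity)]
    rw [Real.sqrt_eq_iff_mul_self_eq (by positivity) (by positivity)]
    field_simp; ring
  calc _ = (Real.sqrt (Real.pi / ε) * Real.sqrt (Real.pi / (1 / (4 * ε)))) * ((Real.pi/ε) * (Real.pi / (1 / (4 * ε)))) := by ring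
    _ = _ := by rw [this]; field_simp; ring

lemma lintegral_gh {ε : ℝ} (hε : 0 < ε) :
    ∫⁻ z, ENNReal.ofReal (gh ε z) = ENNReal.ofReal (8 * Real.pi ^ 3) := by
  rw [← integral_gh hε, ofReal_integral_eq_lintegral_ofReal (integrable_gh hε)
    (Eventually.of_forall (gh_nonneg hε))]

/-- Schur test in AM-GM form. -/
lemma schur {G : Type*} [AddCommGroup G] [MeasurableSpace G] [MeasurableAdd₂ G] [MeasurableNeg G]
    [MeasurableSub₂ G]
    (μ : Measure G) [SFinite μ] [μ.IsAddLeftInvariant] [μ.IsNegInvariant]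
    {k a b : G → ℝ≥0∞} (hk : Measurable k) (ha : Measurable a) (hb : Measurable b) :
    2 * ∫⁻ x, ∫⁻ y, k (x - y) * (a x * b y) ∂μ ∂μ ≤
      (∫⁻ x, k x ∂μ) * (∫⁻ x, a x ^ 2 ∂μ + ∫⁻ x, b x ^ 2 ∂μ) := by
  have amgm : ∀ s t : ℝ≥0∞, 2 * (s * t) ≤ s ^ 2 + t ^ 2 := by
    intro s t
    rcases eq_or_ne s ∞ with rfl | hs
    · simp
    rcases eq_or_ne t ∞ with rfl | ht
    · simp
    lift s to NNReal using hs
    lift t to NNReal using ht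
    norm_cast
    rw [← NNReal.coe_le_coe]; push_cast
    nlinarith [sq_nonneg ((s : ℝ) - t)]
  calc 2 * ∫⁻ x, ∫⁻ y, k (x - y) * (a x * b y) ∂μ ∂μ
      = ∫⁻ x, ∫⁻ y, k (x - y) * (2 * (a x * b y)) ∂μ ∂μ := by
        rw [← lintegral_const_mul _ (by fun_prop)]
        congr 1; ext x
        rw [← lintegral_const_mul _ (by fun_prop)]
        congr 1; ext y; ring
    _ ≤ ∫⁻ x, ∫⁻ y, (k (x - y) * a x ^ 2 + k (x - y) * b y ^ 2) ∂μ ∂μ := by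
        gcongr with x y
        rw [← mul_add]; gcongr; exact amgm _ _
    _ = ∫⁻ x, ∫⁻ y, k (x - y) * a x ^ 2 ∂μ ∂μ + ∫⁻ x, ∫⁻ y, k (x - y) * b y ^ 2 ∂μ ∂μ := by
        rw [← lintegral_add_left (by fun_prop)]
        congr 1; ext x
        rw [← lintegral_add_left (by fun_prop)]
    _ = _ := by
        rw [mul_add]
        congr 1
        · rw [← lintegral_const_mul _ (by fun_prop)]
          congr 1; ext x
          rw [lintegral_mul_const _ (by fun_prop), lintegral_sub_left_eq_self (μ := μ) k x]
        · rw [lintegral_lintegral_swap (by fun_prop)]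
          rw [← lintegral_const_mul _ (by fun_prop)]
          congr 1; ext x
          rw [lintegral_mul_const _ (by fun_prop), lintegral_sub_right_eq_self (μ := μ) k x]

lemma continuous_FT {g : ℝ × E2 → ℂ} (hg : Integrable g) : Continuous (FT g) := by
  unfold FT
  refine continuous_of_dominated (bound := fun ζ => ‖g ζ‖) ?_ ?_ hg.norm ?_
  · intro z; exact (integrable_ex_mul hg (by fun_prop)).aestronglyMeasurable
  · intro z; exact Eventually.of_forall fun ζ => by simp
  · exact Eventually.of_forall fun ζ => by fun_prop

lemma norm_FT_le {g : ℝ × E2 → ℂ} (z) : ‖FT g z‖ ≤ ∫ ζ, ‖g ζ‖ := by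
  refine (norm_integral_le_integral_norm _).trans (le_of_eq ?_)
  simp


lemma kernel_id {m φ ψ : ℝ × E2 → ℂ} (hm : Integrable m) (hφ : Integrable φ) (hψ : Integrable ψ) :
    ∫ ζ, m ζ * (FT φ ζ * (starRingEnd ℂ) (FT ψ ζ)) =
      ∫ p : (ℝ × E2) × (ℝ × E2), (φ p.1 * (starRingEnd ℂ) (ψ p.2)) * FT m (p.1 - p.2) := by
  have hψ' : Integrable (fun z => (starRingEnd ℂ) (ψ z)) :=
    (LinearIsometryEquiv.integrable_comp_iff (Complex.conjLIE)).2 hψ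
  have hpr : Integrable (fun p : (ℝ × E2) × (ℝ × E2) => φ p.1 * (starRingEnd ℂ) (ψ p.2)) :=
    hφ.mul_prod hψ'
  have hI : Integrable (fun q : (ℝ × E2) × ((ℝ × E2) × (ℝ × E2)) =>
      ex (ph q.1 (q.2.1 - q.2.2)) * (m q.1 * (φ q.2.1 * (starRingEnd ℂ) (ψ q.2.2)))) :=
    integrable_ex_mul (hm.mul_prod hpr) (by fun_prop)
  have h1 : ∀ ζ, m ζ * (FT φ ζ * (starRingEnd ℂ) (FT ψ ζ)) =
      ∫ p : (ℝ × E2) × (ℝ × E2), ex (ph ζ (p.1 - p.2)) * (m ζ * (φ p.1 * (starRingEnd ℂ) (ψ p.2))) := by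
    intro ζ
    unfold FT
    rw [← integral_conj, Measure.volume_eq_prod (ℝ × E2) (ℝ × E2), ← integral_prod_mul, ← integral_const_mul]
    congr 1; ext p
    rw [ph_sub_right, sub_eq_add_neg, ex_add, map_mul, conj_ex]
    ring
  simp_rw [h1]
  rw [Measure.volume_eq_prod] at hI
  rw [integral_integral_swap (f := fun ζ (p : (ℝ × E2) × (ℝ × E2)) =>
    ex (ph ζ (p.1 - p.2)) * (m ζ * (φ p.1 * (starRingEnd ℂ) (ψ p.2)))) hI]
  congr 1; ext p
  unfold FT
  rw [← integral_const_mul]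
  congr 1; ext ζ
  rw [ph_comm ζ]; ring

lemma kernel_le {m φ ψ : ℝ × E2 → ℂ} (hm : Integrable m) (hφ : Integrable φ) (hψ : Integrable ψ)
    (hφm : Measurable φ) (hψm : Measurable ψ) :
    ‖∫ ζ, m ζ * (FT φ ζ * (starRingEnd ℂ) (FT ψ ζ))‖ₑ ≤
      ∫⁻ x, ∫⁻ y, ‖FT m (x - y)‖ₑ * (‖φ x‖ₑ * ‖ψ y‖ₑ) := by
  have hc := continuous_FT hm
  rw [kernel_id hm hφ hψ]
  refine (enorm_integral_le_lintegral_enorm _).trans ?_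
  rw [Measure.volume_eq_prod (ℝ × E2) (ℝ × E2), lintegral_prod]
  · refine le_of_eq ?_
    congr 1; ext x; congr 1; ext y
    simp only [enorm_mul, RCLike.enorm_conj]
    ring
  · have hc' := hc.measurable
    have hcj : Measurable (starRingEnd ℂ) := Complex.continuous_conj.measurable
    exact (Measurable.enorm (((hφm.comp measurable_fst).mul
      (hcj.comp (hψm.comp measurable_snd))).mul
      (hc'.comp (measurable_fst.sub measurable_snd)))).aemeasurable

lemma plancherel_eps {g : ℝ × E2 → ℂ} (hg : Integrable g) (hgm : Measurable g) {ε : ℝ} (hε : 0 < ε) :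
    ∫⁻ z, ENNReal.ofReal (gs ε z) * ‖FT g z‖ₑ ^ 2 ≤
      ENNReal.ofReal (8 * Real.pi ^ 3) * ∫⁻ z, ‖g z‖ₑ ^ 2 := by
  have hc := continuous_FT hg
  have hgsi : Integrable (fun z => (gs ε z : ℂ)) := (integrable_gs hε).ofReal
  have e1 : ∫⁻ z, ENNReal.ofReal (gs ε z) * ‖FT g z‖ₑ ^ 2 =
      ‖∫ ζ, (gs ε ζ : ℂ) * (FT g ζ * (starRingEnd ℂ) (FT g ζ))‖ₑ := by
    have : ∀ ζ, (gs ε ζ : ℂ) * (FT g ζ * (starRingEnd ℂ) (FT g ζ)) =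
       ((gs ε ζ * ‖FT g ζ‖ ^ 2 : ℝ) : ℂ) := by
      intro ζ; rw [Complex.mul_conj, Complex.normSq_eq_norm_sq]; push_cast; rfl
    simp_rw [this]
    rw [integral_complex_ofReal, ← ofReal_norm, Complex.norm_real, Real.norm_eq_abs, abs_of_nonneg,
      ofReal_integral_eq_lintegral_ofReal]
    · congr 1; ext z
      rw [ENNReal.ofReal_mul (gs_pos _ _).le, ENNReal.ofReal_pow (norm_nonneg _), ofReal_norm]
    · refine (integrable_gs hε).mul_bdd (c := (∫ ζ, ‖g ζ‖) ^ 2) (by fun_prop) ?_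
      refine Eventually.of_forall fun z => ?_
      rw [norm_pow, norm_norm]
      gcongr; exact norm_FT_le z
    · exact Eventually.of_forall fun z => by have := gs_pos ε z; positivity
    · exact integral_nonneg fun z => by have := gs_pos ε z; positivity
  rw [e1]
  refine (kernel_le hgsi hg hg hgm hgm).trans ?_
  have hgh : FT (fun z => (gs ε z : ℂ)) = fun z => (gh ε z : ℂ) := by
    ext ζ; rw [← gs_ft hε, FT]; simp_rw [ph_comm ζ]
  rw [hgh]
  have e2 : ∀ z, ‖(gh ε z : ℂ)‖ₑ = ENNReal.ofReal (gh ε z) := by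
    intro z; rw [← ofReal_norm, Complex.norm_real, Real.norm_of_nonneg (gh_nonneg hε z)]
  simp_rw [e2]
  have := schur (volume : Measure (ℝ × E2)) (k := fun z => ENNReal.ofReal (gh ε z))
    (a := fun z => ‖g z‖ₑ) (b := fun z => ‖g z‖ₑ) (by fun_prop) (by fun_prop) (by fun_prop)
  rw [lintegral_gh hε, ← two_mul, mul_left_comm] at this
  exact (ENNReal.mul_le_mul_iff_right two_ne_zero ENNReal.ofNat_ne_top).1 this

lemma plancherel {g : ℝ × E2 → ℂ} (hg : Integrable g) (hgm : Measurable g) :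
    ∫⁻ z, ‖FT g z‖ₑ ^ 2 ≤ ENNReal.ofReal (8 * Real.pi ^ 3) * ∫⁻ z, ‖g z‖ₑ ^ 2 := by
  have hc := continuous_FT hg
  have hcm := hc.measurable
  have hlim : ∀ z, Tendsto (fun n : ℕ => ENNReal.ofReal (gs (1 / ((n : ℝ) + 1)) z) * ‖FT g z‖ₑ ^ 2) atTop
      (nhds (‖FT g z‖ₑ ^ 2)) := by
    intro z
    have h0 : Tendsto (fun n : ℕ => gs (1 / ((n : ℝ) + 1)) z) atTop (nhds 1) := by
      have : Tendsto (fun n : ℕ => Real.exp (-(1 / ((n : ℝ) + 1)) * (z.1 ^ 2 + ‖z.2‖ ^ 2))) atTop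
        (nhds (Real.exp (-0 * (z.1 ^ 2 + ‖z.2‖ ^ 2)))) :=
        (Real.continuous_exp.tendsto _).comp
          ((tendsto_one_div_add_atTop_nhds_zero_nat.neg).mul_const _)
      simpa [gs] using this
    have h1 := ENNReal.Tendsto.mul_const (b := ‖FT g z‖ₑ ^ 2) (ENNReal.tendsto_ofReal h0) (by simp)
    simpa using h1
  calc ∫⁻ z, ‖FT g z‖ₑ ^ 2
      = ∫⁻ z, liminf (fun n : ℕ => ENNReal.ofReal (gs (1 / ((n : ℝ) + 1)) z) * ‖FT g z‖ₑ ^ 2) atTop := by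
        congr 1; ext z; rw [(hlim z).liminf_eq]
    _ ≤ liminf (fun n : ℕ => ∫⁻ z, ENNReal.ofReal (gs (1 / ((n : ℝ) + 1)) z) * ‖FT g z‖ₑ ^ 2) atTop := by
        refine lintegral_liminf_le fun n => ?_
        have := (continuous_gs (1 / ((n : ℝ) + 1))).measurable
        fun_prop
    _ ≤ _ := by
        refine liminf_le_of_le ?_ ?_
        · isBoundedDefault
        · intro b hb
          obtain ⟨n, hn⟩ := hb.exists
          exact hn.trans (plancherel_eps hg hgm (by positivity))


lemma vdc_pos {a τ : ℝ} (ha : 0 < a) (hτ : 0 < τ) (b : ℝ) {c : ℝ} (hc : 0 ≤ c) :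
    ‖∫ ξ in a..(4 * a), ex (τ * ξ ^ 3 + b * ξ) * ((ξ * Real.exp (-c * ξ) : ℝ) : ℂ)‖
      ≤ 22 * Real.sqrt (a / τ) := by
  set δ := Real.sqrt (τ * a) with hδ
  have hδ0 : 0 < δ := Real.sqrt_pos.2 (by positivity)
  have hδ2 : δ ^ 2 = τ * a := Real.sq_sqrt (by positivity)
  have hfin : Real.sqrt (a / τ) = a / δ := by
    rw [Real.sqrt_eq_iff_mul_self_eq (by positivity) (by positivity)]
    field_simp
    nlinarith
  set A : ℝ → ℝ := fun ξ => ξ * Real.exp (-c * ξ) with hA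
  set A' : ℝ → ℝ := fun ξ => Real.exp (-c * ξ) * (1 - c * ξ) with hA'
  set v : ℝ → ℝ := fun ξ => 3 * τ * ξ ^ 2 + b with hv
  set h : ℝ → ℝ := fun ξ => v ξ / (δ ^ 2 + v ξ ^ 2) with hh
  set h' : ℝ → ℝ := fun ξ => (6 * τ * ξ) * (δ ^ 2 - v ξ ^ 2) / (δ ^ 2 + v ξ ^ 2) ^ 2 with hh'
  set e : ℝ → ℂ := fun ξ => ex (τ * ξ ^ 3 + b * ξ) with he
  have hpos : ∀ ξ, 0 < δ ^ 2 + v ξ ^ 2 := fun ξ => by positivity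
  have dA : ∀ ξ, HasDerivAt A (A' ξ) ξ := by
    intro ξ
    have h1 : HasDerivAt (fun ξ => Real.exp (-c * ξ)) (Real.exp (-c * ξ) * (-c)) ξ := by
      simpa using ((hasDerivAt_id ξ).const_mul (-c)).exp
    have := (hasDerivAt_id ξ).mul h1
    refine HasDerivAt.congr_deriv (f := A) this ?_
    simp [hA']; ring
  have dv : ∀ ξ, HasDerivAt v (6 * τ * ξ) ξ := by
    intro ξ
    have := ((hasDerivAt_pow 2 ξ).const_mul (3 * τ)).add_const b
    refine HasDerivAt.congr_deriv (f := v) this ?_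
    norm_num; ring
  have dh : ∀ ξ, HasDerivAt h (h' ξ) ξ := by
    intro ξ
    have h1 := (dv ξ).div (((dv ξ).pow 2).const_add (δ ^ 2)) (hpos ξ).ne'
    refine HasDerivAt.congr_deriv (f := h) h1 ?_
    simp [hh']; ring
  have de : ∀ ξ, HasDerivAt e (Complex.I * (v ξ : ℂ) * e ξ) ξ := by
    intro ξ
    have h1 : HasDerivAt (fun ξ : ℝ => τ * ξ ^ 3 + b * ξ) (v ξ) ξ := by
      have := ((hasDerivAt_pow 3 ξ).const_mul τ).add ((hasDerivAt_id ξ).const_mul b)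
      refine HasDerivAt.congr_deriv (f := fun ξ : ℝ => τ * ξ ^ 3 + b * ξ) this ?_
      norm_num [hv]; ring
    have := (h1.ofReal_comp.const_mul Complex.I).cexp
    refine HasDerivAt.congr_deriv (f := e) this ?_
    simp only [he, ex]; ring
  have hne : ∀ ξ, ‖e ξ‖ = 1 := fun ξ => norm_ex _
  -- Q
  set Q : ℝ → ℂ := fun ξ => Complex.I * (((A ξ * h ξ : ℝ) : ℂ) * e ξ) with hQ
  set Q' : ℝ → ℂ := fun ξ => Complex.I * (((A' ξ * h ξ + A ξ * h' ξ : ℝ) : ℂ) * e ξ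
    + ((A ξ * h ξ : ℝ) : ℂ) * (Complex.I * (v ξ : ℂ) * e ξ)) with hQ'
  have dQ : ∀ ξ, HasDerivAt Q (Q' ξ) ξ := fun ξ =>
    (((((dA ξ).mul (dh ξ)).ofReal_comp).mul (de ξ)).const_mul Complex.I)
  have cv : Continuous v := by fun_prop
  have cA : Continuous A := by fun_prop
  have cA' : Continuous A' := by fun_prop
  have ch : Continuous h := cv.div (by fun_prop) fun ξ => (hpos ξ).ne'
  have ch' : Continuous h' := Continuous.div (by fun_prop) (by fun_prop)
    fun ξ => (pow_pos (hpos ξ) 2).ne'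
  have ce : Continuous e := by fun_prop
  have cQ' : Continuous Q' := by fun_prop
  have hE : ∀ ξ, e ξ * (A ξ : ℂ) + Q' ξ =
      (((A ξ * δ ^ 2 / (δ ^ 2 + v ξ ^ 2) : ℝ) : ℂ)
        + Complex.I * ((A' ξ * h ξ + A ξ * h' ξ : ℝ) : ℂ)) * e ξ := by
    intro ξ
    have h1 : A ξ - A ξ * h ξ * v ξ = A ξ * δ ^ 2 / (δ ^ 2 + v ξ ^ 2) := by
      have := (hpos ξ).ne'
      simp only [hh]; field_simp; ring
    rw [← h1]
    simp only [hQ']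
    push_cast
    linear_combination (A ξ * h ξ * v ξ * e ξ : ℂ) * Complex.I_sq
  set B : ℝ → ℝ := fun ξ => ξ / (2 * δ) + 5 * a / δ * Real.arctan (v ξ / δ) with hB
  set B' : ℝ → ℝ := fun ξ => 1 / (2 * δ) + 5 * a * (6 * τ * ξ) / (δ ^ 2 + v ξ ^ 2) with hB'
  have dB : ∀ ξ, HasDerivAt B (B' ξ) ξ := by
    intro ξ
    have h1 := ((hasDerivAt_id ξ).div_const (2 * δ)).add
      ((((dv ξ).div_const δ).arctan).const_mul (5 * a / δ))
    refine HasDerivAt.congr_deriv (f := B) h1 ?_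
    have := hpos ξ
    simp only [hB']
    congr 1
    field_simp
  have cB' : Continuous B' := by
    refine Continuous.add continuous_const (Continuous.div (by fun_prop) (by fun_prop)
      fun ξ => (hpos ξ).ne')
  have habs : ∀ ξ, |h ξ| ≤ 1 / (2 * δ) := by
    intro ξ
    simp only [hh]
    rw [abs_div, abs_of_pos (hpos ξ), div_le_div_iff₀ (hpos ξ) (by positivity)]
    nlinarith [sq_nonneg (δ - |v ξ|), sq_abs (v ξ)]
  have hA4 : ∀ ξ, a ≤ ξ → ξ ≤ 4 * a → 0 ≤ A ξ ∧ A ξ ≤ 4 * a := by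
    intro ξ h1 h2
    have h0 : 0 ≤ ξ := ha.le.trans h1
    have : Real.exp (-c * ξ) ≤ 1 := by
      rw [Real.exp_le_one_iff]; nlinarith [mul_nonneg hc h0]
    have h3 := Real.exp_pos (-c * ξ)
    refine ⟨by simp only [hA]; positivity, ?_⟩
    simp only [hA]
    nlinarith
  have hA1 : ∀ ξ, a ≤ ξ → |A' ξ| ≤ 1 := by
    intro ξ h1
    have h0 : 0 ≤ ξ := ha.le.trans h1
    have hcx : 0 ≤ c * ξ := mul_nonneg hc h0
    simp only [hA']
    rw [abs_mul, abs_of_pos (Real.exp_pos _)]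
    have h2 : |1 - c * ξ| ≤ Real.exp (c * ξ) := by
      have := Real.add_one_le_exp (c * ξ)
      rw [abs_le]; constructor <;> linarith
    calc Real.exp (-c * ξ) * |1 - c * ξ| ≤ Real.exp (-c * ξ) * Real.exp (c * ξ) := by gcongr
      _ = 1 := by rw [← Real.exp_add]; simp
  have hbound : ∀ ξ ∈ Set.Icc a (4 * a), ‖e ξ * (A ξ : ℂ) + Q' ξ‖ ≤ B' ξ := by
    rintro ξ ⟨h1, h2⟩
    have hξ : 0 < ξ := ha.trans_le h1
    obtain ⟨hA0, hA4'⟩ := hA4 ξ h1 h2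
    rw [hE, norm_mul, hne, mul_one]
    refine (norm_add_le _ _).trans ?_
    rw [norm_mul, Complex.norm_I, one_mul, Complex.norm_real, Complex.norm_real,
      Real.norm_eq_abs, Real.norm_eq_abs]
    have hP := hpos ξ
    have t1 : |A ξ * δ ^ 2 / (δ ^ 2 + v ξ ^ 2)| ≤ a * (6 * τ * ξ) / (δ ^ 2 + v ξ ^ 2) := by
      rw [abs_of_nonneg (by positivity)]
      gcongr ?_ / _
      rw [hδ2]
      calc A ξ * (τ * a) ≤ (4 * a) * (τ * a) := by gcongr
        _ ≤ a * (6 * τ * ξ) := by nlinarith [mul_le_mul_of_nonneg_left h1 (mul_pos ha hτ).le, mul_pos (mul_pos ha hτ) ha]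
    have t2 : |A ξ * h' ξ| ≤ 4 * a * (6 * τ * ξ) / (δ ^ 2 + v ξ ^ 2) := by
      rw [abs_mul, abs_of_nonneg hA0]
      have : |h' ξ| ≤ (6 * τ * ξ) / (δ ^ 2 + v ξ ^ 2) := by
        simp only [hh']
        rw [abs_div, abs_mul, abs_of_pos (show 0 < 6 * τ * ξ by positivity),
          abs_of_pos (pow_pos hP 2), div_le_div_iff₀ (pow_pos hP 2) hP, mul_assoc]
        gcongr
        rw [sq (δ ^ 2 + v ξ ^ 2)]
        gcongr
        rw [abs_le]; constructor <;> nlinarith [sq_nonneg δ, sq_nonneg (v ξ)]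
      calc A ξ * |h' ξ| ≤ 4 * a * ((6 * τ * ξ) / (δ ^ 2 + v ξ ^ 2)) := by gcongr
        _ = _ := by ring
    have t3 : |A' ξ * h ξ| ≤ 1 / (2 * δ) := by
      rw [abs_mul]
      calc |A' ξ| * |h ξ| ≤ 1 * (1 / (2 * δ)) := by gcongr; exacts [hA1 ξ h1, habs ξ]
        _ = _ := one_mul _
    have t4 := abs_add_le (A' ξ * h ξ) (A ξ * h' ξ)
    have t5 : B' ξ = 1 / (2 * δ) + a * (6 * τ * ξ) / (δ ^ 2 + v ξ ^ 2)
      + 4 * a * (6 * τ * ξ) / (δ ^ 2 + v ξ ^ 2) := by simp only [hB']; ring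
    linarith
  have hle : a ≤ 4 * a := by linarith
  have i1 : ∫ ξ in a..(4 * a), Q' ξ = Q (4 * a) - Q a :=
    intervalIntegral.integral_eq_sub_of_hasDerivAt (fun ξ _ => dQ ξ) (cQ'.intervalIntegrable _ _)
  have i2 : ∫ ξ in a..(4 * a), B' ξ = B (4 * a) - B a :=
    intervalIntegral.integral_eq_sub_of_hasDerivAt (fun ξ _ => dB ξ) (cB'.intervalIntegrable _ _)
  have i3 : ‖∫ ξ in a..(4 * a), (e ξ * (A ξ : ℂ) + Q' ξ)‖ ≤ ∫ ξ in a..(4 * a), B' ξ := by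
    refine intervalIntegral.norm_integral_le_of_norm_le hle ?_ (cB'.intervalIntegrable _ _)
    exact Eventually.of_forall fun ξ hξ => hbound ξ ⟨hξ.1.le, hξ.2⟩
  have i4 : ∫ ξ in a..(4 * a), (e ξ * (A ξ : ℂ) + Q' ξ) =
      (∫ ξ in a..(4 * a), e ξ * (A ξ : ℂ)) + (Q (4 * a) - Q a) := by
    rw [intervalIntegral.integral_add ((by fun_prop : Continuous fun ξ => e ξ * (A ξ : ℂ)).intervalIntegrable _ _)
      (cQ'.intervalIntegrable _ _), i1]
  have nQ : ∀ ξ, a ≤ ξ → ξ ≤ 4 * a → ‖Q ξ‖ ≤ 2 * (a / δ) := by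
    intro ξ h1 h2
    obtain ⟨hA0, hA4'⟩ := hA4 ξ h1 h2
    simp only [hQ]
    rw [norm_mul, norm_mul, Complex.norm_I, hne, Complex.norm_real, Real.norm_eq_abs, abs_mul,
      abs_of_nonneg hA0]
    calc 1 * (A ξ * |h ξ| * 1) ≤ 1 * ((4 * a) * (1 / (2 * δ)) * 1) := by gcongr; exact habs ξ
      _ = _ := by field_simp; norm_num
  have i5 : B (4 * a) - B a ≤ 17.5 * (a / δ) := by
    simp only [hB]
    have p1 := Real.arctan_lt_pi_div_two (v (4 * a) / δ)
    have p2 := Real.neg_pi_div_two_lt_arctan (v a / δ)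
    have p3 := Real.pi_lt_d2
    have : 4 * a / (2 * δ) + 5 * a / δ * Real.arctan (v (4 * a) / δ)
      - (a / (2 * δ) + 5 * a / δ * Real.arctan (v a / δ)) =
      (a / δ) * (3 / 2 + 5 * (Real.arctan (v (4 * a) / δ) - Real.arctan (v a / δ))) := by
      field_simp; ring
    rw [this, mul_comm]
    gcongr
    linarith
  rw [hfin]
  have fin : ∫ ξ in a..(4 * a), e ξ * (A ξ : ℂ) =
      (∫ ξ in a..(4 * a), (e ξ * (A ξ : ℂ) + Q' ξ)) - (Q (4 * a) - Q a) := by rw [i4]; ring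
  change ‖∫ ξ in a..(4 * a), e ξ * (A ξ : ℂ)‖ ≤ _
  rw [fin]
  have n1 := norm_sub_le (∫ ξ in a..(4 * a), (e ξ * (A ξ : ℂ) + Q' ξ)) (Q (4 * a) - Q a)
  have n2 := norm_sub_le (Q (4 * a)) (Q a)
  have n3 := nQ (4 * a) hle le_rfl
  have n4 := nQ a le_rfl hle
  have n5 : 0 ≤ a / δ := by positivity
  linarith

lemma vdc {a τ : ℝ} (ha : 0 < a) (hτ : τ ≠ 0) (b : ℝ) {c : ℝ} (hc : 0 ≤ c) :
    ‖∫ ξ in a..(4 * a), ex (τ * ξ ^ 3 + b * ξ) * ((ξ * Real.exp (-c * ξ) : ℝ) : ℂ)‖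
      ≤ 22 * Real.sqrt (a / |τ|) := by
  rcases lt_or_gt_of_ne hτ with h | h
  · rw [abs_of_neg h, ← Complex.norm_conj, intervalIntegral.integral_of_le (by linarith), ← integral_conj]
    have := vdc_pos ha (neg_pos.2 h) (-b) hc
    rw [intervalIntegral.integral_of_le (by linarith)] at this
    refine le_trans (le_of_eq ?_) this
    congr 2; ext ξ
    rw [map_mul, conj_ex, Complex.conj_ofReal]
    congr 2; ring
  · rw [abs_of_pos h]; exact vdc_pos ha h b hc


def bl (a : ℝ) : Set (ℝ × E2) := Prod.fst ⁻¹' (Set.Ico a (4 * a))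

lemma measurableSet_bl (a : ℝ) : MeasurableSet (bl a) := measurable_fst measurableSet_Ico

def mkr (a τ ε : ℝ) (ζ : ℝ × E2) : ℂ :=
  (bl a).indicator (fun ζ => ex (τ * omega ζ) * ((Real.exp (-ε * (‖ζ.2‖ ^ 2 / ζ.1)) : ℝ) : ℂ)) ζ

lemma measurable_mkr (a τ ε : ℝ) : Measurable (mkr a τ ε) := by
  unfold mkr
  refine Measurable.indicator ?_ (measurableSet_bl a)
  fun_prop

lemma integrable_mkr {a : ℝ} (ha : 0 < a) (τ : ℝ) {ε : ℝ} (hε : 0 < ε) : Integrable (mkr a τ ε) := by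
  have h1 : Integrable ((Set.Ico a (4 * a)).indicator (fun _ => (1 : ℝ))) := by
    rw [integrable_indicator_iff measurableSet_Ico]
    simp
  have h2 : Integrable (fun v : E2 => Real.exp (-(ε / (4 * a)) * ‖v‖ ^ 2)) := by
    have := (GaussianFourier.integrable_cexp_neg_mul_sq_norm_add (V := E2) (b := ((ε / (4 * a) : ℝ) : ℂ))
      (by rw [Complex.ofReal_re]; positivity) 0 0).norm
    refine this.congr (Eventually.of_forall fun v => ?_)
    simp only [Complex.norm_exp]
    congr 1
    norm_cast
    simp
  have h3 := h1.mul_prod h2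
  rw [← Measure.volume_eq_prod] at h3
  refine h3.mono' (measurable_mkr a τ ε).aestronglyMeasurable (Eventually.of_forall fun ζ => ?_)
  unfold mkr
  by_cases h : ζ ∈ bl a
  · have h' : ζ.1 ∈ Set.Ico a (4 * a) := h
    rw [Set.indicator_of_mem h, Set.indicator_of_mem h', norm_mul, norm_ex, Complex.norm_real,
      Real.norm_of_nonneg (Real.exp_pos _).le, one_mul, one_mul]
    refine Real.exp_le_exp.2 ?_
    have h0 : 0 < ζ.1 := ha.trans_le h'.1
    have : ‖ζ.2‖ ^ 2 / (4 * a) ≤ ‖ζ.2‖ ^ 2 / ζ.1 := by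
      gcongr; exact h'.2.le
    have := mul_le_mul_of_nonneg_left this hε.le
    calc -ε * (‖ζ.2‖ ^ 2 / ζ.1) ≤ -(ε * (‖ζ.2‖ ^ 2 / (4 * a))) := by linarith
      _ = _ := by ring
  · rw [Set.indicator_of_notMem h]
    simp only [norm_zero]
    refine mul_nonneg (Set.indicator_nonneg (fun _ _ => zero_le_one) _) (Real.exp_pos _).le

lemma FT_mkr {a : ℝ} (ha : 0 < a) {τ : ℝ} (hτ : τ ≠ 0) {ε : ℝ} (hε : 0 < ε) (z : ℝ × E2) :
    FT (mkr a τ ε) z = (Real.pi / ((ε : ℂ) + Complex.I * τ)) *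
      ∫ ξ in a..(4 * a), ex (τ * ξ ^ 3 + (z.1 + τ * ‖z.2‖ ^ 2 / (4 * (ε ^ 2 + τ ^ 2))) * ξ) *
        ((ξ * Real.exp (-(ε * ‖z.2‖ ^ 2 / (4 * (ε ^ 2 + τ ^ 2))) * ξ) : ℝ) : ℂ) := by
  have hI : Integrable (fun ζ => ex (ph z ζ) * mkr a τ ε ζ) :=
    integrable_ex_mul (integrable_mkr ha τ hε) (by fun_prop)
  unfold FT
  rw [Measure.volume_eq_prod] at hI ⊢
  rw [integral_prod _ hI, intervalIntegral.integral_of_le (by linarith), ← integral_Ico_eq_integral_Ioc,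
    ← integral_const_mul, ← integral_indicator measurableSet_Ico]
  congr 1; ext ξ
  by_cases h : ξ ∈ Set.Ico a (4 * a)
  · rw [Set.indicator_of_mem h]
    have hξ : 0 < ξ := ha.trans_le h.1
    have hne : (ε : ℂ) + Complex.I * τ ≠ 0 := by
      intro h0
      have := congrArg Complex.re h0
      simp at this
      exact hε.ne' this
    have hre : (((ε : ℂ) + Complex.I * τ) / (ξ : ℂ)).re = ε / ξ := by
      rw [Complex.div_ofReal_re]; simp
    have key := GaussianFourier.integral_cexp_neg_mul_sq_norm_add (V := E2)
      (b := ((ε : ℂ) + Complex.I * τ) / (ξ : ℂ)) (by rw [hre]; positivity) Complex.I z.2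
    have e2 : (((Module.finrank ℝ E2 : ℕ) : ℂ) / 2) = 1 := by simp
    rw [e2, Complex.cpow_one] at key
    have hξc : (ξ : ℂ) ≠ 0 := by exact_mod_cast hξ.ne'
    calc ∫ η : E2, ex (ph z (ξ, η)) * mkr a τ ε (ξ, η)
        = ∫ η : E2, ex (τ * ξ ^ 3 + z.1 * ξ) * Complex.exp (-(((ε : ℂ) + Complex.I * τ) / (ξ : ℂ)) * ‖η‖ ^ 2
            + Complex.I * (inner ℝ z.2 η : ℝ)) := by
          congr 1; ext η
          have hb : ((ξ, η) : ℝ × E2) ∈ bl a := h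
          rw [mkr, Set.indicator_of_mem hb]
          simp only [ex, ph, omega]
          push_cast
          rw [← Complex.exp_add, ← Complex.exp_add, ← Complex.exp_add]
          congr 1
          field_simp
          ring
      _ = _ := by
          rw [integral_const_mul, key]
          have hd : (ε : ℂ) ^ 2 + (τ : ℂ) ^ 2 = (ε + Complex.I * τ) * (ε - Complex.I * τ) := by
            linear_combination ((τ : ℂ) ^ 2) * Complex.I_sq
          have hne2 : (ε : ℂ) - Complex.I * τ ≠ 0 := by
            intro h0
            have := congrArg Complex.re h0
            simp at this
            exact hε.ne' this
          have hexp : ex (τ * ξ ^ 3 + z.1 * ξ) * Complex.exp (Complex.I ^ 2 * ‖z.2‖ ^ 2 / (4 * (((ε : ℂ) + Complex.I * τ) / (ξ : ℂ))))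
             = ex (τ * ξ ^ 3 + (z.1 + τ * ‖z.2‖ ^ 2 / (4 * (ε ^ 2 + τ ^ 2))) * ξ) *
              ((Real.exp (-(ε * ‖z.2‖ ^ 2 / (4 * (ε ^ 2 + τ ^ 2))) * ξ) : ℝ) : ℂ) := by
            simp only [ex]
            push_cast
            rw [← Complex.exp_add, ← Complex.exp_add]
            congr 1
            rw [hd, Complex.I_sq]
            field_simp
            ring
          rw [mul_left_comm, hexp]
          push_cast
          field_simp
  · rw [Set.indicator_of_notMem h]
    have : ∀ η : E2, mkr a τ ε (ξ, η) = 0 := fun η => by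
      rw [mkr, Set.indicator_of_notMem]; exact h
    simp [this]

lemma norm_FT_mkr {a : ℝ} (ha : 0 < a) {τ : ℝ} (hτ : τ ≠ 0) {ε : ℝ} (hε : 0 < ε) (z : ℝ × E2) :
    ‖FT (mkr a τ ε) z‖ ≤ 70 * (Real.sqrt (a / |τ|) / |τ|) := by
  rw [FT_mkr ha hτ hε, norm_mul]
  have h1 := vdc ha hτ (z.1 + τ * ‖z.2‖ ^ 2 / (4 * (ε ^ 2 + τ ^ 2)))
    (c := ε * ‖z.2‖ ^ 2 / (4 * (ε ^ 2 + τ ^ 2))) (by positivity)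
  have h2 : ‖(Real.pi : ℂ) / ((ε : ℂ) + Complex.I * τ)‖ ≤ Real.pi / |τ| := by
    rw [norm_div, Complex.norm_real, Real.norm_of_nonneg Real.pi_pos.le]
    gcongr
    have := Complex.abs_im_le_norm ((ε : ℂ) + Complex.I * τ)
    simpa using this
  have h3 : 0 < |τ| := abs_pos.2 hτ
  calc _ ≤ Real.pi / |τ| * (22 * Real.sqrt (a / |τ|)) := by gcongr
    _ = (22 * Real.pi) * (Real.sqrt (a / |τ|) / |τ|) := by ring
    _ ≤ _ := by
      gcongr
      have := Real.pi_lt_d2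
      linarith

lemma dispersive {a : ℝ} (ha : 0 < a) {τ : ℝ} (hτ : τ ≠ 0) {φ ψ : ℝ × E2 → ℂ}
    (hφ : Integrable φ) (hψ : Integrable ψ) (hφm : Measurable φ) (hψm : Measurable ψ)
    (hφ2 : ∫⁻ z, ‖φ z‖ₑ ^ 2 ≠ ∞) (hψ2 : ∫⁻ z, ‖ψ z‖ₑ ^ 2 ≠ ∞) :
    ‖∫ ζ in bl a, ex (τ * omega ζ) * (FT φ ζ * (starRingEnd ℂ) (FT ψ ζ))‖ₑ ≤
      ENNReal.ofReal (70 * (Real.sqrt (a / |τ|) / |τ|)) * ((∫⁻ z, ‖φ z‖ₑ) * ∫⁻ z, ‖ψ z‖ₑ) := by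
  have cφ := continuous_FT hφ
  have cψ := continuous_FT hψ
  have mm : ∀ {g : ℝ × E2 → ℂ}, Integrable g → Measurable g → ∫⁻ z, ‖g z‖ₑ ^ 2 ≠ ∞ → MemLp (FT g) 2 := by
    intro g h1 h2 h3
    refine ⟨(continuous_FT h1).aestronglyMeasurable, ?_⟩
    rw [eLpNorm_lt_top_iff_lintegral_rpow_enorm_lt_top (by simp) (by simp)]
    have := plancherel h1 h2
    simp only [ENNReal.toReal_ofNat, ENNReal.rpow_ofNat]
    exact this.trans_lt (ENNReal.mul_lt_top ENNReal.ofReal_lt_top h3.lt_top)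
  have hint : Integrable (fun ζ => FT φ ζ * (starRingEnd ℂ) (FT ψ ζ)) := by
    have h1 := mm hφ hφm hφ2
    have h2 := (mm hψ hψm hψ2).star
    exact MemLp.integrable_mul h1 h2
  have hlim : Tendsto (fun n : ℕ => ∫ ζ, mkr a τ (1 / ((n : ℝ) + 1)) ζ * (FT φ ζ * (starRingEnd ℂ) (FT ψ ζ)))
      atTop (nhds (∫ ζ, (bl a).indicator (fun ζ => ex (τ * omega ζ) * (FT φ ζ * (starRingEnd ℂ) (FT ψ ζ))) ζ)) := by
    refine tendsto_integral_of_dominated_convergence (fun ζ => ‖FT φ ζ * (starRingEnd ℂ) (FT ψ ζ)‖)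
      ?_ hint.norm ?_ ?_
    · intro n
      exact ((measurable_mkr _ _ _).aestronglyMeasurable).mul hint.aestronglyMeasurable
    · intro n
      refine Eventually.of_forall fun ζ => ?_
      rw [norm_mul]
      refine mul_le_of_le_one_left (norm_nonneg _) ?_
      unfold mkr
      by_cases h : ζ ∈ bl a
      · rw [Set.indicator_of_mem h, norm_mul, norm_ex, one_mul, Complex.norm_real,
          Real.norm_of_nonneg (Real.exp_pos _).le, Real.exp_le_one_iff]
        have : 0 < ζ.1 := ha.trans_le h.1
        have : 0 ≤ 1 / ((n : ℝ) + 1) * (‖ζ.2‖ ^ 2 / ζ.1) := by positivity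
        linarith
      · simp [Set.indicator_of_notMem h]
    · refine Eventually.of_forall fun ζ => ?_
      by_cases h : ζ ∈ bl a
      · simp only [mkr, Set.indicator_of_mem h]
        have h0 : Tendsto (fun n : ℕ => ((Real.exp (-(1 / ((n : ℝ) + 1)) * (‖ζ.2‖ ^ 2 / ζ.1)) : ℝ) : ℂ)) atTop
            (nhds ((Real.exp (-0 * (‖ζ.2‖ ^ 2 / ζ.1)) : ℝ) : ℂ)) :=
          (Complex.continuous_ofReal.tendsto _).comp ((Real.continuous_exp.tendsto _).comp
            ((tendsto_one_div_add_atTop_nhds_zero_nat.neg).mul_const _))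
        have := (h0.const_mul (ex (τ * omega ζ))).mul_const (FT φ ζ * (starRingEnd ℂ) (FT ψ ζ))
        simpa using this
      · simp [mkr, Set.indicator_of_notMem h]
  rw [integral_indicator (measurableSet_bl a)] at hlim
  refine le_of_tendsto hlim.enorm (Eventually.of_forall fun n => ?_)
  refine (kernel_le (integrable_mkr ha τ (by positivity)) hφ hψ hφm hψm).trans ?_
  have hb : ∀ z, ‖FT (mkr a τ (1 / ((n : ℝ) + 1))) z‖ₑ ≤ ENNReal.ofReal (70 * (Real.sqrt (a / |τ|) / |τ|)) := by
    intro z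
    rw [← ofReal_norm]
    exact ENNReal.ofReal_le_ofReal (norm_FT_mkr ha hτ (by positivity) z)
  calc _ ≤ ∫⁻ x, ∫⁻ y, ENNReal.ofReal (70 * (Real.sqrt (a / |τ|) / |τ|)) * (‖φ x‖ₑ * ‖ψ y‖ₑ) := by
        gcongr with x y; exact hb _
    _ = _ := by
        have : ∀ x, ∫⁻ y, ENNReal.ofReal (70 * (Real.sqrt (a / |τ|) / |τ|)) * (‖φ x‖ₑ * ‖ψ y‖ₑ)
          = (ENNReal.ofReal (70 * (Real.sqrt (a / |τ|) / |τ|)) * ∫⁻ y, ‖ψ y‖ₑ) * ‖φ x‖ₑ := by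
          intro x
          rw [lintegral_const_mul _ (by fun_prop), lintegral_const_mul _ (by fun_prop)]
          ring
        simp_rw [this]
        rw [lintegral_const_mul _ (by fun_prop)]
        ring


lemma amgm (s t : ℝ≥0∞) : 2 * (s * t) ≤ s ^ 2 + t ^ 2 := by
  rcases eq_or_ne s ∞ with rfl | hs
  · simp
  rcases eq_or_ne t ∞ with rfl | ht
  · simp
  lift s to NNReal using hs
  lift t to NNReal using ht
  norm_cast
  have := two_mul_le_add_sq s t
  rw [← mul_assoc]; exact this

lemma amgm_c (s t : ℝ≥0∞) {c : ℝ} (hc : 0 < c) :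
    2 * (s * t) ≤ ENNReal.ofReal c * s ^ 2 + ENNReal.ofReal c⁻¹ * t ^ 2 := by
  have h := amgm (ENNReal.ofReal (Real.sqrt c) * s) (ENNReal.ofReal (Real.sqrt c)⁻¹ * t)
  have e1 : ENNReal.ofReal (Real.sqrt c) * s * (ENNReal.ofReal (Real.sqrt c)⁻¹ * t) = s * t := by
    rw [mul_mul_mul_comm, ← ENNReal.ofReal_mul (by positivity), mul_inv_cancel₀ (by positivity)]
    simp
  rw [e1, mul_pow, mul_pow, ← ENNReal.ofReal_pow (by positivity), ← ENNReal.ofReal_pow (by positivity),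
    inv_pow, Real.sq_sqrt hc.le] at h
  exact h

lemma cs_le {α : Type*} [MeasurableSpace α] {μ : Measure α} {f g : α → ℝ≥0∞} (hf : AEMeasurable f μ)
    (hg : AEMeasurable g μ) {a b : ℝ≥0∞} (ha : ∫⁻ x, f x ^ 2 ∂μ ≤ a ^ 2) (hb : ∫⁻ x, g x ^ 2 ∂μ ≤ b ^ 2) :
    ∫⁻ x, f x * g x ∂μ ≤ a * b := by
  have h := ENNReal.lintegral_mul_le_Lp_mul_Lq μ Real.HolderConjugate.two_two hf hg
  simp only [Pi.mul_apply, ENNReal.rpow_ofNat] at h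
  refine h.trans ?_
  have sq : ∀ {x y : ℝ≥0∞}, x ≤ y ^ 2 → x ^ (1 / 2 : ℝ) ≤ y := by
    intro x y hxy
    calc x ^ (1 / 2 : ℝ) ≤ (y ^ 2) ^ (1 / 2 : ℝ) := by gcongr
      _ = y := by rw [← ENNReal.rpow_natCast, ← ENNReal.rpow_mul]; norm_num
  exact mul_le_mul' (sq ha) (sq hb)

lemma lint_even (f : ℝ → ℝ≥0∞) (hf : Measurable f) : ∫⁻ x : ℝ, f |x| = 2 * ∫⁻ x in Set.Ioi (0 : ℝ), f x := by
  rw [← lintegral_add_compl (fun x => f |x|) (measurableSet_Ioi : MeasurableSet (Set.Ioi (0 : ℝ))), two_mul]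
  congr 1
  · refine setLIntegral_congr_fun measurableSet_Ioi fun x hx => ?_
    rw [abs_of_pos hx]
  · rw [Set.compl_Ioi, setLIntegral_congr (Iio_ae_eq_Iic).symm]
    have h := (Measure.measurePreserving_neg (volume : Measure ℝ)).setLIntegral_comp_preimage
      (measurableSet_Ioi : MeasurableSet (Set.Ioi (0 : ℝ))) hf
    rw [← h]
    have e : (Neg.neg ⁻¹' Set.Ioi (0 : ℝ)) = Set.Iio 0 := by ext x; simp
    rw [e]
    refine setLIntegral_congr_fun measurableSet_Iio fun x hx => ?_
    rw [abs_of_neg hx]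

def kfar (lam T : ℝ) (τ : ℝ) : ℝ≥0∞ := (Set.Ioi T).indicator (fun x => ENNReal.ofReal ((lam / x) ^ (3 / 2 : ℝ))) |τ|
def knear (lam T : ℝ) (τ : ℝ) : ℝ≥0∞ := (Set.Ioc 0 T).indicator (fun x => ENNReal.ofReal ((lam / x) ^ (1 / 2 : ℝ))) |τ|

lemma measurable_kfar (lam T : ℝ) : Measurable (kfar lam T) := by
  unfold kfar
  refine Measurable.comp (g := (Set.Ioi T).indicator (fun x => ENNReal.ofReal ((lam / x) ^ (3 / 2 : ℝ)))) ?_ (by fun_prop)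
  exact Measurable.indicator (by fun_prop) measurableSet_Ioi

lemma measurable_knear (lam T : ℝ) : Measurable (knear lam T) := by
  unfold knear
  refine Measurable.comp (g := (Set.Ioc 0 T).indicator (fun x => ENNReal.ofReal ((lam / x) ^ (1 / 2 : ℝ)))) ?_ (by fun_prop)
  exact Measurable.indicator (by fun_prop) measurableSet_Ioc

lemma lint_kfar {lam r : ℝ} (hl : 0 < lam) (hr : 0 < r) :
    ∫⁻ τ, kfar lam (lam * r ^ 4) τ = ENNReal.ofReal (4 * lam / r ^ 2) := by
  unfold kfar
  have hT : 0 < lam * r ^ 4 := by positivity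
  rw [lint_even _ (Measurable.indicator (by fun_prop) measurableSet_Ioi),
    setLIntegral_indicator measurableSet_Ioi]
  have e : Set.Ioi (lam * r ^ 4) ∩ Set.Ioi 0 = Set.Ioi (lam * r ^ 4) := by
    rw [Set.Ioi_inter_Ioi, sup_of_le_left hT.le]
  have e2 : ∀ x ∈ Set.Ioi (lam * r ^ 4), (lam / x) ^ (3 / 2 : ℝ) = lam ^ (3 / 2 : ℝ) * x ^ (-(3 / 2) : ℝ) := by
    intro x hx
    have hx : 0 < x := hT.trans hx
    rw [Real.div_rpow hl.le hx.le, Real.rpow_neg hx.le, div_eq_mul_inv]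
  rw [e, setLIntegral_congr_fun measurableSet_Ioi (g := fun x => ENNReal.ofReal (lam ^ (3 / 2 : ℝ) * x ^ (-(3 / 2) : ℝ)))
    (fun x hx => by simp only [e2 x hx]), ← ofReal_integral_eq_lintegral_ofReal, integral_const_mul,
    integral_Ioi_rpow_of_lt (by norm_num) hT]
  · rw [show (2 : ℝ≥0∞) = ENNReal.ofReal 2 by simp, ← ENNReal.ofReal_mul (by norm_num)]
    congr 1
    have h1 : (lam * r ^ 4) ^ (-(3 / 2) + 1 : ℝ) = lam ^ (-(1 / 2) : ℝ) * (r ^ 2)⁻¹ := by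
      rw [Real.mul_rpow hl.le (by positivity), ← Real.rpow_natCast, ← Real.rpow_mul hr.le,
        ← Real.rpow_natCast, ← Real.rpow_neg hr.le]
      norm_num
    rw [h1]
    have h2 : lam ^ (3 / 2 : ℝ) * lam ^ (-(1 / 2) : ℝ) = lam := by
      rw [← Real.rpow_add hl]; norm_num
    have : 4 * lam / r ^ 2 = 4 * (lam ^ (3 / 2 : ℝ) * lam ^ (-(1 / 2) : ℝ)) / r ^ 2 := by rw [h2]
    rw [this]; ring
  · exact (integrableOn_Ioi_rpow_of_lt (by norm_num) hT).const_mul _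
  · refine (ae_restrict_iff' measurableSet_Ioi).2 (Eventually.of_forall fun x hx => ?_)
    have hx : 0 < x := hT.trans hx
    simp only [Pi.zero_apply]
    positivity

lemma lint_knear {lam r : ℝ} (hl : 0 < lam) (hr : 0 < r) :
    ∫⁻ τ, knear lam (2 * (lam * r ^ 4)) τ ≤ ENNReal.ofReal (6 * lam * r ^ 2) := by
  unfold knear
  have hT : 0 < 2 * (lam * r ^ 4) := by positivity
  rw [lint_even _ (Measurable.indicator (by fun_prop) measurableSet_Ioc),
    setLIntegral_indicator measurableSet_Ioc]
  have e : Set.Ioc 0 (2 * (lam * r ^ 4)) ∩ Set.Ioi 0 = Set.Ioc 0 (2 * (lam * r ^ 4)) := by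
    ext x; simp
  have e2 : ∀ x ∈ Set.Ioc 0 (2 * (lam * r ^ 4)), (lam / x) ^ (1 / 2 : ℝ) = lam ^ (1 / 2 : ℝ) * x ^ (-(1 / 2) : ℝ) := by
    intro x hx
    have hx : 0 < x := hx.1
    rw [Real.div_rpow hl.le hx.le, Real.rpow_neg hx.le, div_eq_mul_inv]
  rw [e, setLIntegral_congr_fun measurableSet_Ioc (g := fun x => ENNReal.ofReal (lam ^ (1 / 2 : ℝ) * x ^ (-(1 / 2) : ℝ)))
    (fun x hx => by simp only [e2 x hx]), ← ofReal_integral_eq_lintegral_ofReal, integral_const_mul,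
    ← intervalIntegral.integral_of_le hT.le, integral_rpow (by left; norm_num)]
  · rw [show (2 : ℝ≥0∞) = ENNReal.ofReal 2 by simp, ← ENNReal.ofReal_mul (by norm_num)]
    refine ENNReal.ofReal_le_ofReal ?_
    have h1 : (2 * (lam * r ^ 4)) ^ (-(1 / 2) + 1 : ℝ) = 2 ^ (1 / 2 : ℝ) * (lam ^ (1 / 2 : ℝ) * r ^ 2) := by
      rw [Real.mul_rpow (by norm_num) (by positivity), Real.mul_rpow hl.le (by positivity), ← Real.rpow_natCast, ← Real.rpow_mul hr.le,
        ← Real.rpow_natCast]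
      norm_num
    rw [h1, Real.zero_rpow (by norm_num)]
    have h2 : lam ^ (1 / 2 : ℝ) * lam ^ (1 / 2 : ℝ) = lam := by
      rw [← Real.rpow_add hl]; norm_num
    have h3 : (2 : ℝ) ^ (1 / 2 : ℝ) ≤ 3 / 2 := by
      rw [← Real.sqrt_eq_rpow]
      exact Real.sqrt_le_iff.2 ⟨by norm_num, by norm_num⟩
    calc _ = 4 * 2 ^ (1 / 2 : ℝ) * (lam ^ (1 / 2 : ℝ) * lam ^ (1 / 2 : ℝ)) * r ^ 2 := by ring
      _ = 4 * 2 ^ (1 / 2 : ℝ) * lam * r ^ 2 := by rw [h2]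
      _ ≤ 4 * (3 / 2) * lam * r ^ 2 := by gcongr
      _ = _ := by ring
  · have := (intervalIntegral.intervalIntegrable_rpow' (a := 0) (b := 2 * (lam * r ^ 4)) (r := -(1 / 2)) (by norm_num)).1
    exact this.const_mul _
  · refine (ae_restrict_iff' measurableSet_Ioc).2 (Eventually.of_forall fun x hx => ?_)
    have hx : 0 < x := hx.1
    simp only [Pi.zero_apply]
    positivity


section bilin
variable {Z : Type*} [MeasurableSpace Z] {μ : Measure Z} [SFinite μ]

lemma triple_integrable {w1 w2 : ℝ → Z → ℂ} (hm1 : Measurable (Function.uncurry w1))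
    (hm2 : Measurable (Function.uncurry w2)) {N1 N2 : ℝ → ℝ≥0∞} (hN1 : Measurable N1) (hN2 : Measurable N2)
    (i1 : ∫⁻ t, N1 t ≠ ∞) (i2 : ∫⁻ t, N2 t ≠ ∞)
    (h1 : ∀ t, ∫⁻ ζ, ‖w1 t ζ‖ₑ ^ 2 ∂μ ≤ N1 t ^ 2) (h2 : ∀ t, ∫⁻ ζ, ‖w2 t ζ‖ₑ ^ 2 ∂μ ≤ N2 t ^ 2) :
    Integrable (fun p : (ℝ × ℝ) × Z => w1 p.1.1 p.2 * (starRingEnd ℂ) (w2 p.1.2 p.2))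
      (((volume : Measure ℝ).prod (volume : Measure ℝ)).prod μ) := by
  have m1 : Measurable (fun p : (ℝ × ℝ) × Z => w1 p.1.1 p.2) :=
    hm1.comp (by fun_prop : Measurable (fun p : (ℝ × ℝ) × Z => (p.1.1, p.2)))
  have m2 : Measurable (fun p : (ℝ × ℝ) × Z => w2 p.1.2 p.2) :=
    hm2.comp (by fun_prop : Measurable (fun p : (ℝ × ℝ) × Z => (p.1.2, p.2)))
  have m3 : Measurable (fun p : (ℝ × ℝ) × Z => w1 p.1.1 p.2 * (starRingEnd ℂ) (w2 p.1.2 p.2)) :=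
    m1.mul (Complex.continuous_conj.measurable.comp m2)
  refine ⟨m3.aestronglyMeasurable, ?_⟩
  rw [hasFiniteIntegral_iff_enorm, lintegral_prod _ m3.enorm.aemeasurable]
  have hb : ∀ p : ℝ × ℝ, ∫⁻ ζ, ‖w1 p.1 ζ * (starRingEnd ℂ) (w2 p.2 ζ)‖ₑ ∂μ ≤ N1 p.1 * N2 p.2 := by
    intro p
    simp only [enorm_mul, RCLike.enorm_conj]
    have a1 : Measurable (w1 p.1) := hm1.comp (by fun_prop : Measurable (fun ζ : Z => (p.1, ζ)))
    have a2 : Measurable (w2 p.2) := hm2.comp (by fun_prop : Measurable (fun ζ : Z => (p.2, ζ)))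
    exact cs_le (by fun_prop) (by fun_prop) (h1 _) (h2 _)
  refine (lintegral_mono hb).trans_lt ?_
  rw [lintegral_prod_mul hN1.aemeasurable hN2.aemeasurable]
  exact ENNReal.mul_lt_top i1.lt_top i2.lt_top

lemma pair_id {w1 w2 : ℝ → Z → ℂ} (hm1 : Measurable (Function.uncurry w1))
    (hm2 : Measurable (Function.uncurry w2)) {N1 N2 : ℝ → ℝ≥0∞} (hN1 : Measurable N1) (hN2 : Measurable N2)
    (i1 : ∫⁻ t, N1 t ≠ ∞) (i2 : ∫⁻ t, N2 t ≠ ∞)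
    (h1 : ∀ t, ∫⁻ ζ, ‖w1 t ζ‖ₑ ^ 2 ∂μ ≤ N1 t ^ 2) (h2 : ∀ t, ∫⁻ ζ, ‖w2 t ζ‖ₑ ^ 2 ∂μ ≤ N2 t ^ 2) :
    Integrable (fun ζ => (∫ t, w1 t ζ) * (starRingEnd ℂ) (∫ t, w2 t ζ)) μ ∧
    Integrable (fun p : ℝ × ℝ => ∫ ζ, w1 p.1 ζ * (starRingEnd ℂ) (w2 p.2 ζ) ∂μ)
      ((volume : Measure ℝ).prod (volume : Measure ℝ)) ∧
    ∫ ζ, (∫ t, w1 t ζ) * (starRingEnd ℂ) (∫ t, w2 t ζ) ∂μ =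
      ∫ p : ℝ × ℝ, ∫ ζ, w1 p.1 ζ * (starRingEnd ℂ) (w2 p.2 ζ) ∂μ ∂((volume : Measure ℝ).prod (volume : Measure ℝ)) := by
  have hI := triple_integrable hm1 hm2 hN1 hN2 i1 i2 h1 h2
  have e : ∀ ζ, (∫ t, w1 t ζ) * (starRingEnd ℂ) (∫ t, w2 t ζ) =
      ∫ p : ℝ × ℝ, w1 p.1 ζ * (starRingEnd ℂ) (w2 p.2 ζ) ∂((volume : Measure ℝ).prod (volume : Measure ℝ)) := by
    intro ζ
    rw [← integral_conj, integral_prod_mul (fun t => w1 t ζ) (fun s => (starRingEnd ℂ) (w2 s ζ))]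
  simp_rw [e]
  exact ⟨hI.integral_prod_right, hI.integral_prod_left, (integral_integral_swap hI).symm⟩

lemma single_id {w : ℝ → Z → ℂ} (hm : Measurable (Function.uncurry w)) {g : Z → ℂ} (hg : Measurable g)
    {N : ℝ → ℝ≥0∞} (hN : Measurable N) (i1 : ∫⁻ t, N t ≠ ∞)
    (h1 : ∀ t, ∫⁻ ζ, ‖w t ζ‖ₑ ^ 2 ∂μ ≤ N t ^ 2) {M : ℝ≥0∞} (hM : M ≠ ∞) (h2 : ∫⁻ ζ, ‖g ζ‖ₑ ^ 2 ∂μ ≤ M ^ 2) :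
    ‖∫ t, ∫ ζ, w t ζ * (starRingEnd ℂ) (g ζ) ∂μ‖ₑ ≤ (∫⁻ ζ, ‖∫ t, w t ζ‖ₑ ^ 2 ∂μ) ^ (1 / 2 : ℝ) * M := by
  have hI : Integrable (fun p : ℝ × Z => w p.1 p.2 * (starRingEnd ℂ) (g p.2)) ((volume : Measure ℝ).prod μ) := by
    have m3 : Measurable (fun p : ℝ × Z => w p.1 p.2 * (starRingEnd ℂ) (g p.2)) :=
      hm.mul (Complex.continuous_conj.measurable.comp (hg.comp measurable_snd))
    refine ⟨m3.aestronglyMeasurable, ?_⟩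
    rw [hasFiniteIntegral_iff_enorm, lintegral_prod _ m3.enorm.aemeasurable]
    have hb : ∀ t : ℝ, ∫⁻ ζ, ‖w t ζ * (starRingEnd ℂ) (g ζ)‖ₑ ∂μ ≤ N t * M := by
      intro t
      simp only [enorm_mul, RCLike.enorm_conj]
      have a1 : Measurable (w t) := hm.comp (by fun_prop : Measurable (fun ζ : Z => (t, ζ)))
      exact cs_le (by fun_prop) (by fun_prop) (h1 _) h2
    refine (lintegral_mono hb).trans_lt ?_
    rw [lintegral_mul_const _ hN]
    exact ENNReal.mul_lt_top i1.lt_top hM.lt_top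
  rw [integral_integral_swap hI]
  simp_rw [integral_mul_const]
  refine (enorm_integral_le_lintegral_enorm _).trans ?_
  simp only [enorm_mul, RCLike.enorm_conj]
  have hmW : StronglyMeasurable (fun ζ => ∫ t, w t ζ) := by
    have : Measurable (fun p : Z × ℝ => w p.2 p.1) := hm.comp measurable_swap
    exact this.stronglyMeasurable.integral_prod_right'
  refine cs_le hmW.measurable.enorm.aemeasurable (by fun_prop) ?_ h2
  rw [← ENNReal.rpow_natCast, ← ENNReal.rpow_mul]; norm_num

lemma far_le {b : ℝ × ℝ → ℂ} {n1 n2 : ℝ → ℝ≥0∞} (hn1 : Measurable n1) (hn2 : Measurable n2)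
    {lam r d : ℝ} (hl : 0 < lam) (hr : 0 < r) (hd : 0 < d)
    (h : ∀ t s, t ≠ s → ‖b (t, s)‖ₑ ≤ ENNReal.ofReal ((lam / |t - s|) ^ (3 / 2 : ℝ) * d) * (n1 t * n2 s)) :
    2 * ∫⁻ p in {p : ℝ × ℝ | |p.1 - p.2| ≤ lam * r ^ 4}ᶜ, ‖b p‖ₑ ∂((volume : Measure ℝ).prod (volume : Measure ℝ)) ≤
      ENNReal.ofReal (4 * lam / r ^ 2 * d) * ((∫⁻ t, n1 t ^ 2) + ∫⁻ t, n2 t ^ 2) := by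
  have hD : MeasurableSet {p : ℝ × ℝ | |p.1 - p.2| ≤ lam * r ^ 4} := by measurability
  rw [← lintegral_indicator hD.compl]
  have hb : ∀ p : ℝ × ℝ, ({p : ℝ × ℝ | |p.1 - p.2| ≤ lam * r ^ 4}ᶜ).indicator (fun p => ‖b p‖ₑ) p ≤
      ENNReal.ofReal d * (kfar lam (lam * r ^ 4) (p.1 - p.2) * (n1 p.1 * n2 p.2)) := by
    rintro ⟨t, s⟩
    by_cases hp : (t, s) ∈ {p : ℝ × ℝ | |p.1 - p.2| ≤ lam * r ^ 4}ᶜ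
    · rw [Set.indicator_of_mem hp]
      have hp' : lam * r ^ 4 < |t - s| := by simpa using hp
      have hp'' : |t - s| ∈ Set.Ioi (lam * r ^ 4) := hp'
      rw [kfar, Set.indicator_of_mem hp'']
      have hts : t ≠ s := by
        rintro rfl
        have : 0 < lam * r ^ 4 := by positivity
        simp at hp'; linarith
      refine (h t s hts).trans (le_of_eq ?_)
      rw [ENNReal.ofReal_mul (by positivity)]
      ring
    · rw [Set.indicator_of_notMem hp]; exact zero_le
  calc _ ≤ 2 * ∫⁻ p : ℝ × ℝ, ENNReal.ofReal d * (kfar lam (lam * r ^ 4) (p.1 - p.2) * (n1 p.1 * n2 p.2))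
        ∂((volume : Measure ℝ).prod (volume : Measure ℝ)) := by gcongr with p; exact hb p
    _ = ENNReal.ofReal d * (2 * ∫⁻ t, ∫⁻ s, kfar lam (lam * r ^ 4) (t - s) * (n1 t * n2 s)) := by
      have mk := measurable_kfar lam (lam * r ^ 4)
      rw [lintegral_const_mul _ (by fun_prop), lintegral_prod _ (by fun_prop)]
      ring
    _ ≤ _ := by
      have := schur volume (measurable_kfar lam (lam * r ^ 4)) hn1 hn2
      rw [lint_kfar hl hr] at this
      calc _ ≤ ENNReal.ofReal d * _ := mul_le_mul_right this _
        _ = _ := by rw [← mul_assoc, ← ENNReal.ofReal_mul hd.le]; congr 2; ring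

lemma near_sq {w : ℝ → Z → ℂ} (hm : Measurable (Function.uncurry w)) {n : ℝ → ℝ≥0∞} (hn : Measurable n)
    (i1 : ∫⁻ t, n t ≠ ∞) {x lam r : ℝ} (hx : 0 < x) (hl : 0 < lam) (hr : 0 < r)
    (h1 : ∀ t, ∫⁻ ζ, ‖w t ζ‖ₑ ^ 2 ∂μ ≤ (ENNReal.ofReal (x ^ 2) * n t) ^ 2)
    (h : ∀ t s, t ≠ s → ‖∫ ζ, w t ζ * (starRingEnd ℂ) (w s ζ) ∂μ‖ₑ ≤
      ENNReal.ofReal ((lam / |t - s|) ^ (3 / 2 : ℝ) * (x⁻¹ * x⁻¹)) * (n t * n s)) :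
    ∫⁻ s, ∫⁻ ζ, ‖∫ t, (Set.Icc (s - lam * r ^ 4) (s + lam * r ^ 4)).indicator (fun t => w t ζ) t‖ₑ ^ 2 ∂μ ≤
      ENNReal.ofReal (12 * lam ^ 2 * r ^ 6 * x ^ 2) * ∫⁻ t, n t ^ 2 := by
  set T := lam * r ^ 4 with hT
  have hTp : 0 < T := by positivity
  have hk : ∀ t s, t ≠ s → ‖∫ ζ, w t ζ * (starRingEnd ℂ) (w s ζ) ∂μ‖ₑ ≤
      ENNReal.ofReal (x ^ 2 * (lam / |t - s|) ^ (1 / 2 : ℝ)) * (n t * n s) := by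
    intro t s hts
    have hpos : 0 < lam / |t - s| := div_pos hl (abs_pos.2 (sub_ne_zero.2 hts))
    set κ := (lam / |t - s|) ^ (1 / 2 : ℝ) with hκ
    have hκp : 0 < κ := by positivity
    have hκ3 : (lam / |t - s|) ^ (3 / 2 : ℝ) = κ ^ 3 := by
      rw [hκ, ← Real.rpow_natCast, ← Real.rpow_mul hpos.le]; norm_num
    rcases le_total κ (x ^ 2) with hle | hle
    · refine (h t s hts).trans ?_
      rw [hκ3]
      refine mul_le_mul_left (ENNReal.ofReal_le_ofReal ?_) _
      calc κ ^ 3 * (x⁻¹ * x⁻¹) = κ * κ ^ 2 * (x⁻¹ * x⁻¹) := by ring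
        _ ≤ κ * (x ^ 2) ^ 2 * (x⁻¹ * x⁻¹) := by gcongr
        _ = x ^ 2 * κ := by field_simp
    · have a1 : ∀ t, Measurable (w t) := fun t => hm.comp (by fun_prop : Measurable (fun ζ : Z => (t, ζ)))
      have c := cs_le (μ := μ) (f := fun ζ => ‖w t ζ‖ₑ) (g := fun ζ => ‖w s ζ‖ₑ)
        (a1 t).enorm.aemeasurable (a1 s).enorm.aemeasurable (h1 t) (h1 s)
      calc _ ≤ ∫⁻ ζ, ‖w t ζ * (starRingEnd ℂ) (w s ζ)‖ₑ ∂μ := enorm_integral_le_lintegral_enorm _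
        _ ≤ ENNReal.ofReal (x ^ 2) * n t * (ENNReal.ofReal (x ^ 2) * n s) := by
          simpa only [enorm_mul, RCLike.enorm_conj] using c
        _ = ENNReal.ofReal (x ^ 2 * x ^ 2) * (n t * n s) := by rw [ENNReal.ofReal_mul (by positivity)]; ring
        _ ≤ _ := by gcongr
  -- pointwise in s
  have hG : ∀ s, ∫⁻ ζ, ‖∫ t, (Set.Icc (s - T) (s + T)).indicator (fun t => w t ζ) t‖ₑ ^ 2 ∂μ ≤
      ∫⁻ t, (Set.Icc (s - T) (s + T)).indicator (fun t => ∫⁻ t', ENNReal.ofReal (x ^ 2) * (knear lam (2 * T) (t - t') * (n t * n t'))) t := by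
    intro s
    set J := Set.Icc (s - T) (s + T) with hJ
    set w' : ℝ → Z → ℂ := fun t ζ => J.indicator (fun t => w t ζ) t with hw'
    have hmw : Measurable (Function.uncurry w') := by
      have : Function.uncurry w' = (Prod.fst ⁻¹' J).indicator (Function.uncurry w) := by
        ext ⟨t, ζ⟩
        by_cases ht : t ∈ J
        · have : (t, ζ) ∈ (Prod.fst ⁻¹' J : Set (ℝ × Z)) := ht
          simp [hw', Set.indicator_of_mem ht, Set.indicator_of_mem this]
        · have : (t, ζ) ∉ (Prod.fst ⁻¹' J : Set (ℝ × Z)) := ht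
          simp [hw', Set.indicator_of_notMem ht, Set.indicator_of_notMem this]
      rw [this]
      exact hm.indicator (measurable_fst measurableSet_Icc)
    have h1' : ∀ t, ∫⁻ ζ, ‖w' t ζ‖ₑ ^ 2 ∂μ ≤ (ENNReal.ofReal (x ^ 2) * n t) ^ 2 := by
      intro t
      refine (lintegral_mono fun ζ => ?_).trans (h1 t)
      simp only [hw']
      by_cases ht : t ∈ J
      · rw [Set.indicator_of_mem ht]
      · rw [Set.indicator_of_notMem ht]; simp
    have i1' : ∫⁻ t, ENNReal.ofReal (x ^ 2) * n t ≠ ∞ := by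
      rw [lintegral_const_mul _ hn]; exact ENNReal.mul_ne_top ENNReal.ofReal_ne_top i1
    obtain ⟨j1, j2, j3⟩ := pair_id hmw hmw (by fun_prop) (by fun_prop) i1' i1' h1' h1'
    have e1 : ∫⁻ ζ, ‖∫ t, w' t ζ‖ₑ ^ 2 ∂μ = ‖∫ ζ, (∫ t, w' t ζ) * (starRingEnd ℂ) (∫ t, w' t ζ) ∂μ‖ₑ := by
      have e2 : ∀ ζ, (∫ t, w' t ζ) * (starRingEnd ℂ) (∫ t, w' t ζ) = ((‖∫ t, w' t ζ‖ ^ 2 : ℝ) : ℂ) := by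
        intro ζ; rw [Complex.mul_conj, Complex.normSq_eq_norm_sq]
      simp_rw [e2] at j1 ⊢
      rw [integral_complex_ofReal, ← ofReal_norm, Complex.norm_real,
        Real.norm_of_nonneg (integral_nonneg fun ζ => by positivity), ofReal_integral_eq_lintegral_ofReal]
      · congr 1; ext ζ
        rw [ENNReal.ofReal_pow (norm_nonneg _), ofReal_norm]
      · have := j1.re
        simpa only [RCLike.re_to_complex, Complex.ofReal_re] using this
      · exact Eventually.of_forall fun ζ => by positivity
    have e3 : ∀ ζ, (∫ t, J.indicator (fun t => w t ζ) t) = ∫ t, w' t ζ := fun ζ => rfl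
    simp_rw [e3]
    rw [e1, j3]
    refine (enorm_integral_le_lintegral_enorm _).trans ?_
    refine (lintegral_prod_le _).trans ?_
    refine lintegral_mono fun t => ?_
    by_cases ht : t ∈ J
    · rw [Set.indicator_of_mem ht]
      have : ∀ᵐ t' : ℝ, t' ≠ t := by
        rw [ae_iff]; simp
      refine lintegral_mono_ae (this.mono fun t' htt => ?_)
      by_cases ht' : t' ∈ J
      · simp only [hw', Set.indicator_of_mem ht, Set.indicator_of_mem ht']
        refine (hk t t' (Ne.symm htt)).trans (le_of_eq ?_)
        have hmem : |t - t'| ∈ Set.Ioc 0 (2 * T) := by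
          refine ⟨abs_pos.2 (sub_ne_zero.2 (Ne.symm htt)), abs_le.2 ⟨?_, ?_⟩⟩ <;>
          · have := ht.1; have := ht.2; have := ht'.1; have := ht'.2; linarith
        rw [knear, Set.indicator_of_mem hmem, ENNReal.ofReal_mul (by positivity)]
        ring
      · simp [hw', Set.indicator_of_notMem ht']
    · rw [Set.indicator_of_notMem ht]
      simp [hw', Set.indicator_of_notMem ht]
  have mk := measurable_knear lam (2 * T)
  set H : ℝ → ℝ≥0∞ := fun t => ∫⁻ t', ENNReal.ofReal (x ^ 2) * (knear lam (2 * T) (t - t') * (n t * n t')) with hH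
  have mH : Measurable H := by
    refine Measurable.lintegral_prod_right' (f := fun p : ℝ × ℝ => ENNReal.ofReal (x ^ 2) * (knear lam (2 * T) (p.1 - p.2) * (n p.1 * n p.2))) ?_
    fun_prop
  calc _ ≤ ∫⁻ s, ∫⁻ t, (Set.Icc (s - T) (s + T)).indicator H t := lintegral_mono hG
    _ = ∫⁻ t, ∫⁻ s, (Set.Icc (s - T) (s + T)).indicator H t := by
      refine lintegral_lintegral_swap ?_
      have : (Function.uncurry fun s t => (Set.Icc (s - T) (s + T)).indicator H t) =
          {p : ℝ × ℝ | p.1 - T ≤ p.2 ∧ p.2 ≤ p.1 + T}.indicator (fun p => H p.2) := by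
        ext ⟨s, t⟩
        simp only [Function.uncurry, Set.indicator, Set.mem_Icc, Set.mem_ofPred_eq]
      rw [this]
      refine ((mH.comp measurable_snd).indicator ?_).aemeasurable
      have s1 : MeasurableSet {p : ℝ × ℝ | p.1 - T ≤ p.2} := measurableSet_le (by fun_prop) (by fun_prop)
      have s2 : MeasurableSet {p : ℝ × ℝ | p.2 ≤ p.1 + T} := measurableSet_le (by fun_prop) (by fun_prop)
      exact s1.inter s2
    _ = ∫⁻ t, ENNReal.ofReal (2 * T) * H t := by
      congr 1; ext t
      have : ∀ s, (Set.Icc (s - T) (s + T)).indicator H t = (Set.Icc (t - T) (t + T)).indicator (fun _ => H t) s := by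
        intro s
        simp only [Set.indicator, Set.mem_Icc]
        congr 1
        simp only [eq_iff_iff]
        constructor <;> rintro ⟨h1, h2⟩ <;> constructor <;> linarith
      simp_rw [this]
      rw [lintegral_indicator_const measurableSet_Icc, Real.volume_Icc, mul_comm]
      congr 2; ring
    _ = ENNReal.ofReal (T * x ^ 2) * (2 * ∫⁻ t, ∫⁻ t', knear lam (2 * T) (t - t') * (n t * n t')) := by
      rw [lintegral_const_mul _ mH]
      simp only [hH]
      simp_rw [fun t => lintegral_const_mul (μ := volume) (ENNReal.ofReal (x ^ 2)) (f := fun t' => knear lam (2 * T) (t - t') * (n t * n t')) (by fun_prop)]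
      rw [lintegral_const_mul _ (Measurable.lintegral_prod_right' (f := fun p : ℝ × ℝ => (knear lam (2 * T) (p.1 - p.2) * (n p.1 * n p.2))) (by fun_prop)),
        ENNReal.ofReal_mul (by norm_num), ENNReal.ofReal_mul hTp.le]
      simp; ring
    _ ≤ ENNReal.ofReal (T * x ^ 2) * (ENNReal.ofReal (6 * lam * r ^ 2) * ((∫⁻ t, n t ^ 2) + ∫⁻ t, n t ^ 2)) := by
      refine mul_le_mul_right ?_ _
      refine (schur volume mk hn hn).trans ?_
      exact mul_le_mul_left (lint_knear hl hr) _
    _ = _ := by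
      rw [← two_mul, ← mul_assoc, ← mul_assoc, ← ENNReal.ofReal_mul (by positivity),
        show (2 : ℝ≥0∞) = ENNReal.ofReal 2 by simp, ← ENNReal.ofReal_mul (by positivity)]
      congr 2
      rw [hT]; ring
end bilin


section bilin
variable {Z : Type*} [MeasurableSpace Z] {μ : Measure Z} [SFinite μ]

lemma measurable_ind {w : ℝ → Z → ℂ} (hm : Measurable (Function.uncurry w)) {J : Set ℝ} (hJ : MeasurableSet J) :
    Measurable (Function.uncurry fun t ζ => J.indicator (fun t => w t ζ) t) := by
  have : (Function.uncurry fun t ζ => J.indicator (fun t => w t ζ) t) = (Prod.fst ⁻¹' J).indicator (Function.uncurry w) := by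
    ext ⟨t, ζ⟩
    by_cases ht : t ∈ J
    · have : (t, ζ) ∈ (Prod.fst ⁻¹' J : Set (ℝ × Z)) := ht
      simp [Set.indicator_of_mem ht, Set.indicator_of_mem this]
    · have : (t, ζ) ∉ (Prod.fst ⁻¹' J : Set (ℝ × Z)) := ht
      simp [Set.indicator_of_notMem ht, Set.indicator_of_notMem this]
  rw [this]
  exact hm.indicator (measurable_fst hJ)

lemma pair_bound_r {w1 w2 : ℝ → Z → ℂ} (hm1 : Measurable (Function.uncurry w1))
    (hm2 : Measurable (Function.uncurry w2)) {n1 n2 : ℝ → ℝ≥0∞} (hn1 : Measurable n1) (hn2 : Measurable n2)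
    (i1 : ∫⁻ t, n1 t ≠ ∞) (i2 : ∫⁻ t, n2 t ≠ ∞) {x y lam r : ℝ} (hx : 0 < x) (hy : 0 < y) (hl : 0 < lam) (hr : 0 < r)
    (h1 : ∀ t, ∫⁻ ζ, ‖w1 t ζ‖ₑ ^ 2 ∂μ ≤ (ENNReal.ofReal (x ^ 2) * n1 t) ^ 2)
    (h2 : ∀ t, ∫⁻ ζ, ‖w2 t ζ‖ₑ ^ 2 ∂μ ≤ (ENNReal.ofReal (y ^ 2) * n2 t) ^ 2)
    (h11 : ∀ t s, t ≠ s → ‖∫ ζ, w1 t ζ * (starRingEnd ℂ) (w1 s ζ) ∂μ‖ₑ ≤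
      ENNReal.ofReal ((lam / |t - s|) ^ (3 / 2 : ℝ) * (x⁻¹ * x⁻¹)) * (n1 t * n1 s))
    (h12 : ∀ t s, t ≠ s → ‖∫ ζ, w1 t ζ * (starRingEnd ℂ) (w2 s ζ) ∂μ‖ₑ ≤
      ENNReal.ofReal ((lam / |t - s|) ^ (3 / 2 : ℝ) * (x⁻¹ * y⁻¹)) * (n1 t * n2 s)) :
    2 * ‖∫ ζ, (∫ t, w1 t ζ) * (starRingEnd ℂ) (∫ t, w2 t ζ) ∂μ‖ₑ ≤
      ENNReal.ofReal (4 * lam / r ^ 2 * (x⁻¹ * y⁻¹) + 4 * lam * r ^ 3 * x * y ^ 2) *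
        ((∫⁻ t, n1 t ^ 2) + ∫⁻ t, n2 t ^ 2) := by
  have i1' : ∫⁻ t, ENNReal.ofReal (x ^ 2) * n1 t ≠ ∞ := by
    rw [lintegral_const_mul _ hn1]; exact ENNReal.mul_ne_top ENNReal.ofReal_ne_top i1
  have i2' : ∫⁻ t, ENNReal.ofReal (y ^ 2) * n2 t ≠ ∞ := by
    rw [lintegral_const_mul _ hn2]; exact ENNReal.mul_ne_top ENNReal.ofReal_ne_top i2
  obtain ⟨j1, j2, j3⟩ := pair_id hm1 hm2 (by fun_prop) (by fun_prop) i1' i2' h1 h2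
  set D := {p : ℝ × ℝ | |p.1 - p.2| ≤ lam * r ^ 4} with hDdef
  have hD : MeasurableSet D := by rw [hDdef]; measurability
  rw [j3, ← integral_add_compl hD j2]
  have far := far_le (b := fun p => ∫ ζ, w1 p.1 ζ * (starRingEnd ℂ) (w2 p.2 ζ) ∂μ) hn1 hn2 hl hr
    (d := x⁻¹ * y⁻¹) (by positivity) h12
  have hfar : 2 * ‖∫ p in Dᶜ, ∫ ζ, w1 p.1 ζ * (starRingEnd ℂ) (w2 p.2 ζ) ∂μ ∂((volume : Measure ℝ).prod (volume : Measure ℝ))‖ₑ ≤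
      ENNReal.ofReal (4 * lam / r ^ 2 * (x⁻¹ * y⁻¹)) * ((∫⁻ t, n1 t ^ 2) + ∫⁻ t, n2 t ^ 2) :=
    (mul_le_mul_right (enorm_integral_le_lintegral_enorm _) _).trans far
  have hnear : 2 * ‖∫ p in D, ∫ ζ, w1 p.1 ζ * (starRingEnd ℂ) (w2 p.2 ζ) ∂μ ∂((volume : Measure ℝ).prod (volume : Measure ℝ))‖ₑ ≤
      ENNReal.ofReal (4 * lam * r ^ 3 * x * y ^ 2) * ((∫⁻ t, n1 t ^ 2) + ∫⁻ t, n2 t ^ 2) := by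
    rw [← integral_indicator hD, integral_prod_symm _ (j2.indicator hD)]
    set G : ℝ → ℝ≥0∞ := fun s => ∫⁻ ζ, ‖∫ t, (Set.Icc (s - lam * r ^ 4) (s + lam * r ^ 4)).indicator (fun t => w1 t ζ) t‖ₑ ^ 2 ∂μ with hG
    have b1 : ∀ᵐ s : ℝ, ‖∫ t, D.indicator (fun p : ℝ × ℝ => ∫ ζ, w1 p.1 ζ * (starRingEnd ℂ) (w2 p.2 ζ) ∂μ) (t, s)‖ₑ ≤
        (G s) ^ (1 / 2 : ℝ) * (ENNReal.ofReal (y ^ 2) * n2 s) := by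
      filter_upwards [ae_lt_top hn2 i2] with s hs
      have e : ∀ t, D.indicator (fun p : ℝ × ℝ => ∫ ζ, w1 p.1 ζ * (starRingEnd ℂ) (w2 p.2 ζ) ∂μ) (t, s) =
          ∫ ζ, (Set.Icc (s - lam * r ^ 4) (s + lam * r ^ 4)).indicator (fun t => w1 t ζ) t * (starRingEnd ℂ) (w2 s ζ) ∂μ := by
        intro t
        have hiff : (t, s) ∈ D ↔ t ∈ Set.Icc (s - lam * r ^ 4) (s + lam * r ^ 4) := by
          show |t - s| ≤ _ ↔ _
          rw [abs_le, Set.mem_Icc]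
          constructor <;> rintro ⟨h1, h2⟩ <;> constructor <;> linarith
        by_cases ht : (t, s) ∈ D
        · rw [Set.indicator_of_mem ht]
          simp only [Set.indicator_of_mem (hiff.1 ht)]
        · rw [Set.indicator_of_notMem ht]
          simp [Set.indicator_of_notMem (fun h => ht (hiff.2 h))]
      simp_rw [e]
      refine single_id (μ := μ) (N := fun t => ENNReal.ofReal (x ^ 2) * n1 t) (w := fun t ζ => (Set.Icc (s - lam * r ^ 4) (s + lam * r ^ 4)).indicator (fun t => w1 t ζ) t)
        (measurable_ind hm1 measurableSet_Icc)
        (hm2.comp (by fun_prop : Measurable (fun ζ : Z => (s, ζ)))) (by fun_prop) i1' ?_ ?_ (h2 s)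
      · intro t
        refine (lintegral_mono fun ζ => ?_).trans (h1 t)
        simp only [Set.indicator]
        split_ifs <;> simp
      · exact ENNReal.mul_ne_top ENNReal.ofReal_ne_top hs.ne
    have hc : 0 < 4 * lam * r ^ 3 * x * y ^ 2 / y ^ 4 := by positivity
    set c := 4 * lam * r ^ 3 * x * y ^ 2 / y ^ 4 with hcdef
    calc _ ≤ 2 * ∫⁻ s, (G s) ^ (1 / 2 : ℝ) * (ENNReal.ofReal (y ^ 2) * n2 s) :=
          mul_le_mul_right ((enorm_integral_le_lintegral_enorm _).trans (lintegral_mono_ae b1)) _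
      _ = ∫⁻ s, 2 * ((ENNReal.ofReal (y ^ 2) * n2 s) * (G s) ^ (1 / 2 : ℝ)) := by
          rw [← lintegral_const_mul' _ _ (by simp)]
          congr 1; ext s; ring
      _ ≤ ∫⁻ s, (ENNReal.ofReal c * (ENNReal.ofReal (y ^ 2) * n2 s) ^ 2 + ENNReal.ofReal c⁻¹ * G s) := by
          refine lintegral_mono fun s => (amgm_c _ _ hc).trans (le_of_eq ?_)
          congr 2
          rw [← ENNReal.rpow_natCast, ← ENNReal.rpow_mul]; norm_num
      _ = ENNReal.ofReal (4 * lam * r ^ 3 * x * y ^ 2) * (∫⁻ t, n2 t ^ 2) + ENNReal.ofReal c⁻¹ * ∫⁻ s, G s := by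
          rw [lintegral_add_left (by fun_prop), lintegral_const_mul' _ _ ENNReal.ofReal_ne_top, lintegral_const_mul' _ _ ENNReal.ofReal_ne_top]
          congr 1
          simp_rw [mul_pow]
          rw [lintegral_const_mul' _ _ (by simp), ← mul_assoc, ← ENNReal.ofReal_pow (by positivity), ← ENNReal.ofReal_mul hc.le]
          congr 2
          rw [hcdef]; field_simp
      _ ≤ ENNReal.ofReal (4 * lam * r ^ 3 * x * y ^ 2) * (∫⁻ t, n2 t ^ 2) + ENNReal.ofReal (4 * lam * r ^ 3 * x * y ^ 2) * (∫⁻ t, n1 t ^ 2) := by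
          refine add_le_add le_rfl ?_
          calc _ ≤ ENNReal.ofReal c⁻¹ * (ENNReal.ofReal (12 * lam ^ 2 * r ^ 6 * x ^ 2) * ∫⁻ t, n1 t ^ 2) :=
                mul_le_mul_right (near_sq hm1 hn1 i1 hx hl hr h1 h11) _
            _ ≤ _ := by
                rw [← mul_assoc, ← ENNReal.ofReal_mul (by positivity)]
                refine mul_le_mul_left (ENNReal.ofReal_le_ofReal ?_) _
                rw [hcdef]
                have : (4 * lam * r ^ 3 * x * y ^ 2 / y ^ 4)⁻¹ * (12 * lam ^ 2 * r ^ 6 * x ^ 2) = 3 * (lam * r ^ 3 * x * y ^ 2) := by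
                  field_simp
                  try norm_num
                rw [this]
                have : 0 ≤ lam * r ^ 3 * x * y ^ 2 := by positivity
                linarith
      _ = _ := by ring
  calc _ ≤ 2 * (_ + _) := mul_le_mul_right (enorm_add_le _ _) _
    _ = _ := mul_add _ _ _
    _ ≤ _ := add_le_add hnear hfar
    _ = _ := by
      rw [ENNReal.ofReal_add (by positivity) (by positivity)]; ring

lemma alg1 {x y X2 Y2 X Y lam : ℝ} (hx : 0 < x) (hy : 0 < y) (h2 : 0 < X2) (h3 : 0 < Y2) (h4 : 0 < X)
    (q1 : X2 * x = X) (q2 : Y2 * Y * y = 1) : 4 * lam / (X2 * Y2) * (x⁻¹ * y⁻¹) = 4 * lam * (Y / X) := by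
  subst q1
  field_simp
  linear_combination (-lam) * q2

lemma alg2 {x y X3 Y3 X Y lam : ℝ} (h4 : 0 < X)
    (q3 : X3 * x * X = 1) (q4 : Y3 * y ^ 2 = Y) : 4 * lam * (X3 * Y3) * x * y ^ 2 = 4 * lam * (Y / X) := by
  subst q4
  field_simp
  linear_combination (lam * Y3 * y ^ 2) * q3

lemma pair_bound {w1 w2 : ℝ → Z → ℂ} (hm1 : Measurable (Function.uncurry w1))
    (hm2 : Measurable (Function.uncurry w2)) {n1 n2 : ℝ → ℝ≥0∞} (hn1 : Measurable n1) (hn2 : Measurable n2)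
    (i1 : ∫⁻ t, n1 t ≠ ∞) (i2 : ∫⁻ t, n2 t ≠ ∞) {x y lam : ℝ} (hx : 0 < x) (hy : 0 < y) (hl : 0 < lam)
    (h1 : ∀ t, ∫⁻ ζ, ‖w1 t ζ‖ₑ ^ 2 ∂μ ≤ (ENNReal.ofReal (x ^ 2) * n1 t) ^ 2)
    (h2 : ∀ t, ∫⁻ ζ, ‖w2 t ζ‖ₑ ^ 2 ∂μ ≤ (ENNReal.ofReal (y ^ 2) * n2 t) ^ 2)
    (h11 : ∀ t s, t ≠ s → ‖∫ ζ, w1 t ζ * (starRingEnd ℂ) (w1 s ζ) ∂μ‖ₑ ≤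
      ENNReal.ofReal ((lam / |t - s|) ^ (3 / 2 : ℝ) * (x⁻¹ * x⁻¹)) * (n1 t * n1 s))
    (h12 : ∀ t s, t ≠ s → ‖∫ ζ, w1 t ζ * (starRingEnd ℂ) (w2 s ζ) ∂μ‖ₑ ≤
      ENNReal.ofReal ((lam / |t - s|) ^ (3 / 2 : ℝ) * (x⁻¹ * y⁻¹)) * (n1 t * n2 s)) :
    2 * ‖∫ ζ, (∫ t, w1 t ζ) * (starRingEnd ℂ) (∫ t, w2 t ζ) ∂μ‖ₑ ≤
      ENNReal.ofReal (8 * lam * (y / x) ^ (1 / 5 : ℝ)) * ((∫⁻ t, n1 t ^ 2) + ∫⁻ t, n2 t ^ 2) := by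
  have hr : 0 < x ^ (-(2 / 5) : ℝ) * y ^ (-(3 / 5) : ℝ) := by positivity
  have := pair_bound_r hm1 hm2 hn1 hn2 i1 i2 hx hy hl hr h1 h2 h11 h12
  refine this.trans (le_of_eq ?_)
  congr 2
  have ex : ∀ (s : ℝ), 0 < s → ∀ (a : ℝ) (n : ℕ), (s ^ a) ^ n = s ^ (a * n) := by
    intro s hs a n; rw [Real.rpow_mul hs.le, Real.rpow_natCast]
  rw [mul_pow, mul_pow, ex x hx, ex y hy, ex x hx, ex y hy, Real.div_rpow hy.le hx.le]
  have q1 : x ^ (-(2 / 5) * ((2 : ℕ) : ℝ) : ℝ) * x = x ^ (1 / 5 : ℝ) := by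
    nth_rw 2 [← Real.rpow_one x]; rw [← Real.rpow_add hx]; norm_num
  have q2 : y ^ (-(3 / 5) * ((2 : ℕ) : ℝ) : ℝ) * y ^ (1 / 5 : ℝ) * y = 1 := by
    nth_rw 3 [← Real.rpow_one y]; rw [← Real.rpow_add hy, ← Real.rpow_add hy]; norm_num
  have q3 : x ^ (-(2 / 5) * ((3 : ℕ) : ℝ) : ℝ) * x * x ^ (1 / 5 : ℝ) = 1 := by
    nth_rw 2 [← Real.rpow_one x]; rw [← Real.rpow_add hx, ← Real.rpow_add hx]; norm_num
  have q4 : y ^ (-(3 / 5) * ((3 : ℕ) : ℝ) : ℝ) * y ^ 2 = y ^ (1 / 5 : ℝ) := by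
    rw [← Real.rpow_natCast, ← Real.rpow_add hy]; norm_num
  have p1 : 4 * lam / (x ^ (-(2 / 5) * ((2 : ℕ) : ℝ) : ℝ) * y ^ (-(3 / 5) * ((2 : ℕ) : ℝ) : ℝ)) * (x⁻¹ * y⁻¹) = 4 * lam * (y ^ (1 / 5 : ℝ) / x ^ (1 / 5 : ℝ)) := by
    exact alg1 hx hy (by positivity) (by positivity) (by positivity) q1 q2
  have p2 : 4 * lam * (x ^ (-(2 / 5) * ((3 : ℕ) : ℝ) : ℝ) * y ^ (-(3 / 5) * ((3 : ℕ) : ℝ) : ℝ)) * x * y ^ 2 = 4 * lam * (y ^ (1 / 5 : ℝ) / x ^ (1 / 5 : ℝ)) := by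
    exact alg2 (by positivity) q3 q4
  rw [p1, p2]; ring
end bilin


lemma summable_geoZ {ρ : ℝ} (h0 : 0 ≤ ρ) (h1 : ρ < 1) : Summable (fun n : ℤ => ρ ^ n.natAbs) := by
  refine Summable.of_nat_of_neg ?_ ?_
  · simpa using summable_geometric_of_lt_one h0 h1
  · simpa using summable_geometric_of_lt_one h0 h1

def geoS (ρ : ℝ) : ℝ := ∑' n : ℤ, ρ ^ n.natAbs

lemma geoS_pos {ρ : ℝ} (h0 : 0 ≤ ρ) (h1 : ρ < 1) : 0 < geoS ρ := by
  have : (fun n : ℤ => ρ ^ n.natAbs) 0 ≤ geoS ρ :=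
    (summable_geoZ h0 h1).le_tsum 0 (fun n _ => by positivity)
  simp at this
  linarith

lemma geo_sum_le {ρ : ℝ} (h0 : 0 ≤ ρ) (h1 : ρ < 1) (K : Finset ℤ) (k : ℤ) :
    ∑ l ∈ K, ENNReal.ofReal (ρ ^ (k - l).natAbs) ≤ ENNReal.ofReal (geoS ρ) := by
  rw [← ENNReal.ofReal_sum_of_nonneg (fun _ _ => by positivity)]
  refine ENNReal.ofReal_le_ofReal ?_
  have hs := (summable_geoZ h0 h1)
  have : ∑ l ∈ K, ρ ^ (k - l).natAbs = ∑ n ∈ K.map (Equiv.subLeft k).toEmbedding, ρ ^ n.natAbs := by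
    rw [Finset.sum_map]; simp
  rw [this]
  exact hs.sum_le_tsum _ (fun n _ => by positivity)

lemma schur_sum {ρ : ℝ} (h0 : 0 ≤ ρ) (h1 : ρ < 1) (K : Finset ℤ) (A : ℤ → ℝ≥0∞) :
    ∑ k ∈ K, ∑ l ∈ K, ENNReal.ofReal (ρ ^ (k - l).natAbs) * (A k + A l) ≤
      2 * ENNReal.ofReal (geoS ρ) * ∑ k ∈ K, A k := by
  simp_rw [mul_add, Finset.sum_add_distrib]
  have e1 : ∑ k ∈ K, ∑ l ∈ K, ENNReal.ofReal (ρ ^ (k - l).natAbs) * A k ≤ ENNReal.ofReal (geoS ρ) * ∑ k ∈ K, A k := by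
    rw [Finset.mul_sum]
    refine Finset.sum_le_sum fun k _ => ?_
    rw [← Finset.sum_mul]
    exact mul_le_mul_left (geo_sum_le h0 h1 K k) _
  have e2 : ∑ k ∈ K, ∑ l ∈ K, ENNReal.ofReal (ρ ^ (k - l).natAbs) * A l ≤ ENNReal.ofReal (geoS ρ) * ∑ k ∈ K, A k := by
    rw [Finset.sum_comm]
    refine le_trans (le_of_eq ?_) e1
    refine Finset.sum_congr rfl fun k _ => Finset.sum_congr rfl fun l _ => ?_
    rw [← Int.natAbs_neg, neg_sub]
  calc _ ≤ _ := add_le_add e1 e2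
    _ = _ := by ring

def rho : ℝ := (1 / 2 : ℝ) ^ (1 / 5 : ℝ)
lemma rho_nonneg : 0 ≤ rho := by unfold rho; positivity
lemma rho_lt : rho < 1 := Real.rpow_lt_one (by norm_num) (by norm_num) (by norm_num)

lemma rho_eq {k l : ℤ} (h : l ≤ k) : ((2 : ℝ) ^ l / 2 ^ k) ^ (1 / 5 : ℝ) = rho ^ (k - l).natAbs := by
  unfold rho
  rw [← zpow_sub₀ (by norm_num), ← Real.rpow_natCast, ← Real.rpow_mul (by norm_num), mul_comm, Real.rpow_mul (by norm_num)]
  congr 1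
  rw [Real.rpow_natCast, one_div, inv_pow, ← zpow_natCast, ← zpow_neg]
  congr 1
  omega

theorem keel_tao {Z : Type*} [MeasurableSpace Z] {μ : Measure Z} [SFinite μ] (K : Finset ℤ)
    {w : ℤ → ℝ → Z → ℂ} (hm : ∀ k, Measurable (Function.uncurry (w k)))
    {n : ℤ → ℝ → ℝ≥0∞} (hn : ∀ k, Measurable (n k)) (i1 : ∀ k, ∫⁻ t, n k t ≠ ∞)
    {lam : ℝ} (hl : 0 < lam)
    (h1 : ∀ k t, ∫⁻ ζ, ‖w k t ζ‖ₑ ^ 2 ∂μ ≤ (ENNReal.ofReal (((2 : ℝ) ^ k) ^ 2) * n k t) ^ 2)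
    (h2 : ∀ k l t s, t ≠ s → ‖∫ ζ, w k t ζ * (starRingEnd ℂ) (w l s ζ) ∂μ‖ₑ ≤
      ENNReal.ofReal ((lam / |t - s|) ^ (3 / 2 : ℝ) * (((2 : ℝ) ^ k)⁻¹ * ((2 : ℝ) ^ l)⁻¹)) * (n k t * n l s)) :
    ∫⁻ ζ, ‖∑ k ∈ K, ∫ t, w k t ζ‖ₑ ^ 2 ∂μ ≤ ENNReal.ofReal (8 * geoS rho * lam) * ∑ k ∈ K, ∫⁻ t, n k t ^ 2 := by
  set W : ℤ → Z → ℂ := fun k ζ => ∫ t, w k t ζ with hW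
  have hint : ∀ k l, Integrable (fun ζ => W k ζ * (starRingEnd ℂ) (W l ζ)) μ := fun k l =>
    (pair_id (hm k) (hm l) (by have := hn k; fun_prop) (by have := hn l; fun_prop)
      (by rw [lintegral_const_mul _ (hn k)]; exact ENNReal.mul_ne_top ENNReal.ofReal_ne_top (i1 k))
      (by rw [lintegral_const_mul _ (hn l)]; exact ENNReal.mul_ne_top ENNReal.ofReal_ne_top (i1 l)) (h1 k) (h1 l)).1
  have hpb : ∀ k l, l ≤ k → 2 * ‖∫ ζ, W k ζ * (starRingEnd ℂ) (W l ζ) ∂μ‖ₑ ≤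
      ENNReal.ofReal (8 * lam) * (ENNReal.ofReal (rho ^ (k - l).natAbs) * ((∫⁻ t, n k t ^ 2) + ∫⁻ t, n l t ^ 2)) := by
    intro k l hkl
    have := pair_bound (hm k) (hm l) (hn k) (hn l) (i1 k) (i1 l) (x := 2 ^ k) (y := 2 ^ l) (by positivity) (by positivity) hl
      (h1 k) (h1 l) (h2 k k) (h2 k l)
    rw [rho_eq hkl, ENNReal.ofReal_mul (by positivity), mul_assoc] at this
    exact this
  have hpb' : ∀ k l, 2 * ‖∫ ζ, W k ζ * (starRingEnd ℂ) (W l ζ) ∂μ‖ₑ ≤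
      ENNReal.ofReal (8 * lam) * (ENNReal.ofReal (rho ^ (k - l).natAbs) * ((∫⁻ t, n k t ^ 2) + ∫⁻ t, n l t ^ 2)) := by
    intro k l
    rcases le_total l k with h | h
    · exact hpb k l h
    · have := hpb l k h
      rw [← Int.natAbs_neg, neg_sub, add_comm] at this
      refine le_trans (le_of_eq ?_) this
      rw [← RCLike.enorm_conj, ← integral_conj]
      congr 3; ext ζ
      simp [mul_comm]
  have hexp : ∀ ζ, (((‖∑ k ∈ K, W k ζ‖ ^ 2 : ℝ)) : ℂ) = ∑ k ∈ K, ∑ l ∈ K, W k ζ * (starRingEnd ℂ) (W l ζ) := by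
    intro ζ
    rw [← Complex.normSq_eq_norm_sq, ← Complex.mul_conj, map_sum, Finset.sum_mul_sum]
  have hI : Integrable (fun ζ => ∑ k ∈ K, ∑ l ∈ K, W k ζ * (starRingEnd ℂ) (W l ζ)) μ :=
    integrable_finsetSum _ fun k _ => integrable_finsetSum _ fun l _ => hint k l
  have e1 : ∫⁻ ζ, ‖∑ k ∈ K, W k ζ‖ₑ ^ 2 ∂μ = ‖∫ ζ, ∑ k ∈ K, ∑ l ∈ K, W k ζ * (starRingEnd ℂ) (W l ζ) ∂μ‖ₑ := by
    simp_rw [← hexp] at hI ⊢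
    rw [integral_complex_ofReal, ← ofReal_norm, Complex.norm_real,
        Real.norm_of_nonneg (integral_nonneg fun ζ => by positivity), ofReal_integral_eq_lintegral_ofReal]
    · congr 1; ext ζ
      rw [ENNReal.ofReal_pow (norm_nonneg _), ofReal_norm]
    · have := hI.re
      simpa only [RCLike.re_to_complex, Complex.ofReal_re] using this
    · exact Eventually.of_forall fun ζ => by positivity
  have key : 2 * ∫⁻ ζ, ‖∑ k ∈ K, W k ζ‖ₑ ^ 2 ∂μ ≤ 2 * (ENNReal.ofReal (8 * geoS rho * lam) * ∑ k ∈ K, ∫⁻ t, n k t ^ 2) := by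
    rw [e1, integral_finsetSum _ (fun k _ => integrable_finsetSum _ fun l _ => hint k l)]
    simp_rw [integral_finsetSum K (fun l _ => hint _ l)]
    calc _ ≤ 2 * ∑ k ∈ K, ∑ l ∈ K, ‖∫ ζ, W k ζ * (starRingEnd ℂ) (W l ζ) ∂μ‖ₑ := by
          refine mul_le_mul_right ?_ _
          refine (enorm_sum_le _ _).trans (Finset.sum_le_sum fun k _ => enorm_sum_le _ _)
      _ = ∑ k ∈ K, ∑ l ∈ K, 2 * ‖∫ ζ, W k ζ * (starRingEnd ℂ) (W l ζ) ∂μ‖ₑ := by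
          simp_rw [Finset.mul_sum]
      _ ≤ ∑ k ∈ K, ∑ l ∈ K, ENNReal.ofReal (8 * lam) * (ENNReal.ofReal (rho ^ (k - l).natAbs) * ((∫⁻ t, n k t ^ 2) + ∫⁻ t, n l t ^ 2)) :=
          Finset.sum_le_sum fun k _ => Finset.sum_le_sum fun l _ => hpb' k l
      _ = ENNReal.ofReal (8 * lam) * ∑ k ∈ K, ∑ l ∈ K, (ENNReal.ofReal (rho ^ (k - l).natAbs) * ((∫⁻ t, n k t ^ 2) + ∫⁻ t, n l t ^ 2)) := by
          simp_rw [Finset.mul_sum]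
      _ ≤ ENNReal.ofReal (8 * lam) * (2 * ENNReal.ofReal (geoS rho) * ∑ k ∈ K, ∫⁻ t, n k t ^ 2) :=
          mul_le_mul_right (schur_sum rho_nonneg rho_lt K _) _
      _ = _ := by
          rw [show 8 * geoS rho * lam = 8 * lam * geoS rho by ring, ENNReal.ofReal_mul (by positivity : 0 ≤ 8 * lam)]
          ring
  exact (ENNReal.mul_le_mul_iff_right (by simp) (by simp)).1 key


def ev (f : ℝ × E2 → ℂ) (t : ℝ) (z : ℝ × E2) : ℂ := FT (fun ζ => ex (t * omega ζ) * f ζ) z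

lemma measurable_ev {f : ℝ × E2 → ℂ} (hf : Measurable f) : Measurable (Function.uncurry (ev f)) := by
  have : StronglyMeasurable (fun q : (ℝ × (ℝ × E2)) × (ℝ × E2) => ex (ph q.1.2 q.2) * (ex (q.1.1 * omega q.2) * f q.2)) := by
    refine Measurable.stronglyMeasurable ?_
    have := measurable_omega
    fun_prop
  exact this.integral_prod_right'.measurable

lemma norm_ev_le {f : ℝ × E2 → ℂ} (t : ℝ) (z : ℝ × E2) : ‖ev f t z‖ ≤ ∫ ζ, ‖f ζ‖ := by
  refine (norm_FT_le _).trans (le_of_eq ?_)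
  simp

lemma measurable_FT_param {F : ℝ → ℝ × E2 → ℂ} (hF : Measurable (Function.uncurry F)) :
    Measurable (fun p : ℝ × (ℝ × E2) => FT (F p.1) p.2) := by
  have : StronglyMeasurable (fun q : (ℝ × (ℝ × E2)) × (ℝ × E2) => ex (ph q.1.2 q.2) * F q.1.1 q.2) := by
    refine Measurable.stronglyMeasurable ?_
    have h2 : Measurable (fun q : (ℝ × (ℝ × E2)) × (ℝ × E2) => F q.1.1 q.2) :=
      hF.comp (by fun_prop : Measurable fun q : (ℝ × (ℝ × E2)) × (ℝ × E2) => (q.1.1, q.2))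
    have h1 : Measurable (fun q : (ℝ × (ℝ × E2)) × (ℝ × E2) => ex (ph q.1.2 q.2)) := by fun_prop
    exact h1.mul h2
  exact this.integral_prod_right'.measurable

lemma dual_fubini {f : ℝ × E2 → ℂ} (hf : Integrable f) {F : ℝ → ℝ × E2 → ℂ}
    (hF : Integrable (Function.uncurry F) ((volume : Measure ℝ).prod volume)) :
    ∫ p : ℝ × (ℝ × E2), ev f p.1 p.2 * F p.1 p.2 ∂((volume : Measure ℝ).prod volume) =
      ∫ ζ, f ζ * ∫ t, ex (t * omega ζ) * FT (F t) ζ := by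
  have hI : Integrable (fun q : (ℝ × (ℝ × E2)) × (ℝ × E2) =>
      ex (ph q.1.2 q.2 + q.1.1 * omega q.2) * (Function.uncurry F q.1 * f q.2))
      (((volume : Measure ℝ).prod volume).prod volume) :=
    integrable_ex_mul (hF.mul_prod hf) (by have := measurable_omega; fun_prop)
  have e1 : ∀ p : ℝ × (ℝ × E2), ev f p.1 p.2 * F p.1 p.2 =
      ∫ ζ, ex (ph p.2 ζ + p.1 * omega ζ) * (Function.uncurry F p * f ζ) := by
    intro p
    rw [ev, FT, ← integral_mul_const]
    congr 1; ext ζ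
    rw [ex_add, Function.uncurry]; ring
  simp_rw [e1]
  rw [integral_integral_swap hI]
  congr 1; ext ζ
  have hI2 : Integrable (fun p : ℝ × (ℝ × E2) => ex (ph p.2 ζ + p.1 * omega ζ) * Function.uncurry F p)
      ((volume : Measure ℝ).prod volume) := integrable_ex_mul hF (by fun_prop)
  have e2 : ∀ p : ℝ × (ℝ × E2), ex (ph p.2 ζ + p.1 * omega ζ) * (Function.uncurry F p * f ζ) =
     f ζ * (ex (ph p.2 ζ + p.1 * omega ζ) * Function.uncurry F p) := fun p => by ring
  simp_rw [e2]
  rw [integral_const_mul, integral_prod _ hI2]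
  congr 2; ext t
  rw [FT, ← integral_const_mul]
  congr 1; ext z
  rw [ex_add, ph_comm, Function.uncurry]; ring

def lamC : ℝ := (70 : ℝ) ^ (2 / 3 : ℝ)
lemma lamC_pos : 0 < lamC := by unfold lamC; positivity

lemma lam_eq {a τ : ℝ} (ha : 0 < a) (hτ : 0 < τ) :
    (lamC * a ^ (1 / 3 : ℝ) / τ) ^ (3 / 2 : ℝ) = 70 * (Real.sqrt (a / τ) / τ) := by
  rw [Real.div_rpow (by have := lamC_pos; positivity) hτ.le, Real.mul_rpow lamC_pos.le (by positivity), lamC,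
    ← Real.rpow_mul (by norm_num), ← Real.rpow_mul ha.le, Real.sqrt_eq_rpow, Real.div_rpow ha.le hτ.le,
    show (3 / 2 : ℝ) = 1 / 2 + 1 by norm_num, Real.rpow_add hτ, Real.rpow_one]
  norm_num
  field_simp

def dualC : ℝ := 8 * geoS rho * lamC * (8 * Real.pi ^ 3)
lemma dualC_pos : 0 < dualC := by
  unfold dualC
  have := geoS_pos rho_nonneg rho_lt
  have := lamC_pos
  have := Real.pi_pos
  positivity

lemma dual_bound {a : ℝ} (ha : 0 < a) {f : ℝ × E2 → ℂ} (hf : Integrable f) (hfm : Measurable f)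
    (hsupp : ∀ ζ ∉ bl a, f ζ = 0) (K : Finset ℤ) {F : ℤ → ℝ → ℝ × E2 → ℂ}
    (hm : ∀ k, Measurable (Function.uncurry (F k))) {n : ℤ → ℝ → ℝ≥0∞} (hn : ∀ k, Measurable (n k))
    (i1 : ∀ k, ∫⁻ t, n k t ≠ ∞) (ntop : ∀ k t, n k t ≠ ∞)
    (h1 : ∀ k t, ∫⁻ z, ‖F k t z‖ₑ ≤ ENNReal.ofReal ((2 : ℝ) ^ k)⁻¹ * n k t)
    (h2 : ∀ k t, ∫⁻ z, ‖F k t z‖ₑ ^ 2 ≤ (ENNReal.ofReal (((2 : ℝ) ^ k) ^ 2) * n k t) ^ 2) :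
    ‖∑ k ∈ K, ∫ p : ℝ × (ℝ × E2), ev f p.1 p.2 * F k p.1 p.2 ∂((volume : Measure ℝ).prod volume)‖ₑ ≤
      (∫⁻ ζ, ‖f ζ‖ₑ ^ 2) ^ (1 / 2 : ℝ) *
      (ENNReal.ofReal (dualC * a ^ (1 / 3 : ℝ)) * ∑ k ∈ K, ∫⁻ t, n k t ^ 2) ^ (1 / 2 : ℝ) := by
  have mF : ∀ k t, Measurable (F k t) := fun k t => (hm k).comp (by fun_prop : Measurable fun z : ℝ × E2 => (t, z))
  have iF : ∀ k t, Integrable (F k t) := fun k t =>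
    ⟨(mF k t).aestronglyMeasurable, (h1 k t).trans_lt (ENNReal.mul_lt_top ENNReal.ofReal_lt_top (ntop k t).lt_top)⟩
  have qF : ∀ k t, ∫⁻ z, ‖F k t z‖ₑ ^ 2 ≠ ∞ := fun k t =>
    ((h2 k t).trans_lt (ENNReal.pow_lt_top (ENNReal.mul_lt_top ENNReal.ofReal_lt_top (ntop k t).lt_top))).ne
  have hFI : ∀ k, Integrable (Function.uncurry (F k)) ((volume : Measure ℝ).prod volume) := by
    intro k
    refine ⟨(hm k).aestronglyMeasurable, ?_⟩
    rw [hasFiniteIntegral_iff_enorm, lintegral_prod _ (hm k).enorm.aemeasurable]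
    refine (lintegral_mono (h1 k)).trans_lt ?_
    rw [lintegral_const_mul _ (hn k)]
    exact ENNReal.mul_lt_top ENNReal.ofReal_lt_top (i1 k).lt_top
  set w : ℤ → ℝ → ℝ × E2 → ℂ := fun k t ζ => (bl a).indicator (fun ζ => ex (t * omega ζ) * FT (F k t) ζ) ζ with hw
  have hmw : ∀ k, Measurable (Function.uncurry (w k)) := by
    intro k
    have e : Function.uncurry (w k) = (Prod.snd ⁻¹' (bl a)).indicator (fun p : ℝ × (ℝ × E2) => ex (p.1 * omega p.2) * FT (F k p.1) p.2) := by
      ext ⟨t, ζ⟩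
      simp only [hw, Function.uncurry, Set.indicator]
      rfl
    rw [e]
    refine Measurable.indicator ?_ (measurable_snd (measurableSet_bl a))
    refine Measurable.mul ?_ (measurable_FT_param (hm k))
    have := measurable_omega
    fun_prop
  set c : ℝ := Real.sqrt (8 * Real.pi ^ 3) with hc
  have hc2 : c ^ 2 = 8 * Real.pi ^ 3 := Real.sq_sqrt (by have := Real.pi_pos; positivity)
  have hc0 : 0 ≤ c := Real.sqrt_nonneg _
  have hc1 : 1 ≤ c ^ 2 := by
    rw [hc2]
    have := Real.pi_gt_three
    have : (3 : ℝ) ^ 3 ≤ Real.pi ^ 3 := by gcongr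
    linarith
  have hkt := keel_tao (μ := (volume : Measure (ℝ × E2))) K hmw (n := fun k t => ENNReal.ofReal c * n k t)
    (fun k => by have := hn k; fun_prop)
    (fun k => by rw [lintegral_const_mul _ (hn k)]; exact ENNReal.mul_ne_top ENNReal.ofReal_ne_top (i1 k))
    (lam := lamC * a ^ (1 / 3 : ℝ)) (by have := lamC_pos; positivity) ?_ ?_
  rotate_left
  · intro k t
    calc _ ≤ ∫⁻ ζ, ‖FT (F k t) ζ‖ₑ ^ 2 := by
          refine lintegral_mono fun ζ => ?_
          simp only [hw, Set.indicator]
          split_ifs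
          · simp [enorm_ex]
          · simp
      _ ≤ _ := plancherel (iF k t) (mF k t)
      _ ≤ ENNReal.ofReal (8 * Real.pi ^ 3) * (ENNReal.ofReal (((2 : ℝ) ^ k) ^ 2) * n k t) ^ 2 := mul_le_mul_right (h2 k t) _
      _ = _ := by
          rw [← hc2, ENNReal.ofReal_pow hc0]; ring
  · intro k l t s hts
    have e : ∀ ζ, w k t ζ * (starRingEnd ℂ) (w l s ζ) = (bl a).indicator (fun ζ => ex ((t - s) * omega ζ) * (FT (F k t) ζ * (starRingEnd ℂ) (FT (F l s) ζ))) ζ := by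
      intro ζ
      simp only [hw, Set.indicator]
      split_ifs
      · rw [map_mul, conj_ex, sub_mul, sub_eq_add_neg, ex_add]; ring
      · simp
    simp_rw [e]
    rw [integral_indicator (measurableSet_bl a)]
    refine (dispersive ha (sub_ne_zero.2 hts) (iF k t) (iF l s) (mF k t) (mF l s) (qF k t) (qF l s)).trans ?_
    rw [lam_eq ha (abs_pos.2 (sub_ne_zero.2 hts)), ENNReal.ofReal_mul (p := 70 * _) (by positivity), mul_assoc]
    refine mul_le_mul_right ?_ _
    calc _ ≤ (ENNReal.ofReal ((2 : ℝ) ^ k)⁻¹ * n k t) * (ENNReal.ofReal ((2 : ℝ) ^ l)⁻¹ * n l s) := mul_le_mul' (h1 k t) (h1 l s)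
      _ = 1 * (ENNReal.ofReal (((2 : ℝ) ^ k)⁻¹ * ((2 : ℝ) ^ l)⁻¹) * (n k t * n l s)) := by
          rw [ENNReal.ofReal_mul (by positivity)]; ring
      _ ≤ ENNReal.ofReal (c ^ 2) * (ENNReal.ofReal (((2 : ℝ) ^ k)⁻¹ * ((2 : ℝ) ^ l)⁻¹) * (n k t * n l s)) := by
          refine mul_le_mul_left ?_ _
          rw [← ENNReal.ofReal_one]; exact ENNReal.ofReal_le_ofReal hc1
      _ = _ := by rw [ENNReal.ofReal_pow hc0]; ring
  have e2 : ∀ k, ∫ p : ℝ × (ℝ × E2), ev f p.1 p.2 * F k p.1 p.2 ∂((volume : Measure ℝ).prod volume) = ∫ ζ, f ζ * ∫ t, w k t ζ := by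
    intro k
    rw [dual_fubini hf (hFI k)]
    congr 1; ext ζ
    by_cases h : ζ ∈ bl a
    · simp [hw, Set.indicator_of_mem h]
    · simp [hsupp ζ h]
  have hiW : ∀ k, Integrable (fun ζ => f ζ * ∫ t, w k t ζ) := by
    intro k
    -- from L² bounds
    have mW : Measurable (fun ζ => ∫ t, w k t ζ) := by
      have : Measurable (fun p : (ℝ × E2) × ℝ => w k p.2 p.1) := (hmw k).comp measurable_swap
      exact this.stronglyMeasurable.integral_prod_right'.measurable
    have hI : Integrable (fun q : (ℝ × (ℝ × E2)) × (ℝ × E2) =>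
      ex (ph q.1.2 q.2 + q.1.1 * omega q.2) * (Function.uncurry (F k) q.1 * f q.2))
      (((volume : Measure ℝ).prod volume).prod volume) :=
      integrable_ex_mul ((hFI k).mul_prod hf) (by have := measurable_omega; fun_prop)
    have := hI.integral_prod_right
    refine this.congr (Eventually.of_forall fun ζ => ?_)
    simp only
    have hI2 : Integrable (fun p : ℝ × (ℝ × E2) => ex (ph p.2 ζ + p.1 * omega ζ) * Function.uncurry (F k) p)
      ((volume : Measure ℝ).prod volume) := integrable_ex_mul (hFI k) (by fun_prop)
    have e2 : ∀ p : ℝ × (ℝ × E2), ex (ph p.2 ζ + p.1 * omega ζ) * (Function.uncurry (F k) p * f ζ) =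
      f ζ * (ex (ph p.2 ζ + p.1 * omega ζ) * Function.uncurry (F k) p) := fun p => by ring
    simp_rw [e2]
    rw [integral_const_mul, integral_prod _ hI2]
    by_cases h : ζ ∈ bl a
    · congr 2; ext t
      simp only [hw, Set.indicator_of_mem h]
      rw [FT, ← integral_const_mul]
      congr 1; ext z
      rw [ex_add, ph_comm, Function.uncurry]; ring
    · simp [hsupp ζ h]
  simp_rw [e2]
  rw [← integral_finsetSum _ fun k _ => hiW k]
  simp_rw [← Finset.mul_sum]
  refine (enorm_integral_le_lintegral_enorm _).trans ?_
  simp only [enorm_mul]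
  have sq : ∀ x : ℝ≥0∞, (x ^ (1 / 2 : ℝ)) ^ 2 = x := fun x => by
    rw [← ENNReal.rpow_natCast, ← ENNReal.rpow_mul]; norm_num
  refine cs_le (by fun_prop) ?_ (by rw [sq]) ?_
  · refine (Measurable.enorm ?_).aemeasurable
    refine Finset.measurable_sum _ fun k _ => ?_
    have : Measurable (fun p : (ℝ × E2) × ℝ => w k p.2 p.1) := (hmw k).comp measurable_swap
    exact this.stronglyMeasurable.integral_prod_right'.measurable
  · rw [sq]
    refine hkt.trans (le_of_eq ?_)
    simp_rw [mul_pow]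
    simp_rw [fun k => lintegral_const_mul (μ := volume) (ENNReal.ofReal c ^ 2) ((hn k).pow_const 2)]
    rw [← Finset.mul_sum, ← mul_assoc, ← ENNReal.ofReal_pow hc0, hc2, ← ENNReal.ofReal_mul (by
      have := geoS_pos rho_nonneg rho_lt
      have := lamC_pos
      positivity), dualC]
    congr 2; ring


lemma mixed_fatou {q r : ℝ} (hr : 0 < r) {v : ℕ → ℝ → ℝ × E2 → ℂ} {w : ℝ → ℝ × E2 → ℂ}
    (hv : ∀ n, Measurable (Function.uncurry (v n)))
    (hlim : ∀ t z, Tendsto (fun n => v n t z) atTop (nhds (w t z))) {B : ℝ≥0∞}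
    (hB : ∀ n, ∫⁻ t, (∫⁻ z, ‖v n t z‖ₑ ^ q) ^ r ≤ B) :
    ∫⁻ t, (∫⁻ z, ‖w t z‖ₑ ^ q) ^ r ≤ B := by
  have h1 : ∀ t, (∫⁻ z, ‖w t z‖ₑ ^ q) ^ r ≤ liminf (fun n => (∫⁻ z, ‖v n t z‖ₑ ^ q) ^ r) atTop := by
    intro t
    have e1 : ∀ z, ‖w t z‖ₑ ^ q = liminf (fun n => ‖v n t z‖ₑ ^ q) atTop := fun z =>
      (Tendsto.liminf_eq (((ENNReal.continuous_rpow_const).tendsto _).comp (hlim t z).enorm)).symm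
    have e2 : ∫⁻ z, ‖w t z‖ₑ ^ q ≤ liminf (fun n => ∫⁻ z, ‖v n t z‖ₑ ^ q) atTop := by
      simp_rw [e1]
      exact lintegral_liminf_le fun n => ((hv n).of_uncurry_left.enorm.pow_const q)
    calc _ ≤ (liminf (fun n => ∫⁻ z, ‖v n t z‖ₑ ^ q) atTop) ^ r := ENNReal.rpow_le_rpow e2 hr.le
      _ = _ := (ENNReal.monotone_rpow_of_nonneg hr.le).map_liminf_of_continuousAt _
          ENNReal.continuous_rpow_const.continuousAt
  calc _ ≤ ∫⁻ t, liminf (fun n => (∫⁻ z, ‖v n t z‖ₑ ^ q) ^ r) atTop := lintegral_mono h1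
    _ ≤ liminf (fun n => ∫⁻ t, (∫⁻ z, ‖v n t z‖ₑ ^ q) ^ r) atTop := by
      refine lintegral_liminf_le fun n => Measurable.pow_const ?_ r
      have := (hv n).enorm.pow_const q
      exact this.lintegral_prod_right'
    _ ≤ B := by
      refine (liminf_le_liminf (Eventually.of_forall hB)).trans ?_
      simp

def trc (R : ℝ) : Set (ℝ × (ℝ × E2)) := Set.Icc (-R) R ×ˢ Metric.closedBall 0 R
lemma meas_trc (R : ℝ) : MeasurableSet (trc R) := measurableSet_Icc.prod Metric.isClosed_closedBall.measurableSet

def tv (f : ℝ × E2 → ℂ) (R : ℝ) (t : ℝ) (z : ℝ × E2) : ℂ := (trc R).indicator (Function.uncurry (ev f)) (t, z)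

lemma measurable_tv {f : ℝ × E2 → ℂ} (hf : Measurable f) (R : ℝ) : Measurable (Function.uncurry (tv f R)) :=
  (measurable_ev hf).indicator (meas_trc R)

lemma cancel_sq {S D : ℝ≥0∞} (hS : S ≠ ∞) (h : S ^ 2 ≤ D * S) : S ≤ D := by
  by_cases h0 : S = 0
  · simp [h0]
  rw [pow_two] at h
  exact (ENNReal.mul_le_mul_iff_left h0 hS).1 h

section
variable (v : ℝ → ℝ × E2 → ℂ)
def xN (t : ℝ) : ℝ := ((∫⁻ z, ‖v t z‖ₑ ^ (6:ℝ)) ^ (1/6:ℝ)).toReal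
def xE (k : ℤ) : Set (ℝ × (ℝ × E2)) :=
  {p | 0 < xN v p.1 ∧ (2:ℝ) ^ k * xN v p.1 ≤ ‖v p.1 p.2‖ ∧ ‖v p.1 p.2‖ < (2:ℝ) ^ (k+1) * xN v p.1}
def xc (k : ℤ) (t : ℝ) (z : ℝ × E2) : ℝ := (xE v k).indicator (fun p => (‖v p.1 p.2‖ / xN v p.1) ^ 4) (t, z)

variable {v}
lemma measurable_xN (hv : Measurable (Function.uncurry v)) : Measurable (xN v) :=
  (Measurable.pow_const (Measurable.lintegral_prod_right' (hv.enorm.pow_const (6:ℝ))) _).ennreal_toReal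

lemma meas_xE (hv : Measurable (Function.uncurry v)) (k : ℤ) : MeasurableSet (xE v k) := by
  have h1 : Measurable fun p : ℝ × (ℝ × E2) => xN v p.1 := (measurable_xN hv).comp measurable_fst
  have h2 : Measurable fun p : ℝ × (ℝ × E2) => ‖v p.1 p.2‖ := hv.norm
  exact (measurableSet_lt measurable_const h1).inter
    ((measurableSet_le (h1.const_mul _) h2).inter (measurableSet_lt h2 (h1.const_mul _)))

lemma measurable_xc (hv : Measurable (Function.uncurry v)) (k : ℤ) : Measurable (Function.uncurry (xc v k)) := by
  have h1 : Measurable fun p : ℝ × (ℝ × E2) => xN v p.1 := (measurable_xN hv).comp measurable_fst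
  have h2 : Measurable fun p : ℝ × (ℝ × E2) => ‖v p.1 p.2‖ := hv.norm
  exact ((h2.div h1).pow_const 4).indicator (meas_xE hv k)

lemma xc_nonneg (k t z) : 0 ≤ xc v k t z := by
  unfold xc
  exact Set.indicator_nonneg (fun p _ => by positivity) _

lemma xc_le (k : ℤ) (t z) : xc v k t z ≤ 16 * ((2:ℝ) ^ k) ^ 4 := by
  unfold xc
  refine Set.indicator_le' (g := fun _ => 16 * ((2:ℝ) ^ k) ^ 4) (fun p hp => ?_) (fun p _ => by positivity) (t, z)
  obtain ⟨h0, h1, h2⟩ := hp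
  have : ‖v p.1 p.2‖ / xN v p.1 ≤ 2 * 2 ^ k := by
    rw [div_le_iff₀ h0]; rw [zpow_add_one₀ (by norm_num)] at h2; nlinarith
  calc _ ≤ (2 * (2:ℝ) ^ k) ^ 4 := by gcongr
    _ = _ := by ring

lemma xN_pow {t : ℝ} (hX : ∫⁻ z, ‖v t z‖ₑ ^ (6:ℝ) ≠ ∞) (m : ℕ) :
    ENNReal.ofReal (xN v t) ^ m = (∫⁻ z, ‖v t z‖ₑ ^ (6:ℝ)) ^ ((m:ℝ)/6) := by
  rw [xN, ENNReal.ofReal_toReal (ENNReal.rpow_ne_top_of_nonneg (by norm_num) hX),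
    ← ENNReal.rpow_natCast, ← ENNReal.rpow_mul]
  congr 1; ring

lemma xE_vol {t : ℝ} (hX : ∫⁻ z, ‖v t z‖ₑ ^ (6:ℝ) ≠ ∞) (hv : Measurable (Function.uncurry v)) (k : ℤ) :
    ∫⁻ z, (((xE v k).indicator (fun _ => (1:ℝ≥0∞)) (t, z))) ^ 2 ≤ (ENNReal.ofReal (((2:ℝ) ^ k) ^ 3)⁻¹) ^ 2 := by
  by_cases h0 : 0 < xN v t
  swap
  · have : ∀ z, (xE v k).indicator (fun _ => (1:ℝ≥0∞)) (t, z) = 0 := fun z =>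
      Set.indicator_of_notMem (fun h => h0 h.1) _
    simp [this]
  have hmm : Measurable fun z => (xE v k).indicator (fun _ => (1:ℝ≥0∞)) (t, z) :=
    (measurable_const.indicator (meas_xE hv k)).comp measurable_prodMk_left
  have e6 : ENNReal.ofReal (xN v t) ^ 6 = ∫⁻ z, ‖v t z‖ₑ ^ (6:ℝ) := by
    rw [xN_pow hX 6, show ((6:ℕ):ℝ)/6 = 1 by norm_num, ENNReal.rpow_one]
  have key : ∀ z, ENNReal.ofReal (((2:ℝ) ^ k * xN v t) ^ 6) * ((xE v k).indicator (fun _ => (1:ℝ≥0∞)) (t, z)) ^ 2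
      ≤ ‖v t z‖ₑ ^ (6:ℝ) := by
    intro z
    by_cases hz : (t, z) ∈ xE v k
    · rw [Set.indicator_of_mem hz, one_pow, mul_one, ← ofReal_norm,
        ENNReal.ofReal_rpow_of_nonneg (norm_nonneg _) (by norm_num)]
      refine ENNReal.ofReal_le_ofReal ?_
      have := hz.2.1
      simp only at this
      calc _ ≤ ‖v t z‖ ^ 6 := by gcongr
        _ = _ := by rw [← Real.rpow_natCast]; norm_num
    · rw [Set.indicator_of_notMem hz]; simp
  have h2 := lintegral_mono (μ := volume) key
  rw [lintegral_const_mul _ (hmm.pow_const 2)] at h2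
  simp only [mul_pow, ENNReal.ofReal_mul (show (0:ℝ) ≤ ((2:ℝ)^k)^6 by positivity)] at h2
  rw [ENNReal.ofReal_pow h0.le, e6] at h2
  rw [mul_right_comm] at h2
  have hX0 : (∫⁻ z, ‖v t z‖ₑ ^ (6:ℝ)) ≠ 0 := by
    intro h; rw [h] at e6
    have : ENNReal.ofReal (xN v t) = 0 := by simpa using e6
    rw [ENNReal.ofReal_eq_zero] at this; linarith
  have h3 : ENNReal.ofReal (((2:ℝ) ^ k) ^ 6) * ∫⁻ z, ((xE v k).indicator (fun _ => (1:ℝ≥0∞)) (t, z)) ^ 2 ≤ 1 := by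
    refine (ENNReal.mul_le_mul_iff_left hX0 hX).1 ?_
    rw [one_mul]; exact_mod_cast h2
  rw [mul_comm, ← ENNReal.le_div_iff_mul_le (by left; simp; positivity) (by simp)] at h3
  refine h3.trans (le_of_eq ?_)
  rw [one_div, ← ENNReal.ofReal_inv_of_pos (by positivity), ← ENNReal.ofReal_pow (by positivity)]
  congr 1
  rw [← inv_pow]; ring

end


lemma trunc_bound {a R : ℝ} (ha : 0 < a) {f : ℝ × E2 → ℂ} (hf : Integrable f) (hfm : Measurable f)
    (hsupp : ∀ ζ, ζ ∉ bl a → f ζ = 0) :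
    ∫⁻ t, (∫⁻ z, ‖tv f R t z‖ₑ ^ (6:ℝ)) ^ (1/3:ℝ) ≤
      16 * ENNReal.ofReal (dualC * a ^ (1/3:ℝ)) * ∫⁻ ζ, ‖f ζ‖ₑ ^ 2 := by
  set v := tv f R with hvdef
  have hv : Measurable (Function.uncurry v) := measurable_tv hfm R
  set M := ∫ ζ, ‖f ζ‖ with hM
  have hM0 : 0 ≤ M := integral_nonneg fun _ => norm_nonneg _
  have hvM : ∀ t z, ‖v t z‖ ≤ M := by
    intro t z
    simp only [hvdef, tv, Set.indicator]
    split_ifs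
    · exact norm_ev_le _ _
    · simpa using hM0
  have hv0 : ∀ t z, (t, z) ∉ trc R → v t z = 0 := fun t z h => Set.indicator_of_notMem h _
  have hve : ∀ t z, ev f t z * (starRingEnd ℂ) (v t z) = ((‖v t z‖ ^ 2 : ℝ) : ℂ) := by
    intro t z
    by_cases h : (t, z) ∈ trc R
    · have : v t z = ev f t z := Set.indicator_of_mem h _
      rw [this, Complex.mul_conj, Complex.normSq_eq_norm_sq]
    · rw [hv0 t z h]; simp
  have hVt : (volume : Measure (ℝ × E2)) (Metric.closedBall 0 R) < ∞ := measure_closedBall_lt_top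
  have hsm : ∀ (c : ℝ≥0∞) (g : ℝ → ℝ × E2 → ℝ≥0∞), (∀ t z, g t z ≤ c) → (∀ t z, (t, z) ∉ trc R → g t z = 0) →
      ∀ t, ∫⁻ z, g t z ≤ (Set.Icc (-R) R).indicator
        (fun _ => c * (volume : Measure (ℝ × E2)) (Metric.closedBall 0 R)) t := by
    intro c g hg hg0 t
    by_cases ht : t ∈ Set.Icc (-R) R
    · rw [Set.indicator_of_mem ht]
      calc ∫⁻ z, g t z ≤ ∫⁻ z, (Metric.closedBall (0:ℝ × E2) R).indicator (fun _ => c) z := by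
            refine lintegral_mono fun z => ?_
            by_cases hz : z ∈ Metric.closedBall (0:ℝ × E2) R
            · rw [Set.indicator_of_mem hz]; exact hg t z
            · rw [hg0 t z (fun h => hz h.2)]; exact zero_le
        _ = _ := by rw [lintegral_indicator Metric.isClosed_closedBall.measurableSet]; simp
    · rw [Set.indicator_of_notMem ht]
      simp [fun z => hg0 t z (fun h => ht h.1)]
  have hX : ∀ t, ∫⁻ z, ‖v t z‖ₑ ^ (6:ℝ) ≠ ∞ := by
    intro t
    have := hsm (ENNReal.ofReal M ^ (6:ℝ)) (fun t z => ‖v t z‖ₑ ^ (6:ℝ))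
      (fun t z => ENNReal.rpow_le_rpow (by rw [← ofReal_norm]; exact ENNReal.ofReal_le_ofReal (hvM t z)) (by norm_num))
      (fun t z h => by rw [hv0 t z h]; simp) t
    refine ne_top_of_le_ne_top ?_ this
    simp only [Set.indicator]
    split_ifs
    · exact ENNReal.mul_ne_top (ENNReal.rpow_ne_top_of_nonneg (by norm_num) (by simp)) hVt.ne
    · simp
  set F : ℤ → ℝ → ℝ × E2 → ℂ := fun k t z => (xc v k t z : ℂ) * (starRingEnd ℂ) (v t z) with hF
  set s : ℤ → ℝ → ℝ × E2 → ℝ := fun k t z => xc v k t z * ‖v t z‖ ^ 2 with hs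
  have hs0 : ∀ k t z, 0 ≤ s k t z := fun k t z => mul_nonneg (xc_nonneg k t z) (by positivity)
  have hFm : ∀ k, Measurable (Function.uncurry (F k)) := fun k =>
    (Complex.measurable_ofReal.comp (measurable_xc hv k)).mul (Complex.continuous_conj.measurable.comp hv)
  have hsM : ∀ k, Measurable (Function.uncurry (s k)) := fun k => (measurable_xc hv k).mul (hv.norm.pow_const 2)
  have hFn : ∀ k t z, ‖F k t z‖ = xc v k t z * ‖v t z‖ := by
    intro k t z
    simp only [hF, norm_mul, Complex.norm_real, RCLike.norm_conj, Real.norm_of_nonneg (xc_nonneg k t z)]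
  have hF2 : ∀ k t z, ‖F k t z‖ₑ ^ 2 ≤ ENNReal.ofReal (16 * ((2:ℝ)^k)^4) * ENNReal.ofReal (s k t z) := by
    intro k t z
    rw [← ofReal_norm, ← ENNReal.ofReal_pow (norm_nonneg _), ← ENNReal.ofReal_mul (by positivity), hFn]
    refine ENNReal.ofReal_le_ofReal ?_
    calc _ = xc v k t z * s k t z := by simp only [hs]; ring
      _ ≤ _ := mul_le_mul_of_nonneg_right (xc_le k t z) (hs0 k t z)
  have hsb : ∀ k t z, ENNReal.ofReal (s k t z) ≤ ENNReal.ofReal (16 * ((2:ℝ)^k)^4 * M ^ 2) := by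
    intro k t z
    refine ENNReal.ofReal_le_ofReal ?_
    simp only [hs]
    exact mul_le_mul (xc_le k t z) (by gcongr; exact hvM t z) (by positivity) (by positivity)
  have hsz : ∀ k t z, (t, z) ∉ trc R → ENNReal.ofReal (s k t z) = 0 := by
    intro k t z h
    simp [hs, hv0 t z h]
  have hsI := fun k => hsm _ (fun t z => ENNReal.ofReal (s k t z)) (hsb k) (hsz k)
  set n : ℤ → ℝ → ℝ≥0∞ := fun k t => (ENNReal.ofReal (((2:ℝ)^k)^4)⁻¹ * ∫⁻ z, ‖F k t z‖ₑ ^ 2) ^ (1/2:ℝ) with hn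
  have hn2 : ∀ k t, n k t ^ 2 = ENNReal.ofReal (((2:ℝ)^k)^4)⁻¹ * ∫⁻ z, ‖F k t z‖ₑ ^ 2 := by
    intro k t
    simp only [hn]
    rw [← ENNReal.rpow_natCast, ← ENNReal.rpow_mul]; norm_num
  have hn16 : ∀ k t, n k t ^ 2 ≤ 16 * ∫⁻ z, ENNReal.ofReal (s k t z) := by
    intro k t
    rw [hn2]
    calc _ ≤ ENNReal.ofReal (((2:ℝ)^k)^4)⁻¹ * ∫⁻ z, ENNReal.ofReal (16 * ((2:ℝ)^k)^4) * ENNReal.ofReal (s k t z) :=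
          mul_le_mul_right (lintegral_mono (hF2 k t)) _
      _ = _ := by
        rw [lintegral_const_mul _ ((hsM k).of_uncurry_left.ennreal_ofReal), ← mul_assoc, ← ENNReal.ofReal_mul (by positivity)]
        congr 1
        rw [show (((2:ℝ)^k)^4)⁻¹ * (16 * ((2:ℝ)^k)^4) = 16 by field_simp]; norm_num
  have hS : ∀ k, ∫⁻ t, ∫⁻ z, ENNReal.ofReal (s k t z) ≠ ∞ := by
    intro k
    refine ne_top_of_le_ne_top ?_ (lintegral_mono (hsI k))
    rw [lintegral_indicator measurableSet_Icc]
    simp only [lintegral_const]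
    refine ENNReal.mul_ne_top (ENNReal.mul_ne_top (by simp) hVt.ne) (by simp)
  have ntop : ∀ k t, n k t ≠ ∞ := by
    intro k t h
    have h1 := hn16 k t
    rw [h] at h1
    have h2 := hsI k t
    have : (∫⁻ z, ENNReal.ofReal (s k t z)) ≠ ∞ := by
      refine ne_top_of_le_ne_top ?_ h2
      simp only [Set.indicator]
      split_ifs
      · exact ENNReal.mul_ne_top (by simp) hVt.ne
      · simp
    have h3 : (16:ℝ≥0∞) * ∫⁻ z, ENNReal.ofReal (s k t z) ≠ ∞ := ENNReal.mul_ne_top (by norm_num) this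
    simp at h1
    exact h3 h1
  have nle : ∀ k t, n k t ≤ (Set.Icc (-R) R).indicator (fun _ => (1:ℝ≥0∞)) t + 16 * ∫⁻ z, ENNReal.ofReal (s k t z) := by
    intro k t
    by_cases ht : t ∈ Set.Icc (-R) R
    · rw [Set.indicator_of_mem ht]
      rcases le_total (n k t) 1 with h | h
      · exact h.trans le_self_add
      · refine le_trans ?_ ((hn16 k t).trans le_add_self)
        rw [pow_two]; exact le_mul_of_one_le_left' h
    · have h1 := hn16 k t
      have h2 := hsI k t
      rw [Set.indicator_of_notMem ht] at h2
      rw [le_antisymm h2 zero_le] at h1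
      have : n k t = 0 := by simpa using h1
      rw [this]; exact zero_le
  have i1 : ∀ k, ∫⁻ t, n k t ≠ ∞ := by
    intro k
    refine ne_top_of_le_ne_top ?_ (lintegral_mono (nle k))
    rw [lintegral_add_left (measurable_const.indicator measurableSet_Icc), lintegral_indicator measurableSet_Icc,
      lintegral_const_mul' _ _ (by norm_num)]
    refine ENNReal.add_ne_top.2 ⟨by simp, ENNReal.mul_ne_top (by norm_num) (hS k)⟩
  have h2 : ∀ k t, ∫⁻ z, ‖F k t z‖ₑ ^ 2 ≤ (ENNReal.ofReal (((2:ℝ)^k)^2) * n k t) ^ 2 := by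
    intro k t
    rw [mul_pow, hn2, ← ENNReal.ofReal_pow (by positivity), ← mul_assoc, ← ENNReal.ofReal_mul (by positivity)]
    rw [show (((2:ℝ)^k)^2)^2 * (((2:ℝ)^k)^4)⁻¹ = 1 by field_simp]; simp
  have h1 : ∀ k t, ∫⁻ z, ‖F k t z‖ₑ ≤ ENNReal.ofReal ((2:ℝ)^k)⁻¹ * n k t := by
    intro k t
    have hmm : Measurable fun z => (xE v k).indicator (fun _ => (1:ℝ≥0∞)) (t, z) :=
      (measurable_const.indicator (meas_xE hv k)).comp measurable_prodMk_left
    have := cs_le (hFm k).of_uncurry_left.enorm.aemeasurable hmm.aemeasurable (h2 k t) (xE_vol (hX t) hv k)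
    calc ∫⁻ z, ‖F k t z‖ₑ = ∫⁻ z, ‖F k t z‖ₑ * (xE v k).indicator (fun _ => (1:ℝ≥0∞)) (t, z) := by
          congr 1; ext z
          by_cases hz : (t, z) ∈ xE v k
          · rw [Set.indicator_of_mem hz, mul_one]
          · rw [Set.indicator_of_notMem hz]; simp [hF, xc, Set.indicator_of_notMem hz]
      _ ≤ _ := this
      _ = _ := by
        rw [mul_right_comm, ← ENNReal.ofReal_mul (by positivity)]
        congr 2; field_simp
  have hnm : ∀ k, Measurable (n k) := fun k =>
    (Measurable.const_mul (Measurable.lintegral_prod_right' ((hFm k).enorm.pow_const 2)) _).pow_const _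
  have hSm : ∀ k, Measurable fun t => ∫⁻ z, ENNReal.ofReal (s k t z) := fun k =>
    Measurable.lintegral_prod_right' (hsM k).ennreal_ofReal
  have main : ∀ K : Finset ℤ, ∑ k ∈ K, ∫⁻ t, ∫⁻ z, ENNReal.ofReal (s k t z) ≤
      16 * ENNReal.ofReal (dualC * a ^ (1/3:ℝ)) * ∫⁻ ζ, ‖f ζ‖ₑ ^ 2 := by
    intro K
    have hd := dual_bound ha hf hfm hsupp K hFm hnm i1 ntop h1 h2
    have hprod : ∀ k, ∫⁻ p : ℝ × (ℝ × E2), ENNReal.ofReal (s k p.1 p.2) ∂((volume : Measure ℝ).prod volume) =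
        ∫⁻ t, ∫⁻ z, ENNReal.ofReal (s k t z) := fun k =>
      lintegral_prod _ ((hsM k).ennreal_ofReal.aemeasurable)
    have e1 : ∀ k, ∫ p : ℝ × (ℝ × E2), ev f p.1 p.2 * F k p.1 p.2 ∂((volume : Measure ℝ).prod volume) =
        (((∫⁻ t, ∫⁻ z, ENNReal.ofReal (s k t z)).toReal : ℝ) : ℂ) := by
      intro k
      have : ∀ p : ℝ × (ℝ × E2), ev f p.1 p.2 * F k p.1 p.2 = ((s k p.1 p.2 : ℝ) : ℂ) := by
        intro p
        simp only [hF, hs]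
        rw [mul_left_comm, hve]; push_cast; rfl
      simp_rw [this]
      rw [integral_complex_ofReal, integral_eq_lintegral_of_nonneg_ae (Eventually.of_forall fun p => hs0 k _ _)
        (hsM k).aestronglyMeasurable, hprod]
    simp_rw [e1] at hd
    rw [← Complex.ofReal_sum, ← ofReal_norm, Complex.norm_real, Real.norm_of_nonneg
      (Finset.sum_nonneg fun _ _ => ENNReal.toReal_nonneg), ENNReal.ofReal_sum_of_nonneg (fun _ _ => ENNReal.toReal_nonneg)] at hd
    simp_rw [fun k => ENNReal.ofReal_toReal (hS k)] at hd
    set S := ∑ k ∈ K, ∫⁻ t, ∫⁻ z, ENNReal.ofReal (s k t z)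
    have hn16' : ∑ k ∈ K, ∫⁻ t, n k t ^ 2 ≤ 16 * S := by
      rw [Finset.mul_sum]
      refine Finset.sum_le_sum fun k _ => ?_
      rw [← lintegral_const_mul' _ _ (by norm_num)]
      exact lintegral_mono (hn16 k)
    refine cancel_sq (ENNReal.sum_ne_top.2 fun k _ => hS k) ?_
    have := pow_le_pow_left' hd 2
    rw [mul_pow] at this
    have sq : ∀ x : ℝ≥0∞, (x ^ (1/2:ℝ)) ^ 2 = x := by
      intro x; rw [← ENNReal.rpow_natCast, ← ENNReal.rpow_mul]; norm_num
    rw [sq, sq] at this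
    refine this.trans ((mul_le_mul_right (mul_le_mul_right hn16' _) _).trans (le_of_eq ?_))
    ring
  have hpt : ∀ t, (∫⁻ z, ‖v t z‖ₑ ^ (6:ℝ)) ^ (1/3:ℝ) ≤ ∑' k, ∫⁻ z, ENNReal.ofReal (s k t z) := by
    intro t
    rw [← lintegral_tsum fun k => ((hsM k).of_uncurry_left.ennreal_ofReal.aemeasurable)]
    have e2 : ENNReal.ofReal (xN v t) ^ 2 = (∫⁻ z, ‖v t z‖ₑ ^ (6:ℝ)) ^ (1/3:ℝ) := by
      rw [xN_pow (hX t) 2]; norm_num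
    have e6 : ENNReal.ofReal (xN v t) ^ 6 = ∫⁻ z, ‖v t z‖ₑ ^ (6:ℝ) := by
      rw [xN_pow (hX t) 6, show ((6:ℕ):ℝ)/6 = 1 by norm_num, ENNReal.rpow_one]
    rw [← e2]
    rcases (show 0 ≤ xN v t by unfold xN; positivity).eq_or_lt with h0 | h0
    · rw [← h0]; simp
    have : ENNReal.ofReal (xN v t) ^ 2 = ENNReal.ofReal ((xN v t)^4)⁻¹ * ∫⁻ z, ‖v t z‖ₑ ^ (6:ℝ) := by
      rw [← e6, ← ENNReal.ofReal_pow h0.le, ← ENNReal.ofReal_pow h0.le, ← ENNReal.ofReal_mul (by positivity)]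
      congr 1; field_simp
    rw [this, ← lintegral_const_mul' _ _ (by simp)]
    refine lintegral_mono fun z => ?_
    rcases (norm_nonneg (v t z)).eq_or_lt with hz | hz
    · rw [← ofReal_norm, ← hz]; simp
    obtain ⟨k, hk1, hk2⟩ := exists_mem_Ico_zpow (div_pos hz h0) (one_lt_two (α := ℝ))
    rw [le_div_iff₀ h0] at hk1
    rw [div_lt_iff₀ h0] at hk2
    have hmem : (t, z) ∈ xE v k := ⟨h0, hk1, hk2⟩
    refine le_trans (le_of_eq ?_) (ENNReal.le_tsum k)
    simp only [hs, xc]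
    rw [Set.indicator_of_mem hmem, ← ofReal_norm, ENNReal.ofReal_rpow_of_nonneg hz.le (by norm_num),
      ← ENNReal.ofReal_mul (by positivity)]
    congr 1
    rw [show ‖v t z‖ ^ (6:ℝ) = ‖v t z‖ ^ 6 by rw [← Real.rpow_natCast]; norm_num]
    simp only []
    field_simp
  calc _ ≤ ∫⁻ t, ∑' k, ∫⁻ z, ENNReal.ofReal (s k t z) := lintegral_mono hpt
    _ = ∑' k, ∫⁻ t, ∫⁻ z, ENNReal.ofReal (s k t z) := lintegral_tsum fun k => (hSm k).aemeasurable
    _ ≤ _ := by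
      rw [ENNReal.tsum_eq_iSup_sum]
      exact iSup_le main

lemma block_endpoint {a : ℝ} (ha : 0 < a) {f : ℝ × E2 → ℂ} (hf : Integrable f) (hfm : Measurable f)
    (hsupp : ∀ ζ, ζ ∉ bl a → f ζ = 0) :
    ∫⁻ t, (∫⁻ z, ‖ev f t z‖ₑ ^ (6:ℝ)) ^ (1/3:ℝ) ≤
      16 * ENNReal.ofReal (dualC * a ^ (1/3:ℝ)) * ∫⁻ ζ, ‖f ζ‖ₑ ^ 2 := by
  refine mixed_fatou (by norm_num) (v := fun n => tv f (n:ℝ)) (fun n => measurable_tv hfm _) ?_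
    (fun n => trunc_bound ha hf hfm hsupp)
  intro t z
  refine tendsto_const_nhds.congr' ?_
  filter_upwards [eventually_ge_atTop ⌈max |t| ‖z‖⌉₊] with n hn
  have : max |t| ‖z‖ ≤ n := Nat.ceil_le.1 hn
  have hm : (t, z) ∈ trc n := ⟨abs_le.1 ((le_max_left _ _).trans this), by simpa using (le_max_right _ _).trans this⟩
  rw [tv, Set.indicator_of_mem hm]; rfl


def Low (c : ℝ) (P : ℝ × E2 → ℂ) : Prop :=
  ∃ (Ω : Type) (_ : MeasurableSpace Ω) (μ : Measure Ω) (_ : SFinite μ) (h : Ω → ℂ) (X : Ω → ℝ × E2),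
    Measurable X ∧ Integrable h μ ∧ (∀ w, h w ≠ 0 → c ≤ (X w).1) ∧
    ∀ z, P z = ∫ w, ex (ph z (X w)) * h w ∂μ

lemma Low.mul {c d : ℝ} {P Q : ℝ × E2 → ℂ} (hP : Low c P) (hQ : Low d Q) : Low (c + d) (fun z => P z * Q z) := by
  obtain ⟨Ω, _, μ, _, h, X, hX, hi, hs, he⟩ := hP
  obtain ⟨Ω', _, μ', _, h', X', hX', hi', hs', he'⟩ := hQ
  refine ⟨Ω × Ω', inferInstance, μ.prod μ', inferInstance, fun w => h w.1 * h' w.2, fun w => X w.1 + X' w.2,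
    (hX.comp measurable_fst).add (hX'.comp measurable_snd), hi.mul_prod hi', ?_, ?_⟩
  · intro w hw
    exact add_le_add (hs _ (left_ne_zero_of_mul hw)) (hs' _ (right_ne_zero_of_mul hw))
  · intro z
    beta_reduce
    rw [he, he', ← integral_prod_mul]
    congr 1; ext w
    rw [ph_add_right, ex_add]; ring

lemma low_FT {c : ℝ} {g : ℝ × E2 → ℂ} (hg : Integrable g) (hc : ∀ ζ, g ζ ≠ 0 → c ≤ ζ.1) : Low c (FT g) :=
  ⟨ℝ × E2, inferInstance, volume, inferInstance, g, id, measurable_id, hg, hc, fun _ => rfl⟩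

lemma low_conj_FT {c : ℝ} {g : ℝ × E2 → ℂ} (hg : Integrable g) (hc : ∀ ζ, g ζ ≠ 0 → ζ.1 ≤ c) :
    Low (-c) (fun z => (starRingEnd ℂ) (FT g z)) :=
  ⟨ℝ × E2, inferInstance, volume, inferInstance, fun ζ => (starRingEnd ℂ) (g ζ), fun ζ => -ζ, measurable_neg,
    (LinearIsometryEquiv.integrable_comp_iff (Complex.conjLIE)).2 hg,
    fun ζ h => neg_le_neg (hc ζ (by simpa using h)), fun z => by
      unfold FT
      beta_reduce
      rw [← integral_conj]
      congr 1; ext ζ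
      rw [map_mul, conj_ex, ph_neg_right]⟩

lemma gh_small {c ε : ℝ} (hc : 0 < c) (hε : 0 < ε) (hε1 : ε ≤ 1) {ζ : ℝ × E2} (hζ : c ≤ ζ.1) :
    gh ε ζ ≤ 384 * Real.pi ^ 2 / c ^ 6 * ε := by
  have hpi := Real.pi_gt_three
  have h1 : 1 ≤ Real.pi / ε := by rw [le_div_iff₀ hε]; linarith
  have h2 : Real.sqrt (Real.pi / ε) ≤ Real.pi / ε := by
    rw [Real.sqrt_le_left (by positivity)]; nlinarith
  have h3 : gs (1 / (4 * ε)) ζ ≤ 6 * (4 * ε / c ^ 2) ^ 3 := by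
    have e0 : gs (1 / (4 * ε)) ζ ≤ Real.exp (-(c ^ 2 / (4 * ε))) := by
      unfold gs
      refine Real.exp_le_exp.2 ?_
      rw [neg_mul, neg_le_neg_iff, one_div_mul_eq_div]
      gcongr
      nlinarith [sq_nonneg ‖ζ.2‖]
    refine e0.trans ?_
    have e1 := Real.pow_div_factorial_le_exp (x := c ^ 2 / (4 * ε)) (by positivity) 3
    rw [Real.exp_neg]
    refine (inv_anti₀ (by positivity) e1).trans (le_of_eq ?_)
    simp [Nat.factorial]
    field_simp
  calc gh ε ζ ≤ (Real.pi / ε * (Real.pi / ε)) * (6 * (4 * ε / c ^ 2) ^ 3) := by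
        unfold gh
        exact mul_le_mul (mul_le_mul_of_nonneg_right h2 (by positivity)) h3 (gs_pos _ _).le (by positivity)
    _ = _ := by field_simp; norm_num

lemma Low.zero {c : ℝ} (hc : 0 < c) {P : ℝ × E2 → ℂ} (hP : Low c P) (hi : Integrable P) : ∫ z, P z = 0 := by
  obtain ⟨Ω, _, μ, _, h, X, hX, hh, hs, he⟩ := hP
  set e : ℕ → ℝ := fun n => 1 / ((n:ℝ) + 1) with hedef
  have he0 : ∀ n, 0 < e n := fun n => by simp only [hedef]; positivity
  have he1 : ∀ n, e n ≤ 1 := fun n => by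
    simp only [hedef]; rw [div_le_one (by positivity)]; have : (0:ℝ) ≤ n := n.cast_nonneg; linarith
  have het : Tendsto e atTop (nhds 0) := tendsto_one_div_add_atTop_nhds_zero_nat
  have hl : Tendsto (fun n => ∫ z, P z * (gs (e n) z : ℂ)) atTop (nhds (∫ z, P z)) := by
    refine tendsto_integral_of_dominated_convergence (fun z => ‖P z‖) ?_ hi.norm ?_ ?_
    · intro n
      exact hi.aestronglyMeasurable.mul (Complex.continuous_ofReal.comp (continuous_gs _)).aestronglyMeasurable
    · intro n
      refine Eventually.of_forall fun z => ?_
      rw [norm_mul, Complex.norm_real, Real.norm_of_nonneg (gs_pos _ _).le]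
      refine mul_le_of_le_one_right (norm_nonneg _) ?_
      unfold gs
      rw [Real.exp_le_one_iff]
      have := he0 n
      nlinarith [sq_nonneg ‖z.2‖, sq_nonneg z.1, mul_nonneg this.le (add_nonneg (sq_nonneg z.1) (sq_nonneg ‖z.2‖))]
    · refine Eventually.of_forall fun z => ?_
      have h1 : Tendsto (fun n => gs (e n) z) atTop (nhds (gs 0 z)) := by
        have : Continuous fun ε => gs ε z := by unfold gs; fun_prop
        exact (this.tendsto 0).comp het
      have h2 := (Complex.continuous_ofReal.tendsto _).comp h1
      have h3 := h2.const_mul (P z)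
      simpa [gs] using h3
  have hid : ∀ n, ∫ z, P z * (gs (e n) z : ℂ) = ∫ w, h w * (gh (e n) (X w) : ℂ) ∂μ := by
    intro n
    have hI : Integrable (fun q : (ℝ × E2) × Ω => ex (ph q.1 (X q.2)) * ((gs (e n) q.1 : ℂ) * h q.2))
        ((volume : Measure (ℝ × E2)).prod μ) := by
      refine integrable_ex_mul ((integrable_gs (he0 n)).ofReal.mul_prod hh) ?_
      have : Measurable fun q : (ℝ × E2) × (ℝ × E2) => ph q.1 q.2 := by fun_prop
      exact this.comp (measurable_fst.prodMk (hX.comp measurable_snd))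
    have e1 : ∀ z, P z * (gs (e n) z : ℂ) = ∫ w, ex (ph z (X w)) * ((gs (e n) z : ℂ) * h w) ∂μ := by
      intro z
      rw [he, ← integral_mul_const]
      congr 1; ext w; ring
    simp_rw [e1]
    rw [integral_integral_swap hI]
    congr 1; ext w
    rw [← gs_ft (he0 n), ← integral_const_mul]
    congr 1; ext z; ring
  have hb : ∀ n, ‖∫ z, P z * (gs (e n) z : ℂ)‖ ≤ (∫ w, ‖h w‖ ∂μ) * (384 * Real.pi ^ 2 / c ^ 6) * e n := by
    intro n
    rw [hid, mul_assoc, ← integral_mul_const]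
    refine norm_integral_le_of_norm_le (hh.norm.mul_const _) (Eventually.of_forall fun w => ?_)
    rw [norm_mul, Complex.norm_real, Real.norm_of_nonneg (gh_nonneg (he0 n) _)]
    by_cases hw : h w = 0
    · simp [hw]
    · exact mul_le_mul_of_nonneg_left (gh_small hc (he0 n) (he1 n) (hs w hw)) (norm_nonneg _)
  have h0 := squeeze_zero_norm hb (by simpa using het.const_mul ((∫ w, ‖h w‖ ∂μ) * (384 * Real.pi ^ 2 / c ^ 6)))
  exact tendsto_nhds_unique hl h0

lemma six_expand (U u : ℂ) : ‖U + u‖ ^ 6 ≤ ‖U‖ ^ 6 +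
    (6 * ((starRingEnd ℂ) U * U * ((starRingEnd ℂ) U * U) * ((starRingEnd ℂ) U * u)).re + 59 * (‖U‖ ^ 4 * ‖u‖ ^ 2 + ‖u‖ ^ 6)) := by
  set r := 2 * ((starRingEnd ℂ) U * u).re with hr
  have e1 : ‖U + u‖ ^ 2 = ‖U‖ ^ 2 + r + ‖u‖ ^ 2 := by
    rw [← Complex.normSq_eq_norm_sq, Complex.normSq_add, Complex.normSq_eq_norm_sq, Complex.normSq_eq_norm_sq, hr]
    simp; ring
  have e2 : ((starRingEnd ℂ) U * U * ((starRingEnd ℂ) U * U) * ((starRingEnd ℂ) U * u)).re = ‖U‖ ^ 4 * (r / 2) := by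
    have : (starRingEnd ℂ) U * U = ((‖U‖ ^ 2 : ℝ) : ℂ) := by
      rw [mul_comm, Complex.mul_conj, Complex.normSq_eq_norm_sq]
    rw [this, ← Complex.ofReal_mul, Complex.re_ofReal_mul, hr]; ring
  have hr2 : |r| ≤ 2 * (‖U‖ * ‖u‖) := by
    rw [hr, abs_mul, abs_two]
    have := Complex.abs_re_le_norm ((starRingEnd ℂ) U * u)
    rw [norm_mul, RCLike.norm_conj] at this
    linarith
  rw [e2, show ‖U + u‖ ^ 6 = (‖U + u‖ ^ 2) ^ 3 by ring, e1]
  have hU := norm_nonneg U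
  have hu := norm_nonneg u
  generalize ‖U‖ = A at *
  generalize ‖u‖ = B at *
  clear_value r
  have h1 : r ^ 2 ≤ 4 * (A ^ 2 * B ^ 2) := by
    rw [← sq_abs]; nlinarith [abs_nonneg r, mul_nonneg hU hu]
  have h2 : |r| ≤ A ^ 2 + B ^ 2 := by nlinarith [sq_nonneg (A - B)]
  have h3 : (r + B ^ 2) ^ 2 ≤ 8 * (A ^ 2 * B ^ 2) + 2 * B ^ 4 := by nlinarith [sq_nonneg (r - B ^ 2)]
  have h4 : r + B ^ 2 ≤ A ^ 2 + 2 * B ^ 2 := by linarith [le_abs_self r]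
  have h5 : (r + B ^ 2) ^ 3 ≤ (A ^ 2 + 2 * B ^ 2) * (8 * (A ^ 2 * B ^ 2) + 2 * B ^ 4) := by
    calc (r + B ^ 2) ^ 3 = (r + B ^ 2) * (r + B ^ 2) ^ 2 := by ring
      _ ≤ (A ^ 2 + 2 * B ^ 2) * (r + B ^ 2) ^ 2 := mul_le_mul_of_nonneg_right h4 (sq_nonneg _)
      _ ≤ _ := mul_le_mul_of_nonneg_left h3 (by positivity)
  have h6 : A ^ 2 * (r + B ^ 2) ^ 2 ≤ A ^ 2 * (8 * (A ^ 2 * B ^ 2) + 2 * B ^ 4) :=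
    mul_le_mul_of_nonneg_left h3 (by positivity)
  have h7 : 0 ≤ B ^ 2 * (A ^ 2 - B ^ 2) ^ 2 := by positivity
  have h8 : 0 ≤ A ^ 4 * B ^ 2 := by positivity
  have h9 : 0 ≤ B ^ 6 := by positivity
  nlinarith


def J6 (g : ℝ × E2 → ℂ) : ℝ≥0∞ := ∫⁻ z, ‖FT g z‖ₑ ^ (6:ℝ)

structure Nice (g : ℝ × E2 → ℂ) : Prop where
  int : Integrable g
  meas : Measurable g
  two : ∫⁻ z, ‖g z‖ₑ ^ 2 ≠ ∞

lemma FT_add {f g : ℝ × E2 → ℂ} (hf : Integrable f) (hg : Integrable g) (z) :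
    FT (fun ζ => f ζ + g ζ) z = FT f z + FT g z := by
  unfold FT
  rw [← integral_add (integrable_ex_mul hf (by fun_prop)) (integrable_ex_mul hg (by fun_prop))]
  congr 1; ext ζ; ring

lemma Nice.add {f g : ℝ × E2 → ℂ} (hf : Nice f) (hg : Nice g) : Nice (fun ζ => f ζ + g ζ) := by
  refine ⟨hf.int.add hg.int, hf.meas.add hg.meas, ?_⟩
  refine ne_top_of_le_ne_top ?_ (lintegral_mono (g := fun z => 2 * ‖f z‖ₑ ^ 2 + 2 * ‖g z‖ₑ ^ 2) fun z => ?_)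
  · rw [lintegral_add_left ((hf.meas.enorm.pow_const 2).const_mul 2), lintegral_const_mul' _ _ (by norm_num),
      lintegral_const_mul' _ _ (by norm_num)]
    exact ENNReal.add_ne_top.2 ⟨ENNReal.mul_ne_top (by norm_num) hf.two, ENNReal.mul_ne_top (by norm_num) hg.two⟩
  · calc ‖f z + g z‖ₑ ^ 2 ≤ (‖f z‖ₑ + ‖g z‖ₑ) ^ 2 := pow_le_pow_left' (enorm_add_le _ _) 2
      _ = ‖f z‖ₑ ^ 2 + ‖g z‖ₑ ^ 2 + 2 * (‖f z‖ₑ * ‖g z‖ₑ) := by ring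
      _ ≤ ‖f z‖ₑ ^ 2 + ‖g z‖ₑ ^ 2 + (‖f z‖ₑ ^ 2 + ‖g z‖ₑ ^ 2) := add_le_add_right (amgm _ _) _
      _ = _ := by ring

lemma Nice.sq_int {g : ℝ × E2 → ℂ} (hg : Nice g) : Integrable fun z => ‖FT g z‖ ^ 2 := by
  have hc := continuous_FT hg.int
  refine ⟨(hc.norm.pow 2).aestronglyMeasurable, ?_⟩
  have : ∀ z, ‖‖FT g z‖ ^ 2‖ₑ = ‖FT g z‖ₑ ^ 2 := fun z => by
    rw [enorm_pow, enorm_norm]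
  simp only [HasFiniteIntegral, this]
  exact (plancherel hg.int hg.meas).trans_lt (ENNReal.mul_ne_top ENNReal.ofReal_ne_top hg.two).lt_top

lemma J6_eq {g : ℝ × E2 → ℂ} (h : Integrable fun z => ‖FT g z‖ ^ 6) :
    J6 g = ENNReal.ofReal (∫ z, ‖FT g z‖ ^ 6) := by
  rw [ofReal_integral_eq_lintegral_ofReal h (Eventually.of_forall fun z => by positivity), J6]
  congr 1; ext z
  rw [← ofReal_norm, ENNReal.ofReal_rpow_of_nonneg (norm_nonneg _) (by norm_num)]
  congr 1; rw [← Real.rpow_natCast]; norm_num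

lemma burk_step {b c : ℝ} (hbc : 3 * b < c) {F g : ℝ × E2 → ℂ} (hF : Nice F) (hg : Nice g)
    (sF : ∀ ζ, F ζ ≠ 0 → 0 ≤ ζ.1 ∧ ζ.1 ≤ b) (sg : ∀ ζ, g ζ ≠ 0 → c ≤ ζ.1) :
    J6 (fun ζ => F ζ + g ζ) ≤ J6 F + 59 * (J6 F ^ (2/3:ℝ) * J6 g ^ (1/3:ℝ) + J6 g) := by
  have hFg := hF.add hg
  have hadd : ∀ z, FT (fun ζ => F ζ + g ζ) z = FT F z + FT g z := FT_add hF.int hg.int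
  have cU := continuous_FT hF.int
  have cu := continuous_FT hg.int
  set M := (∫ ζ, ‖F ζ‖) + ∫ ζ, ‖g ζ‖
  have i1 : 0 ≤ ∫ ζ, ‖F ζ‖ := integral_nonneg fun _ => norm_nonneg _
  have i2 : 0 ≤ ∫ ζ, ‖g ζ‖ := integral_nonneg fun _ => norm_nonneg _
  have hM0 : 0 ≤ M := add_nonneg i1 i2
  have bU : ∀ z, ‖FT F z‖ ≤ M := fun z => (norm_FT_le z).trans (le_add_of_nonneg_right i2)
  have bu : ∀ z, ‖FT g z‖ ≤ M := fun z => (norm_FT_le z).trans (le_add_of_nonneg_left i1)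
  have six : ∀ (φ : ℝ × E2 → ℂ), Continuous φ → (∀ z, ‖φ z‖ ≤ 2 * M ^ 4 * (‖FT F z‖ ^ 2 + ‖FT g z‖ ^ 2)) → Integrable φ :=
    fun φ hφ hb => ((hF.sq_int.add hg.sq_int).const_mul (2 * M ^ 4)).mono' hφ.aestronglyMeasurable (Eventually.of_forall hb)
  have p4U : ∀ z, ‖FT F z‖ ^ 4 ≤ M ^ 4 := fun z => pow_le_pow_left₀ (norm_nonneg _) (bU z) 4
  have p4u : ∀ z, ‖FT g z‖ ^ 4 ≤ M ^ 4 := fun z => pow_le_pow_left₀ (norm_nonneg _) (bu z) 4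
  have hM4 : 0 ≤ M ^ 4 := by positivity
  have IU : Integrable fun z => ‖FT F z‖ ^ 6 := by
    refine ((hF.sq_int.const_mul (M ^ 4))).mono' (by fun_prop) (Eventually.of_forall fun z => ?_)
    rw [Real.norm_of_nonneg (by positivity)]
    calc _ = ‖FT F z‖ ^ 4 * ‖FT F z‖ ^ 2 := by ring
      _ ≤ _ := mul_le_mul_of_nonneg_right (p4U z) (by positivity)
  have Iu : Integrable fun z => ‖FT g z‖ ^ 6 := by
    refine ((hg.sq_int.const_mul (M ^ 4))).mono' (by fun_prop) (Eventually.of_forall fun z => ?_)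
    rw [Real.norm_of_nonneg (by positivity)]
    calc _ = ‖FT g z‖ ^ 4 * ‖FT g z‖ ^ 2 := by ring
      _ ≤ _ := mul_le_mul_of_nonneg_right (p4u z) (by positivity)
  have Im : Integrable fun z => ‖FT F z‖ ^ 4 * ‖FT g z‖ ^ 2 := by
    refine ((hg.sq_int.const_mul (M ^ 4))).mono' (by fun_prop) (Eventually.of_forall fun z => ?_)
    rw [Real.norm_of_nonneg (by positivity)]
    exact mul_le_mul_of_nonneg_right (p4U z) (by positivity)
  set P : ℝ × E2 → ℂ := fun z => (starRingEnd ℂ) (FT F z) * FT F z * ((starRingEnd ℂ) (FT F z) * FT F z) *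
    ((starRingEnd ℂ) (FT F z) * FT g z) with hP
  have IP : Integrable P := by
    refine six P ?_ fun z => ?_
    · have := Complex.continuous_conj.comp cU
      exact ((this.mul cU).mul (this.mul cU)).mul (this.mul cu)
    · simp only [hP, norm_mul, RCLike.norm_conj]
      calc _ = ‖FT F z‖ ^ 4 * (‖FT F z‖ * ‖FT g z‖) := by ring
        _ ≤ M ^ 4 * (‖FT F z‖ ^ 2 + ‖FT g z‖ ^ 2) := mul_le_mul (p4U z)
            (by nlinarith [sq_nonneg (‖FT F z‖ - ‖FT g z‖), sq_nonneg ‖FT F z‖, sq_nonneg ‖FT g z‖]) (by positivity) hM4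
        _ ≤ _ := by
          have : 0 ≤ M ^ 4 * (‖FT F z‖ ^ 2 + ‖FT g z‖ ^ 2) := by positivity
          linarith
  have P0 : ∫ z, P z = 0 := by
    have lU := low_FT hF.int (fun ζ h => (sF ζ h).1)
    have lUc := low_conj_FT hF.int (fun ζ h => (sF ζ h).2)
    have lu := low_FT hg.int sg
    have l2 := lUc.mul lU
    exact ((l2.mul l2).mul (lUc.mul lu)).zero (by linarith) IP
  have Ia : Integrable fun z => 6 * (P z).re := IP.re.const_mul 6
  have Ib : Integrable fun z => 59 * (‖FT F z‖ ^ 4 * ‖FT g z‖ ^ 2 + ‖FT g z‖ ^ 6) := (Im.add Iu).const_mul 59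
  have Iab : Integrable fun z => 6 * (P z).re + 59 * (‖FT F z‖ ^ 4 * ‖FT g z‖ ^ 2 + ‖FT g z‖ ^ 6) := Ia.add Ib
  have Is : Integrable fun z => ‖FT F z‖ ^ 6 + (6 * (P z).re + 59 * (‖FT F z‖ ^ 4 * ‖FT g z‖ ^ 2 + ‖FT g z‖ ^ 6)) :=
    IU.add Iab
  have Ifg : Integrable fun z => ‖FT (fun ζ => F ζ + g ζ) z‖ ^ 6 := by
    refine Is.mono' ?_ (Eventually.of_forall fun z => ?_)
    · have := continuous_FT hFg.int
      fun_prop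
    · rw [Real.norm_of_nonneg (by positivity), hadd]; exact six_expand _ _
  have main : ∫ z, ‖FT (fun ζ => F ζ + g ζ) z‖ ^ 6 ≤ (∫ z, ‖FT F z‖ ^ 6) +
      59 * ((∫ z, ‖FT F z‖ ^ 4 * ‖FT g z‖ ^ 2) + ∫ z, ‖FT g z‖ ^ 6) := by
    refine (integral_mono Ifg Is fun z => ?_).trans (le_of_eq ?_)
    · simp only []; rw [hadd]; exact six_expand _ _
    · rw [integral_add IU Iab, integral_add Ia Ib, integral_const_mul, integral_const_mul,
        integral_add Im Iu]
      have : ∫ z, (P z).re = 0 := by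
        have := integral_re IP
        rw [P0] at this; simpa using this
      rw [this]; ring
  have hol : ENNReal.ofReal (∫ z, ‖FT F z‖ ^ 4 * ‖FT g z‖ ^ 2) ≤ J6 F ^ (2/3:ℝ) * J6 g ^ (1/3:ℝ) := by
    rw [ofReal_integral_eq_lintegral_ofReal Im (Eventually.of_forall fun z => by positivity)]
    refine le_trans (le_of_eq ?_) (ENNReal.lintegral_mul_norm_pow_le (μ := volume) (f := fun z => ‖FT F z‖ₑ ^ (6:ℝ))
      (g := fun z => ‖FT g z‖ₑ ^ (6:ℝ)) (by have := cU.measurable; fun_prop) (by have := cu.measurable; fun_prop)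
      (p := 2/3) (q := 1/3) (by norm_num) (by norm_num) (by norm_num))
    congr 1; ext z
    rw [← ENNReal.rpow_mul, ← ENNReal.rpow_mul, ENNReal.ofReal_mul (by positivity), ENNReal.ofReal_pow (norm_nonneg _),
      ENNReal.ofReal_pow (norm_nonneg _), ofReal_norm, ofReal_norm, ← ENNReal.rpow_natCast, ← ENNReal.rpow_natCast]
    norm_num
  rw [J6_eq Ifg]
  refine (ENNReal.ofReal_le_ofReal main).trans ?_
  have n1 : 0 ≤ ∫ z, ‖FT F z‖ ^ 4 * ‖FT g z‖ ^ 2 := integral_nonneg fun _ => by positivity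
  have n2 : 0 ≤ ∫ z, ‖FT g z‖ ^ 6 := integral_nonneg fun _ => by positivity
  have n3 : 0 ≤ ∫ z, ‖FT F z‖ ^ 6 := integral_nonneg fun _ => by positivity
  rw [ENNReal.ofReal_add n3 (by positivity), ENNReal.ofReal_mul (by norm_num), ENNReal.ofReal_add n1 n2,
    ← J6_eq IU, ← J6_eq Iu]
  rw [show ENNReal.ofReal 59 = 59 by norm_num]
  exact add_le_add le_rfl (mul_le_mul_right (add_le_add hol le_rfl) _)

lemma cube_root (x : ℝ≥0∞) : (x ^ (1/3:ℝ)) ^ 3 = x := by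
  rw [← ENNReal.rpow_natCast, ← ENNReal.rpow_mul]; norm_num

lemma burk_step' {b c : ℝ} (hbc : 3 * b < c) {F g : ℝ × E2 → ℂ} (hF : Nice F) (hg : Nice g)
    (sF : ∀ ζ, F ζ ≠ 0 → 0 ≤ ζ.1 ∧ ζ.1 ≤ b) (sg : ∀ ζ, g ζ ≠ 0 → c ≤ ζ.1) :
    J6 (fun ζ => F ζ + g ζ) ^ (1/3:ℝ) ≤ J6 F ^ (1/3:ℝ) + 59 * J6 g ^ (1/3:ℝ) := by
  have h := burk_step hbc hF hg sF sg
  set X := J6 F ^ (1/3:ℝ) with hX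
  set d := J6 g ^ (1/3:ℝ) with hd
  have e1 : J6 F = X ^ 3 := (cube_root _).symm
  have e2 : J6 g = d ^ 3 := (cube_root _).symm
  have e3 : J6 F ^ (2/3:ℝ) = X ^ 2 := by
    rw [hX, ← ENNReal.rpow_natCast, ← ENNReal.rpow_mul]; norm_num
  rw [e3, e2, e1] at h
  have : J6 (fun ζ => F ζ + g ζ) ≤ (X + 59 * d) ^ 3 := by
    refine h.trans ?_
    calc X ^ 3 + 59 * (X ^ 2 * d + d ^ 3) ≤ X ^ 3 + 59 * (X ^ 2 * d + d ^ 3) +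
          (118 * (X ^ 2 * d) + 3 * 59 ^ 2 * (X * d ^ 2) + (59 ^ 3 - 59 : ℕ) * d ^ 3) := le_self_add
      _ = _ := by push_cast [show 59 ^ 3 - 59 = 205320 by norm_num]; ring
  calc _ ≤ ((X + 59 * d) ^ 3) ^ (1/3:ℝ) := ENNReal.rpow_le_rpow this (by norm_num)
    _ = _ := by rw [← ENNReal.rpow_natCast, ← ENNReal.rpow_mul]; norm_num

lemma nice_zero : Nice (fun _ => 0) := ⟨integrable_zero _ _ _, measurable_const, by simp⟩

lemma nice_sum {ι : Type*} {f : ι → ℝ × E2 → ℂ} (hf : ∀ i, Nice (f i)) (s : Finset ι) :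
    Nice (fun ζ => ∑ i ∈ s, f i ζ) := by
  classical
  induction s using Finset.induction_on with
  | empty => simpa using nice_zero
  | insert i s hi ih => simp only [Finset.sum_insert hi]; exact (hf i).add ih

lemma burkholder {a : ℝ} (ha : 0 < a) {f : ℕ → ℝ × E2 → ℂ} (hf : ∀ i, Nice (f i))
    (sf : ∀ i ζ, f i ζ ≠ 0 → ζ ∈ bl (a * 16 ^ i)) (n : ℕ) :
    J6 (fun ζ => ∑ i ∈ Finset.range n, f i ζ) ^ (1/3:ℝ) ≤ 59 * ∑ i ∈ Finset.range n, J6 (f i) ^ (1/3:ℝ) := by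
  induction n with
  | zero => simp [J6, FT]
  | succ n ih =>
    simp only [Finset.sum_range_succ]
    refine (burk_step' (b := a * 16 ^ n / 4) (c := a * 16 ^ n) ?_ (nice_sum hf _) (hf n) ?_ ?_).trans ?_
    · have : 0 < a * 16 ^ n := by positivity
      linarith
    · intro ζ h
      obtain ⟨i, hi, h1⟩ := Finset.exists_ne_zero_of_sum_ne_zero h
      obtain ⟨h2, h3⟩ := sf i ζ h1
      have hp : (0:ℝ) < 16 ^ i := by positivity
      refine ⟨le_trans (by positivity) h2, h3.le.trans ?_⟩
      have : (16:ℝ) ^ (i + 1) ≤ 16 ^ n := pow_le_pow_right₀ (by norm_num) (Finset.mem_range.1 hi)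
      rw [pow_succ] at this
      nlinarith
    · intro ζ h; exact (sf n ζ h).1
    · rw [mul_add]; exact add_le_add ih le_rfl


lemma mink {α ι : Type*} [MeasurableSpace α] {μ : Measure α} {r : ℝ} (hr : 1 ≤ r) (s : Finset ι)
    {h : ι → α → ℝ≥0∞} (hm : ∀ i, AEMeasurable (h i) μ) :
    (∫⁻ x, (∑ i ∈ s, h i x) ^ r ∂μ) ^ (1 / r) ≤ ∑ i ∈ s, (∫⁻ x, h i x ^ r ∂μ) ^ (1 / r) := by
  classical
  have r0 : 0 < r := by linarith
  induction s using Finset.induction_on with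
  | empty => simp [r0]
  | insert i s hi ih =>
    simp only [Finset.sum_insert hi]
    have := ENNReal.lintegral_Lp_add_le (μ := μ) (hm i) (Finset.aemeasurable_fun_sum s fun j _ => hm j) hr
    exact this.trans (add_le_add le_rfl ih)

lemma pair_space {q θ₁ θ₂ : ℝ} (hq0 : 0 < q) (h1 : 0 ≤ θ₁) (h1' : θ₁ ≤ 1) (h2 : 0 ≤ θ₂) (h2' : θ₂ ≤ 1)
    (hq : q * (1 / 2 - (θ₁ + θ₂) / 6) = 1) {u v : ℝ × E2 → ℝ≥0∞} (hu : Measurable u) (hv : Measurable v) :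
    ∫⁻ z, (u z * v z) ^ (q / 2) ≤
      ((∫⁻ z, u z ^ (2:ℝ)) ^ ((1 - θ₁) * q / 4) * (∫⁻ z, u z ^ (6:ℝ)) ^ (θ₁ * q / 12)) *
      ((∫⁻ z, v z ^ (2:ℝ)) ^ ((1 - θ₂) * q / 4) * (∫⁻ z, v z ^ (6:ℝ)) ^ (θ₂ * q / 12)) := by
  have hn1 : 0 ≤ (1 - θ₁) * q / 4 := by have := sub_nonneg.2 h1'; positivity
  have hn2 : 0 ≤ (1 - θ₂) * q / 4 := by have := sub_nonneg.2 h2'; positivity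
  have hn3 : 0 ≤ θ₁ * q / 12 := by positivity
  have hn4 : 0 ≤ θ₂ * q / 12 := by positivity
  have key := ENNReal.lintegral_prod_norm_pow_le (μ := (volume : Measure (ℝ × E2))) (Finset.univ : Finset (Fin 4))
    (f := ![fun z => u z ^ (2:ℝ), fun z => u z ^ (6:ℝ), fun z => v z ^ (2:ℝ), fun z => v z ^ (6:ℝ)])
    (by
      intro i _
      fin_cases i
      · exact (hu.pow_const _).aemeasurable
      · exact (hu.pow_const _).aemeasurable
      · exact (hv.pow_const _).aemeasurable
      · exact (hv.pow_const _).aemeasurable)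
    (p := ![(1 - θ₁) * q / 4, θ₁ * q / 12, (1 - θ₂) * q / 4, θ₂ * q / 12])
    (by simp [Fin.sum_univ_four]; linarith)
    (by
      intro i _
      fin_cases i
      · exact hn1
      · exact hn3
      · exact hn2
      · exact hn4)
  simp only [Fin.prod_univ_four, Matrix.cons_val] at key
  rw [mul_assoc] at key
  refine le_trans (le_of_eq ?_) key
  congr 1; ext z
  rw [← ENNReal.rpow_mul, ← ENNReal.rpow_mul, ← ENNReal.rpow_mul, ← ENNReal.rpow_mul, mul_assoc,
    ← ENNReal.rpow_add_of_nonneg _ _ (by positivity) (by positivity),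
    ← ENNReal.rpow_add_of_nonneg _ _ (by positivity) (by positivity), ENNReal.mul_rpow_of_nonneg _ _ (by positivity)]
  congr 2 <;> ring

lemma pair_time {p q θ₁ θ₂ : ℝ} (hp0 : 0 < p) (hq0 : 0 < q) (h1 : 0 ≤ θ₁) (h1' : θ₁ ≤ 1) (h2 : 0 ≤ θ₂) (h2' : θ₂ ≤ 1)
    (hq : q * (1 / 2 - (θ₁ + θ₂) / 6) = 1) (hp : (θ₁ + θ₂) * p = 4) {u v : ℝ → ℝ × E2 → ℝ≥0∞}
    (hu : Measurable (Function.uncurry u)) (hv : Measurable (Function.uncurry v)) {G H τ σ : ℝ≥0∞}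
    (hG : ∀ t, ∫⁻ z, u t z ^ (2:ℝ) ≤ G) (hH : ∀ t, ∫⁻ z, v t z ^ (2:ℝ) ≤ H)
    (hτ : ∫⁻ t, (∫⁻ z, u t z ^ (6:ℝ)) ^ (1/3:ℝ) ≤ τ * G) (hσ : ∫⁻ t, (∫⁻ z, v t z ^ (6:ℝ)) ^ (1/3:ℝ) ≤ σ * H) :
    (∫⁻ t, (∫⁻ z, (u t z * v t z) ^ (q / 2)) ^ (p / q)) ^ (2 / p) ≤
      (G ^ (1/2:ℝ) * τ ^ (θ₁ / 2)) * (H ^ (1/2:ℝ) * σ ^ (θ₂ / 2)) := by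
  have hn1 := sub_nonneg.2 h1'
  have hn2 := sub_nonneg.2 h2'
  set B : ℝ → ℝ≥0∞ := fun t => (∫⁻ z, u t z ^ (6:ℝ)) ^ (1/3:ℝ) with hB
  set D : ℝ → ℝ≥0∞ := fun t => (∫⁻ z, v t z ^ (6:ℝ)) ^ (1/3:ℝ) with hD
  have hBm : Measurable B := (Measurable.lintegral_prod_right' (hu.pow_const (6:ℝ))).pow_const _
  have hDm : Measurable D := (Measurable.lintegral_prod_right' (hv.pow_const (6:ℝ))).pow_const _
  have hpt : ∀ t, (∫⁻ z, (u t z * v t z) ^ (q / 2)) ^ (p / q) ≤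
      (G ^ ((1 - θ₁) * p / 4) * H ^ ((1 - θ₂) * p / 4)) * (B t ^ (θ₁ * p / 4) * D t ^ (θ₂ * p / 4)) := by
    intro t
    calc _ ≤ ((G ^ ((1 - θ₁) * q / 4) * (∫⁻ z, u t z ^ (6:ℝ)) ^ (θ₁ * q / 12)) *
      (H ^ ((1 - θ₂) * q / 4) * (∫⁻ z, v t z ^ (6:ℝ)) ^ (θ₂ * q / 12))) ^ (p / q) := by
          refine ENNReal.rpow_le_rpow ((pair_space hq0 h1 h1' h2 h2' hq hu.of_uncurry_left hv.of_uncurry_left).trans ?_)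
            (by positivity)
          exact mul_le_mul' (mul_le_mul' (ENNReal.rpow_le_rpow (hG t) (by positivity)) le_rfl)
            (mul_le_mul' (ENNReal.rpow_le_rpow (hH t) (by positivity)) le_rfl)
      _ = _ := by
        simp only [hB, hD]
        rw [ENNReal.mul_rpow_of_nonneg _ _ (by positivity), ENNReal.mul_rpow_of_nonneg _ _ (by positivity),
          ENNReal.mul_rpow_of_nonneg _ _ (by positivity)]
        simp only [← ENNReal.rpow_mul]
        rw [mul_mul_mul_comm]
        congr 3 <;> field_simp <;> ring
  have hI : ∫⁻ t, (∫⁻ z, (u t z * v t z) ^ (q / 2)) ^ (p / q) ≤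
      (G ^ ((1 - θ₁) * p / 4) * H ^ ((1 - θ₂) * p / 4)) * ((τ * G) ^ (θ₁ * p / 4) * (σ * H) ^ (θ₂ * p / 4)) := by
    calc _ ≤ ∫⁻ t, (G ^ ((1 - θ₁) * p / 4) * H ^ ((1 - θ₂) * p / 4)) * (B t ^ (θ₁ * p / 4) * D t ^ (θ₂ * p / 4)) :=
          lintegral_mono hpt
      _ = (G ^ ((1 - θ₁) * p / 4) * H ^ ((1 - θ₂) * p / 4)) * ∫⁻ t, (B t ^ (θ₁ * p / 4) * D t ^ (θ₂ * p / 4)) :=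
          lintegral_const_mul _ ((hBm.pow_const _).mul (hDm.pow_const _))
      _ ≤ _ := by
        refine mul_le_mul_right ((ENNReal.lintegral_mul_norm_pow_le hBm.aemeasurable hDm.aemeasurable (by positivity)
          (by positivity) (by linarith)).trans ?_) _
        exact mul_le_mul' (ENNReal.rpow_le_rpow hτ (by positivity)) (ENNReal.rpow_le_rpow hσ (by positivity))
  refine (ENNReal.rpow_le_rpow hI (by positivity)).trans (le_of_eq ?_)
  rw [ENNReal.mul_rpow_of_nonneg τ _ (by positivity), ENNReal.mul_rpow_of_nonneg σ _ (by positivity)]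
  have e : ∀ (X : ℝ≥0∞) (θ : ℝ), 0 ≤ θ → 0 ≤ 1 - θ → X ^ ((1 - θ) * p / 4) * X ^ (θ * p / 4) = X ^ (p / 4) := by
    intro X θ hθ hθ'
    rw [← ENNReal.rpow_add_of_nonneg _ _ (by positivity) (by positivity)]
    congr 1; ring
  rw [show ∀ a b c d e f : ℝ≥0∞, (a * b) * ((c * d) * (e * f)) = ((a * d) * c) * ((b * f) * e) from fun a b c d e f => by ring,
    e G θ₁ h1 hn1, e H θ₂ h2 hn2, ENNReal.mul_rpow_of_nonneg _ _ (by positivity), ENNReal.mul_rpow_of_nonneg _ _ (by positivity),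
    ENNReal.mul_rpow_of_nonneg _ _ (by positivity)]
  simp only [← ENNReal.rpow_mul]
  congr 3 <;> field_simp <;> ring

lemma sum_mixed {p q : ℝ} (hp : 2 ≤ p) (hq : 2 ≤ q) {ι : Type*} (s : Finset ι) {u : ι → ℝ → ℝ × E2 → ℂ}
    (hu : ∀ i, Measurable (Function.uncurry (u i))) :
    (∫⁻ t, (∫⁻ z, ‖∑ i ∈ s, u i t z‖ₑ ^ q) ^ (p / q)) ^ (2 / p) ≤
      ∑ k ∈ s ×ˢ s, (∫⁻ t, (∫⁻ z, (‖u k.1 t z‖ₑ * ‖u k.2 t z‖ₑ) ^ (q / 2)) ^ (p / q)) ^ (2 / p) := by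
  have hp0 : 0 < p := by linarith
  have hq0 : 0 < q := by linarith
  have hm : ∀ k : ι × ι, Measurable fun w : ℝ × (ℝ × E2) => ‖u k.1 w.1 w.2‖ₑ * ‖u k.2 w.1 w.2‖ₑ := fun k =>
    (hu k.1).enorm.mul (hu k.2).enorm
  set h : ι × ι → ℝ → ℝ≥0∞ := fun k t => (∫⁻ z, (‖u k.1 t z‖ₑ * ‖u k.2 t z‖ₑ) ^ (q / 2)) ^ (2 / q) with hh
  have hhm : ∀ k, Measurable (h k) := fun k =>
    (Measurable.lintegral_prod_right' ((hm k).pow_const (q/2))).pow_const _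
  have e1 : ∀ k t, (∫⁻ z, (‖u k.1 t z‖ₑ * ‖u k.2 t z‖ₑ) ^ (q / 2)) ^ (p / q) = h k t ^ (p / 2) := by
    intro k t
    simp only [hh]
    rw [← ENNReal.rpow_mul]; congr 1; field_simp
  simp_rw [e1]
  have e2 : (2 / p) = 1 / (p / 2) := by field_simp
  rw [e2]
  refine le_trans (ENNReal.rpow_le_rpow (lintegral_mono fun t => ?_) (by positivity))
    (mink (by linarith) (s ×ˢ s) (fun k => (hhm k).aemeasurable))
  have e3 : (∫⁻ z, ‖∑ i ∈ s, u i t z‖ₑ ^ q) ^ (p / q) = ((∫⁻ z, ‖∑ i ∈ s, u i t z‖ₑ ^ q) ^ (1 / (q / 2))) ^ (p / 2) := by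
    rw [← ENNReal.rpow_mul]; congr 1; field_simp
  rw [e3]
  refine ENNReal.rpow_le_rpow ?_ (by positivity)
  have e4 : ∀ k, h k t = (∫⁻ z, (‖u k.1 t z‖ₑ * ‖u k.2 t z‖ₑ) ^ (q / 2)) ^ (1 / (q / 2)) := by
    intro k; simp only [hh]; congr 1; field_simp
  simp_rw [e4]
  refine le_trans (ENNReal.rpow_le_rpow (lintegral_mono fun z => ?_) (by positivity))
    (mink (by linarith) (s ×ˢ s) (h := fun k z => ‖u k.1 t z‖ₑ * ‖u k.2 t z‖ₑ)
      (fun k => ((hm k).comp measurable_prodMk_left).aemeasurable))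
  rw [Finset.sum_product' s s (fun i j => ‖u i t z‖ₑ * ‖u j t z‖ₑ), ← Finset.sum_mul_sum]
  calc ‖∑ i ∈ s, u i t z‖ₑ ^ q ≤ (∑ i ∈ s, ‖u i t z‖ₑ) ^ q := ENNReal.rpow_le_rpow (enorm_sum_le _ _) hq0.le
    _ = _ := by rw [← pow_two, ← ENNReal.rpow_natCast, ← ENNReal.rpow_mul]; congr 1; push_cast; field_simp


lemma Nice.mod {f : ℝ × E2 → ℂ} (hf : Nice f) (t : ℝ) : Nice (fun ζ => ex (t * omega ζ) * f ζ) :=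
  ⟨integrable_ex_mul hf.int (measurable_omega.const_mul t), (measurable_ex.comp (measurable_omega.const_mul t)).mul hf.meas, by
    simpa [enorm_mul] using hf.two⟩

lemma FT_sum {ι : Type*} {f : ι → ℝ × E2 → ℂ} (hf : ∀ i, Nice (f i)) (s : Finset ι) (z) :
    FT (fun ζ => ∑ i ∈ s, f i ζ) z = ∑ i ∈ s, FT (f i) z := by
  unfold FT
  rw [← integral_finsetSum _ fun i _ => integrable_ex_mul (hf i).int (by fun_prop)]
  congr 1; ext ζ; rw [Finset.mul_sum]

lemma ev_sum {ι : Type*} {f : ι → ℝ × E2 → ℂ} (hf : ∀ i, Nice (f i)) (s : Finset ι) (t z) :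
    ev (fun ζ => ∑ i ∈ s, f i ζ) t z = ∑ i ∈ s, ev (f i) t z := by
  unfold ev
  rw [← FT_sum (fun i => (hf i).mod t)]
  congr 1; ext ζ; rw [Finset.mul_sum]

lemma ev_add {f g : ℝ × E2 → ℂ} (hf : Nice f) (hg : Nice g) (t z) :
    ev (fun ζ => f ζ + g ζ) t z = ev f t z + ev g t z := by
  unfold ev
  rw [← FT_add (hf.mod t).int (hg.mod t).int]
  congr 1; ext ζ; ring

lemma ev_two {f : ℝ × E2 → ℂ} (hf : Nice f) (t : ℝ) :
    ∫⁻ z, ‖ev f t z‖ₑ ^ (2:ℝ) ≤ ENNReal.ofReal (8 * Real.pi ^ 3) * ∫⁻ ζ, ‖f ζ‖ₑ ^ 2 := by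
  have := plancherel (hf.mod t).int (hf.mod t).meas
  simpa [enorm_mul, ev] using this

def Core (p q : ℝ) : Prop := ∃ C : ℝ≥0∞, C ≠ ∞ ∧ ∀ (a : ℝ), 0 < a → ∀ (n : ℕ) (f : ℕ → ℝ × E2 → ℂ), (∀ i, Nice (f i)) →
  (∀ i ζ, f i ζ ≠ 0 → ζ ∈ bl (a * 16 ^ i)) →
  (∫⁻ t, (∫⁻ z, ‖ev (fun ζ => ∑ i ∈ Finset.range n, f i ζ) t z‖ₑ ^ q) ^ (p / q)) ^ (2 / p) ≤
    C * ∑ i ∈ Finset.range n, ENNReal.ofReal ((a * 16 ^ i) ^ (2 / (3 * p))) * ∫⁻ ζ, ‖f i ζ‖ₑ ^ 2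

def C0 : ℝ≥0∞ := ENNReal.ofReal (8 * Real.pi ^ 3) + 16 * ENNReal.ofReal dualC
lemma C0_ne : C0 ≠ ∞ := ENNReal.add_ne_top.2 ⟨ENNReal.ofReal_ne_top, ENNReal.mul_ne_top (by norm_num) ENNReal.ofReal_ne_top⟩

lemma blk_two {f : ℝ × E2 → ℂ} (hf : Nice f) (t : ℝ) : ∫⁻ z, ‖ev f t z‖ₑ ^ (2:ℝ) ≤ C0 * ∫⁻ ζ, ‖f ζ‖ₑ ^ 2 :=
  (ev_two hf t).trans (mul_le_mul_left le_self_add _)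

lemma blk_six {a : ℝ} (ha : 0 < a) {f : ℝ × E2 → ℂ} (hf : Nice f) (hs : ∀ ζ, f ζ ≠ 0 → ζ ∈ bl a) :
    ∫⁻ t, (∫⁻ z, ‖ev f t z‖ₑ ^ (6:ℝ)) ^ (1/3:ℝ) ≤ ENNReal.ofReal (a ^ (1/3:ℝ)) * (C0 * ∫⁻ ζ, ‖f ζ‖ₑ ^ 2) := by
  refine (block_endpoint ha hf.int hf.meas (fun ζ h => by by_contra h'; exact h (hs ζ h'))).trans ?_
  rw [ENNReal.ofReal_mul dualC_pos.le, ← mul_assoc, mul_comm (ENNReal.ofReal (a ^ (1/3:ℝ))), mul_right_comm]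
  exact mul_le_mul_left (mul_le_mul_left le_add_self _) _

lemma core_two : Core 2 6 := by
  refine ⟨59 * C0, ENNReal.mul_ne_top (by norm_num) C0_ne, fun a ha n f hf hs => ?_⟩
  have hb : ∀ t, (∫⁻ z, ‖ev (fun ζ => ∑ i ∈ Finset.range n, f i ζ) t z‖ₑ ^ (6:ℝ)) ^ (1/3:ℝ) ≤
      59 * ∑ i ∈ Finset.range n, (∫⁻ z, ‖ev (f i) t z‖ₑ ^ (6:ℝ)) ^ (1/3:ℝ) := by
    intro t
    have := burkholder ha (fun i => (hf i).mod t) (fun i ζ h => hs i ζ (right_ne_zero_of_mul h)) n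
    simp only [← Finset.mul_sum] at this
    exact this
  rw [show (2:ℝ)/6 = 1/3 by norm_num, show (2:ℝ)/2 = 1 by norm_num, ENNReal.rpow_one, show (2:ℝ)/(3*2) = 1/3 by norm_num]
  refine (lintegral_mono hb).trans ?_
  rw [lintegral_const_mul' _ _ (by norm_num), lintegral_finsetSum' _ fun i _ => ?_]
  · rw [mul_assoc]
    refine mul_le_mul_right ?_ _
    rw [Finset.mul_sum]
    refine Finset.sum_le_sum fun i _ => (blk_six (by positivity) (hf i) (hs i)).trans (le_of_eq (by ring))
  · exact ((Measurable.lintegral_prod_right' ((measurable_ev (hf i).meas).enorm.pow_const (6:ℝ))).pow_const _).aemeasurable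

lemma decay_alg {a θ : ℝ} (ha : 0 < a) (k : ℕ) :
    ((a * 16 ^ k) ^ (1/3:ℝ)) ^ (θ ^ 2 / 2) * (a ^ (1/3:ℝ)) ^ ((2 * θ - θ ^ 2) / 2) =
      ((16:ℝ) ^ (-(θ * (1 - θ) / 6))) ^ k * (((a * 16 ^ k) ^ (θ / 3)) ^ (1/2:ℝ) * (a ^ (θ / 3)) ^ (1/2:ℝ)) := by
  obtain ⟨x, rfl⟩ : ∃ x, a = Real.exp x := ⟨Real.log a, (Real.exp_log ha).symm⟩
  obtain ⟨y, hy⟩ : ∃ y, (16:ℝ) = Real.exp y := ⟨Real.log 16, (Real.exp_log (by norm_num)).symm⟩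
  rw [hy, show θ * (1 - θ) = θ - θ ^ 2 by ring]
  generalize θ ^ 2 = s
  simp only [← Real.rpow_natCast, ← Real.exp_mul, ← Real.exp_add]
  congr 1; ring

lemma schur_nat {ρ : ℝ} (h0 : 0 ≤ ρ) (h1 : ρ < 1) (n : ℕ) (w : ℕ → ℝ≥0∞) :
    ∑ k ∈ Finset.range n ×ˢ Finset.range n, ENNReal.ofReal (ρ ^ ((k.1:ℤ) - k.2).natAbs) * (w k.1 + w k.2) ≤
      2 * ENNReal.ofReal (geoS ρ) * ∑ i ∈ Finset.range n, w i := by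
  have := schur_sum h0 h1 ((Finset.range n).map Nat.castEmbedding) (fun k => w k.toNat)
  simp only [Finset.sum_map, Nat.castEmbedding_apply, Int.toNat_natCast] at this
  rwa [Finset.sum_product]

lemma core_gen {p q : ℝ} (hp : 2 < p) (hpq : 2 / p + 3 / q = 3 / 2) (hq : 2 ≤ q) : Core p q := by
  set θ := 2 / p with hθ
  have hp0 : 0 < p := by linarith
  have hq0 : 0 < q := by linarith
  have t0 : 0 < θ := by positivity
  have t1 : θ < 1 := by rw [hθ, div_lt_one hp0]; exact hp
  have hθp : θ * p = 2 := by rw [hθ]; field_simp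
  have hqq : q * (1 / 2 - θ / 3) = 1 := by
    have : θ = 3 / 2 - 3 / q := by linarith
    rw [this]; field_simp; ring
  set ρ : ℝ := (16:ℝ) ^ (-(θ * (1 - θ) / 6)) with hρ
  have hex : 0 < θ * (1 - θ) / 6 := by have := sub_pos.2 t1; positivity
  have r0 : 0 ≤ ρ := by positivity
  have r1 : ρ < 1 := Real.rpow_lt_one_of_one_lt_of_neg (by norm_num) (by linarith)
  refine ⟨2 * ENNReal.ofReal (geoS ρ) * C0, ENNReal.mul_ne_top (ENNReal.mul_ne_top (by norm_num) ENNReal.ofReal_ne_top) C0_ne,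
    fun a ha n f hf hs => ?_⟩
  simp_rw [ev_sum hf]
  refine (sum_mixed hp.le hq _ fun i => measurable_ev (hf i).meas).trans ?_
  set w : ℕ → ℝ≥0∞ := fun i => ENNReal.ofReal ((a * 16 ^ i) ^ (θ / 3)) * (C0 * ∫⁻ ζ, ‖f i ζ‖ₑ ^ 2) with hw
  have key : ∀ i j : ℕ, j ≤ i → (∫⁻ t, (∫⁻ z, (‖ev (f i) t z‖ₑ * ‖ev (f j) t z‖ₑ) ^ (q / 2)) ^ (p / q)) ^ (2 / p) ≤
      ENNReal.ofReal (ρ ^ ((i:ℤ) - j).natAbs) * (w i + w j) := by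
    intro i j hij
    have hk := pair_time (p := p) (q := q) (θ₁ := θ ^ 2) (θ₂ := 2 * θ - θ ^ 2) (u := fun t z => ‖ev (f i) t z‖ₑ) (v := fun t z => ‖ev (f j) t z‖ₑ) hp0 hq0 (by positivity) (by nlinarith)
      (by nlinarith) (by nlinarith [sq_nonneg (1 - θ)]) (by linear_combination hqq) (by linear_combination 2 * hθp)
      (measurable_ev (hf i).meas).enorm (measurable_ev (hf j).meas).enorm (blk_two (hf i)) (blk_two (hf j))
      (blk_six (by positivity) (hf i) (hs i)) (blk_six (by positivity) (hf j) (hs j))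
    refine hk.trans ?_
    obtain ⟨k, rfl⟩ := Nat.exists_eq_add_of_le hij
    have e0 : (((j + k : ℕ) : ℤ) - j).natAbs = k := by simp
    rw [e0]
    have haj : 0 < a * 16 ^ j := by positivity
    have haj' : 0 < a * 16 ^ (j + k) := by positivity
    set X := C0 * ∫⁻ ζ, ‖f (j + k) ζ‖ₑ ^ 2
    set Y := C0 * ∫⁻ ζ, ‖f j ζ‖ₑ ^ 2
    have e1 : ENNReal.ofReal ((a * 16 ^ (j + k)) ^ (1/3:ℝ)) ^ (θ ^ 2 / 2) * ENNReal.ofReal ((a * 16 ^ j) ^ (1/3:ℝ)) ^ ((2 * θ - θ ^ 2) / 2)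
        = ENNReal.ofReal (ρ ^ k) * (ENNReal.ofReal ((a * 16 ^ (j + k)) ^ (θ / 3)) ^ (1/2:ℝ) * ENNReal.ofReal ((a * 16 ^ j) ^ (θ / 3)) ^ (1/2:ℝ)) := by
      have h := decay_alg (θ := θ) haj k
      rw [mul_assoc, ← pow_add] at h
      rw [ENNReal.ofReal_rpow_of_pos (by positivity), ENNReal.ofReal_rpow_of_pos (by positivity),
        ENNReal.ofReal_rpow_of_pos (by positivity), ENNReal.ofReal_rpow_of_pos (by positivity),
        ← ENNReal.ofReal_mul (by positivity), ← ENNReal.ofReal_mul (by positivity), ← ENNReal.ofReal_mul (by positivity), h]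
    have e2 : (X ^ (1/2:ℝ) * ENNReal.ofReal ((a * 16 ^ (j + k)) ^ (1/3:ℝ)) ^ (θ ^ 2 / 2)) *
        (Y ^ (1/2:ℝ) * ENNReal.ofReal ((a * 16 ^ j) ^ (1/3:ℝ)) ^ ((2 * θ - θ ^ 2) / 2)) =
        ENNReal.ofReal (ρ ^ k) * (w (j + k) ^ (1/2:ℝ) * w j ^ (1/2:ℝ)) := by
      rw [mul_mul_mul_comm, e1]
      rw [show w (j + k) = ENNReal.ofReal ((a * 16 ^ (j + k)) ^ (θ / 3)) * X from rfl,
        show w j = ENNReal.ofReal ((a * 16 ^ j) ^ (θ / 3)) * Y from rfl,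
        ENNReal.mul_rpow_of_nonneg _ X (by norm_num), ENNReal.mul_rpow_of_nonneg _ Y (by norm_num)]
      generalize X ^ (1/2:ℝ) = X'
      generalize Y ^ (1/2:ℝ) = Y'
      ring
    rw [e2]
    refine mul_le_mul_right ?_ _
    have sq : ∀ x : ℝ≥0∞, (x ^ (1/2:ℝ)) ^ 2 = x := by
      intro x; rw [← ENNReal.rpow_natCast, ← ENNReal.rpow_mul]; norm_num
    have := amgm (w (j + k) ^ (1/2:ℝ)) (w j ^ (1/2:ℝ))
    rw [sq, sq] at this
    refine le_trans ?_ this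
    exact le_mul_of_one_le_left' (by norm_num)
  have key2 : ∀ k : ℕ × ℕ, (∫⁻ t, (∫⁻ z, (‖ev (f k.1) t z‖ₑ * ‖ev (f k.2) t z‖ₑ) ^ (q / 2)) ^ (p / q)) ^ (2 / p) ≤
      ENNReal.ofReal (ρ ^ ((k.1:ℤ) - k.2).natAbs) * (w k.1 + w k.2) := by
    rintro ⟨i, j⟩
    rcases le_total j i with h | h
    · exact key i j h
    · have := key j i h
      rw [add_comm (w j), ← Int.natAbs_neg, neg_sub] at this
      simp_rw [mul_comm ‖ev (f j) _ _‖ₑ] at this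
      exact this
  refine (Finset.sum_le_sum fun k _ => key2 k).trans ((schur_nat r0 r1 n w).trans (le_of_eq ?_))
  simp only [hw]
  rw [mul_assoc (2 * ENNReal.ofReal (geoS ρ)), Finset.mul_sum (a := C0)]
  congr 1
  refine Finset.sum_congr rfl fun i _ => ?_
  rw [show θ / 3 = 2 / (3 * p) by rw [hθ]; field_simp]
  ring


def W (s : ℝ) (f : ℝ × E2 → ℂ) : ℝ≥0∞ := ∫⁻ ζ, ENNReal.ofReal (|ζ.1| ^ s) * ‖f ζ‖ₑ ^ 2

def mx (p q : ℝ) (u : ℝ → ℝ × E2 → ℂ) : ℝ≥0∞ :=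
  (∫⁻ t, ((∫⁻ z, ‖u t z‖ₑ ^ q) ^ (1 / q)) ^ p) ^ (1 / p)

lemma mx_eq (p q : ℝ) (u : ℝ → ℝ × E2 → ℂ) :
    mx p q u = ((∫⁻ t, (∫⁻ z, ‖u t z‖ₑ ^ q) ^ (p / q)) ^ (2 / p)) ^ (1/2:ℝ) := by
  unfold mx
  rw [← ENNReal.rpow_mul]
  simp_rw [← ENNReal.rpow_mul]
  rw [show 2 / p * (1/2:ℝ) = 1 / p by ring, show 1 / q * p = p / q by ring]

lemma mx_add {p q : ℝ} (hp : 1 ≤ p) (hq : 1 ≤ q) {u v : ℝ → ℝ × E2 → ℂ}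
    (hu : Measurable (Function.uncurry u)) (hv : Measurable (Function.uncurry v)) :
    mx p q (fun t z => u t z + v t z) ≤ mx p q u + mx p q v := by
  have hp0 : 0 < p := by linarith
  have hq0 : 0 < q := by linarith
  have hA : Measurable fun t => (∫⁻ z, ‖u t z‖ₑ ^ q) ^ (1 / q) :=
    (Measurable.lintegral_prod_right' (hu.enorm.pow_const q)).pow_const _
  have hB : Measurable fun t => (∫⁻ z, ‖v t z‖ₑ ^ q) ^ (1 / q) :=
    (Measurable.lintegral_prod_right' (hv.enorm.pow_const q)).pow_const _
  refine le_trans ?_ (ENNReal.lintegral_Lp_add_le hA.aemeasurable hB.aemeasurable hp)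
  refine ENNReal.rpow_le_rpow (lintegral_mono fun t => ENNReal.rpow_le_rpow ?_ hp0.le) (by positivity)
  have h1 : Measurable fun z => ‖u t z‖ₑ := (hu.comp measurable_prodMk_left).enorm
  have h2 : Measurable fun z => ‖v t z‖ₑ := (hv.comp measurable_prodMk_left).enorm
  refine le_trans ?_ (ENNReal.lintegral_Lp_add_le h1.aemeasurable h2.aemeasurable hq)
  exact ENNReal.rpow_le_rpow (lintegral_mono fun z => ENNReal.rpow_le_rpow (enorm_add_le _ _) hq0.le) (by positivity)

lemma Nice.ind {f : ℝ × E2 → ℂ} (hf : Nice f) {s : Set (ℝ × E2)} (hs : MeasurableSet s) : Nice (s.indicator f) := by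
  refine ⟨hf.int.indicator hs, hf.meas.indicator hs, ne_top_of_le_ne_top hf.two (lintegral_mono fun z => ?_)⟩
  by_cases h : z ∈ s <;> simp [h]

lemma W_ind {s : ℝ} (f : ℝ × E2 → ℂ) (S : Set (ℝ × E2)) : W s (S.indicator f) ≤ W s f := by
  refine lintegral_mono fun z => mul_le_mul_right ?_ _
  by_cases h : z ∈ S <;> simp [h]

lemma bl_disj {a : ℝ} (ha : 0 < a) {i j : ℕ} (hij : i < j) : Disjoint (bl (a * 16 ^ i)) (bl (a * 16 ^ j)) := by
  rw [Set.disjoint_left]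
  rintro ζ ⟨_, h1⟩ ⟨h2, _⟩
  obtain ⟨k, rfl⟩ := Nat.exists_eq_add_of_lt hij
  have : (1:ℝ) ≤ 16 ^ k := one_le_pow₀ (by norm_num)
  have h3 : 0 < a * 16 ^ i := by positivity
  have : a * 16 ^ (i + k + 1) = a * 16 ^ i * 16 ^ k * 16 := by ring
  nlinarith

lemma bl_pd {a : ℝ} (ha : 0 < a) (s : Set ℕ) : s.PairwiseDisjoint fun i => bl (a * 16 ^ i) := by
  intro i _ j _ hij
  rcases lt_or_gt_of_ne hij with h | h
  · exact bl_disj ha h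
  · exact (bl_disj ha h).symm

def U (a : ℝ) (n : ℕ) : Set (ℝ × E2) := ⋃ i ∈ Finset.range n, bl (a * 16 ^ i)

lemma meas_U (a : ℝ) (n : ℕ) : MeasurableSet (U a n) :=
  Finset.measurableSet_biUnion _ fun _ _ => measurableSet_bl _

lemma core_fin {p q : ℝ} (hp : 0 < p) {C : ℝ≥0∞} {a : ℝ} (ha : 0 < a) {n : ℕ}
    (hC : ∀ (f : ℕ → ℝ × E2 → ℂ), (∀ i, Nice (f i)) → (∀ i ζ, f i ζ ≠ 0 → ζ ∈ bl (a * 16 ^ i)) →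
  (∫⁻ t, (∫⁻ z, ‖ev (fun ζ => ∑ i ∈ Finset.range n, f i ζ) t z‖ₑ ^ q) ^ (p / q)) ^ (2 / p) ≤
    C * ∑ i ∈ Finset.range n, ENNReal.ofReal ((a * 16 ^ i) ^ (2 / (3 * p))) * ∫⁻ ζ, ‖f i ζ‖ₑ ^ 2)
    {f : ℝ × E2 → ℂ} (hf : Nice f) :
    (∫⁻ t, (∫⁻ z, ‖ev ((U a n).indicator f) t z‖ₑ ^ q) ^ (p / q)) ^ (2 / p) ≤ C * W (2 / (3 * p)) f := by
  have h := hC (fun i => (bl (a * 16 ^ i)).indicator f) (fun i => hf.ind (measurableSet_bl _))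
    (fun i ζ h => Set.mem_of_indicator_ne_zero h)
  have e : (U a n).indicator f = fun ζ => ∑ i ∈ Finset.range n, (bl (a * 16 ^ i)).indicator f ζ := by
    exact Finset.indicator_biUnion _ _ (bl_pd ha _)
  rw [e]
  refine h.trans (mul_le_mul_right ?_ _)
  calc _ ≤ ∑ i ∈ Finset.range n, ∫⁻ ζ in bl (a * 16 ^ i), ENNReal.ofReal (|ζ.1| ^ (2 / (3 * p))) * ‖f ζ‖ₑ ^ 2 := by
        refine Finset.sum_le_sum fun i _ => ?_
        rw [← lintegral_const_mul' _ _ ENNReal.ofReal_ne_top, ← lintegral_indicator (measurableSet_bl _)]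
        refine lintegral_mono fun ζ => ?_
        by_cases hz : ζ ∈ bl (a * 16 ^ i)
        · simp only [hz, Set.indicator_of_mem]
          refine mul_le_mul_left (ENNReal.ofReal_le_ofReal (Real.rpow_le_rpow (by positivity) ?_ (by positivity))) _
          exact hz.1.trans (le_abs_self _)
        · simp [hz]
    _ = ∫⁻ ζ in U a n, ENNReal.ofReal (|ζ.1| ^ (2 / (3 * p))) * ‖f ζ‖ₑ ^ 2 :=
        (lintegral_biUnion_finset (bl_pd ha _) (fun i _ => measurableSet_bl _) _).symm
    _ ≤ _ := setLIntegral_le_lintegral _ _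

def V (a : ℝ) (N : ℕ) : Set (ℝ × E2) := U (a * (16 ^ N)⁻¹) (2 * N)
def Sset (a : ℝ) : Set (ℝ × E2) := ⋃ N, V a N
lemma meas_S (a : ℝ) : MeasurableSet (Sset a) := MeasurableSet.iUnion fun _ => meas_U _ _

lemma mono_V (a : ℝ) : Monotone (V a) := by
  refine monotone_nat_of_le_succ fun N => ?_
  intro ζ h
  simp only [V, U, Set.mem_iUnion, Finset.mem_range, exists_prop] at h ⊢
  obtain ⟨i, hi, h⟩ := h
  refine ⟨i + 1, by omega, ?_⟩
  convert h using 2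
  field_simp
  ring

lemma mem_S {ζ : ℝ × E2} (h : 0 < ζ.1) : ζ ∈ Sset 1 ∨ ζ ∈ Sset 4 := by
  obtain ⟨m, hm1, hm2⟩ := exists_mem_Ico_zpow h (by norm_num : (1:ℝ) < 16)
  rw [zpow_add₀ (by norm_num), zpow_one] at hm2
  have key : ∀ a : ℝ, ζ ∈ bl (a * 16 ^ m) → ζ ∈ Sset a := by
    intro a ha
    simp only [Sset, V, U, Set.mem_iUnion, Finset.mem_range, exists_prop]
    refine ⟨m.natAbs + 1, (m + (m.natAbs + 1)).toNat, by omega, ?_⟩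
    convert ha using 2
    rw [mul_assoc]; congr 1
    rw [← zpow_natCast, ← zpow_natCast, ← zpow_neg, ← zpow_add₀ (by norm_num)]
    congr 1; omega
  by_cases h4 : ζ.1 < 4 * 16 ^ m
  · left; exact key 1 ⟨by simpa using hm1, by simpa using h4⟩
  · right; exact key 4 ⟨by linarith, by linarith⟩

lemma S_pos {a : ℝ} (ha : 0 < a) {ζ : ℝ × E2} (h : ζ ∈ Sset a) : 0 < ζ.1 := by
  simp only [Sset, V, U, Set.mem_iUnion, Finset.mem_range, exists_prop] at h
  obtain ⟨N, i, _, h, _⟩ := h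
  exact lt_of_lt_of_le (by positivity) h

lemma ev_tendsto {f : ℝ × E2 → ℂ} (hf : Nice f) {S : ℕ → Set (ℝ × E2)} (hS : ∀ n, MeasurableSet (S n)) (hm : Monotone S) (t z) :
    Tendsto (fun n => ev ((S n).indicator f) t z) atTop (nhds (ev ((⋃ n, S n).indicator f) t z)) := by
  unfold ev FT
  refine tendsto_integral_of_dominated_convergence (fun ζ => ‖f ζ‖) ?_ hf.int.norm ?_ ?_
  · intro n
    exact (integrable_ex_mul ((hf.ind (hS n)).mod t).int (by fun_prop)).aestronglyMeasurable
  · refine fun n => Eventually.of_forall fun ζ => ?_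
    simp only [norm_mul, norm_ex, one_mul]
    exact norm_indicator_le_norm_self _ _
  · refine Eventually.of_forall fun ζ => ?_
    exact (((hm.tendsto_indicator S f ζ).mono_right (pure_le_nhds _)).const_mul _).const_mul _

lemma piece {p q : ℝ} (hp : 0 < p) (hq : 0 < q) {C : ℝ≥0∞} (hC : ∀ (a : ℝ), 0 < a → ∀ (n : ℕ) (f : ℕ → ℝ × E2 → ℂ), (∀ i, Nice (f i)) →
  (∀ i ζ, f i ζ ≠ 0 → ζ ∈ bl (a * 16 ^ i)) →
  (∫⁻ t, (∫⁻ z, ‖ev (fun ζ => ∑ i ∈ Finset.range n, f i ζ) t z‖ₑ ^ q) ^ (p / q)) ^ (2 / p) ≤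
    C * ∑ i ∈ Finset.range n, ENNReal.ofReal ((a * 16 ^ i) ^ (2 / (3 * p))) * ∫⁻ ζ, ‖f i ζ‖ₑ ^ 2)
    {a : ℝ} (ha : 0 < a) {f : ℝ × E2 → ℂ} (hf : Nice f) :
    mx p q (ev ((Sset a).indicator f)) ≤ (C * W (2 / (3 * p)) f) ^ (1/2:ℝ) := by
  have e : ∀ x : ℝ≥0∞, (x ^ (2 / p)) ^ (p / 2) = x := fun x => by
    rw [← ENNReal.rpow_mul, show 2 / p * (p / 2) = 1 by field_simp, ENNReal.rpow_one]
  have e' : ∀ x : ℝ≥0∞, (x ^ (p / 2)) ^ (2 / p) = x := fun x => by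
    rw [← ENNReal.rpow_mul, show p / 2 * (2 / p) = 1 by field_simp, ENNReal.rpow_one]
  rw [mx_eq]
  refine ENNReal.rpow_le_rpow ?_ (by norm_num)
  rw [← e' (C * _)]
  refine ENNReal.rpow_le_rpow ?_ (by positivity)
  refine mixed_fatou (by positivity) (v := fun N => ev ((V a N).indicator f)) (fun N => measurable_ev (hf.ind (meas_U _ _)).meas)
    (fun t z => ev_tendsto hf (fun N => meas_U _ _) (mono_V a) t z) fun N => ?_
  have := core_fin hp (C := C) (q := q) (a := a * (16 ^ N)⁻¹) (n := 2 * N) (by positivity) (hC _ (by positivity) _) hf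
  rw [← e (∫⁻ t, _)]
  exact ENNReal.rpow_le_rpow this (by positivity)

lemma half {p q : ℝ} (hp : 1 ≤ p) (hq : 1 ≤ q) {C : ℝ≥0∞} (hC : ∀ (a : ℝ), 0 < a → ∀ (n : ℕ) (f : ℕ → ℝ × E2 → ℂ), (∀ i, Nice (f i)) →
  (∀ i ζ, f i ζ ≠ 0 → ζ ∈ bl (a * 16 ^ i)) →
  (∫⁻ t, (∫⁻ z, ‖ev (fun ζ => ∑ i ∈ Finset.range n, f i ζ) t z‖ₑ ^ q) ^ (p / q)) ^ (2 / p) ≤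
    C * ∑ i ∈ Finset.range n, ENNReal.ofReal ((a * 16 ^ i) ^ (2 / (3 * p))) * ∫⁻ ζ, ‖f i ζ‖ₑ ^ 2)
    {f : ℝ × E2 → ℂ} (hf : Nice f) (hs : ∀ ζ, f ζ ≠ 0 → 0 < ζ.1) :
    mx p q (ev f) ≤ 2 * (C * W (2 / (3 * p)) f) ^ (1/2:ℝ) := by
  have h1 := hf.ind (meas_S 1)
  have h2 := hf.ind (meas_S 1).compl
  have h3 := h2.ind (meas_S 4)
  have e : ev f = fun t z => ev ((Sset 1).indicator f) t z + ev ((Sset 4).indicator ((Sset 1)ᶜ.indicator f)) t z := by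
    ext t z
    rw [← ev_add h1 h3]
    congr 1
    ext ζ
    by_cases hz : f ζ = 0
    · have h0 : ∀ T : Set (ℝ × E2), T.indicator f ζ = 0 := fun T => Set.indicator_apply_eq_zero.2 fun _ => hz
      rw [Set.indicator_indicator, h0, h0, hz, add_zero]
    · have := mem_S (hs ζ hz)
      by_cases hh : ζ ∈ Sset 1
      · simp [hh]
      · simp [hh, this.resolve_left hh]
  rw [e, two_mul]
  refine (mx_add hp hq (measurable_ev h1.meas) (measurable_ev h3.meas)).trans (add_le_add ?_ ?_)
  · exact piece (by linarith) (by linarith) hC one_pos hf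
  · exact (piece (by linarith) (by linarith) hC (by norm_num) h2).trans
      (ENNReal.rpow_le_rpow (mul_le_mul_right (W_ind _ _) _) (by norm_num))

def rf (f : ℝ × E2 → ℂ) : ℝ × E2 → ℂ := fun ζ => (starRingEnd ℂ) (f (-ζ))

lemma Nice.rf {f : ℝ × E2 → ℂ} (hf : Nice f) : Nice (rf f) := by
  refine ⟨?_, ?_, ?_⟩
  · have := (hf.int.comp_neg)
    refine this.congr' ?_ ?_
    · exact (Complex.continuous_conj.measurable.comp (hf.meas.comp measurable_neg)).aestronglyMeasurable
    · exact Eventually.of_forall fun ζ => by simp [_root_.rf]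
  · exact Complex.continuous_conj.measurable.comp (hf.meas.comp measurable_neg)
  · have := lintegral_neg_eq_self (μ := (volume : Measure (ℝ × E2))) (fun ζ => ‖f ζ‖ₑ ^ 2)
    simp only [_root_.rf, RCLike.enorm_conj]
    rw [this]; exact hf.two

lemma W_rf (s : ℝ) (f : ℝ × E2 → ℂ) : W s (rf f) = W s f := by
  have := lintegral_neg_eq_self (μ := (volume : Measure (ℝ × E2))) (fun ζ => ENNReal.ofReal (|ζ.1| ^ s) * ‖f ζ‖ₑ ^ 2)
  unfold W
  rw [← this]
  simp [rf, RCLike.enorm_conj]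

lemma omega_neg (ζ : ℝ × E2) : omega (-ζ) = - omega ζ := by
  unfold omega; simp only [Prod.fst_neg, Prod.snd_neg, norm_neg, div_neg]; ring

lemma ev_rf (f : ℝ × E2 → ℂ) (t z) : ev (rf f) t z = (starRingEnd ℂ) (ev f t z) := by
  unfold ev FT
  rw [← integral_conj, ← integral_neg_eq_self]
  congr 1; ext ζ
  simp only [rf, ph_neg_right, omega_neg, neg_neg, map_mul, conj_ex, mul_neg]

lemma mx_rf (p q : ℝ) (f : ℝ × E2 → ℂ) : mx p q (ev (rf f)) = mx p q (ev f) := by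
  unfold mx; simp only [ev_rf, RCLike.enorm_conj]

lemma full {p q : ℝ} (hp : 1 ≤ p) (hq : 1 ≤ q) (h : Core p q) :
    ∃ K : ℝ≥0∞, K ≠ ∞ ∧ ∀ f, Nice f → mx p q (ev f) ≤ K * W (2 / (3 * p)) f ^ (1/2:ℝ) := by
  obtain ⟨C, hC0, hC⟩ := h
  refine ⟨4 * C ^ (1/2:ℝ), ENNReal.mul_ne_top (by norm_num) (ENNReal.rpow_ne_top_of_nonneg (by norm_num) hC0), fun f hf => ?_⟩
  have mP : MeasurableSet {ζ : ℝ × E2 | 0 < ζ.1} := measurableSet_lt measurable_const measurable_fst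
  have mN : MeasurableSet {ζ : ℝ × E2 | ζ.1 < 0} := measurableSet_lt measurable_fst measurable_const
  have h1 := hf.ind mP
  have h2 := hf.ind mN
  have hz : ∀ᵐ ζ : ℝ × E2, ζ.1 ≠ 0 := by
    have : ∀ᵐ x : ℝ, x ≠ 0 := by simp [ae_iff]
    exact (Measure.quasiMeasurePreserving_fst (μ := (volume : Measure ℝ)) (ν := (volume : Measure E2))).ae this
  have e : ev f = fun t z => ev ({ζ : ℝ × E2 | 0 < ζ.1}.indicator f) t z + ev ({ζ : ℝ × E2 | ζ.1 < 0}.indicator f) t z := by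
    ext t z
    rw [← ev_add h1 h2]
    unfold ev FT
    refine integral_congr_ae ?_
    filter_upwards [hz] with ζ hζ
    congr 2
    rcases lt_or_gt_of_ne hζ with h | h
    · simp [h, h.le]
    · simp [h, h.le]
  rw [e]
  refine (mx_add hp hq (measurable_ev h1.meas) (measurable_ev h2.meas)).trans ?_
  have a1 := half hp hq hC h1 (fun ζ h => Set.mem_of_indicator_ne_zero (s := {ζ : ℝ × E2 | 0 < ζ.1}) (f := f) h)
  have a2 := half hp hq hC h2.rf (fun ζ h => by
    have : -ζ ∈ {ζ : ℝ × E2 | ζ.1 < 0} := Set.mem_of_indicator_ne_zero (s := {ζ : ℝ × E2 | ζ.1 < 0}) (f := f) (fun h' => h (by simp [rf, h']))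
    simpa using this)
  rw [mx_rf, W_rf] at a2
  have m : ∀ S : Set (ℝ × E2), 2 * (C * W (2 / (3 * p)) (S.indicator f)) ^ (1/2:ℝ) ≤ 2 * (C ^ (1/2:ℝ) * W (2 / (3 * p)) f ^ (1/2:ℝ)) := by
    intro S
    rw [← ENNReal.mul_rpow_of_nonneg _ _ (by norm_num)]
    exact mul_le_mul_right (ENNReal.rpow_le_rpow (mul_le_mul_right (W_ind _ _) _) (by norm_num)) _
  refine (add_le_add (a1.trans (m _)) (a2.trans (m _))).trans (le_of_eq (by ring))


lemma ft_eq (f : ℝ × E2 → ℂ) (ζ : ℝ × E2) : ft f ζ = FT f (-ζ) := by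
  unfold ft FT ex
  congr 1; ext z
  rw [ph_comm, ph_neg_right, ph]
  congr 2
  push_cast; ring

lemma kp_eq (u₀ : SchwartzMap (ℝ × E2) ℂ) : kpEvol u₀ = ev (ft (fun w => u₀ w)) := by
  ext t z
  unfold kpEvol ev FT
  congr 1; ext ζ
  rw [← mul_assoc, ← ex_add, ex, ph]
  congr 4
  ring

lemma ft_nice (u₀ : SchwartzMap (ℝ × E2) ℂ) (h : Integrable (ft (fun w => u₀ w))) : Nice (ft (fun w => u₀ w)) := by
  haveI : (volume : Measure (ℝ × E2)).IsAddHaarMeasure :=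
    inferInstanceAs (((volume : Measure ℝ).prod (volume : Measure E2)).IsAddHaarMeasure)
  have hi : Integrable (fun w => u₀ w) (volume : Measure (ℝ × E2)) := u₀.integrable
  have hc : Continuous (ft (fun w => u₀ w)) := by
    have : ft (fun w => u₀ w) = fun ζ => FT (fun w => u₀ w) (-ζ) := by ext ζ; exact ft_eq _ _
    rw [this]; exact (continuous_FT hi).comp continuous_neg
  refine ⟨h, hc.measurable, ?_⟩
  set M := ∫ ζ, ‖u₀ ζ‖
  have hM : ∀ ζ, ‖ft (fun w => u₀ w) ζ‖ₑ ≤ ENNReal.ofReal M := fun ζ => by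
    rw [← ofReal_norm, ft_eq]; exact ENNReal.ofReal_le_ofReal (norm_FT_le _)
  refine ne_top_of_le_ne_top ?_ (lintegral_mono (g := fun ζ => ENNReal.ofReal M * ‖ft (fun w => u₀ w) ζ‖ₑ) fun ζ => ?_)
  · rw [lintegral_const_mul' _ _ ENNReal.ofReal_ne_top]
    exact ENNReal.mul_ne_top ENNReal.ofReal_ne_top h.2.ne
  · simp only [pow_two]; exact mul_le_mul_left (hM ζ) _

lemma ev_not_int {f : ℝ × E2 → ℂ} (h : ¬ Integrable f) : ev f = fun _ _ => 0 := by
  ext t z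
  unfold ev FT
  refine integral_undef fun h' => h ?_
  have := integrable_ex_mul (integrable_ex_mul h' (r := fun ζ => -ph z ζ) (by fun_prop)) (r := fun ζ => -(t * omega ζ)) (by fun_prop)
  refine this.congr (Eventually.of_forall fun ζ => ?_)
  beta_reduce
  have e1 : ex (-ph z ζ) * ex (ph z ζ) = 1 := by rw [← ex_add, neg_add_cancel, ex_zero]
  have e2 : ex (-(t * omega ζ)) * ex (t * omega ζ) = 1 := by rw [← ex_add, neg_add_cancel, ex_zero]
  linear_combination (ex (-(t * omega ζ)) * ex (t * omega ζ) * f ζ) * e1 + f ζ * e2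

lemma mixed_zero (p q : ℝ≥0∞) (hp : p ≠ 0) : mixedNorm p q (fun _ _ => 0) = 0 := by
  unfold mixedNorm lpENN
  have : (fun t : ℝ => eLpNorm (fun _ : ℝ × E2 => (0:ℂ)) q volume) = fun _ => 0 := by ext t; simp
  rw [this]
  split_ifs with h
  · exact essSup_const_bot
  · have := ENNReal.toReal_pos hp h
    simp [this]

lemma rhs_eq (s : ℝ) (f : ℝ × E2 → ℂ) :
    eLpNorm (fun ζ : ℝ × E2 => ((|ζ.1| ^ s : ℝ) : ℂ) * f ζ) 2 volume = W (2 * s) f ^ (1/2:ℝ) := by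
  rw [eLpNorm_eq_lintegral_rpow_enorm_toReal (by norm_num) (by norm_num)]
  simp only [ENNReal.toReal_ofNat]
  congr 1
  unfold W
  refine lintegral_congr fun ζ => ?_
  have h0 : (0:ℝ) ≤ |ζ.1| ^ s := by positivity
  rw [enorm_mul, ENNReal.mul_rpow_of_nonneg _ _ (by norm_num), ← ofReal_norm (((|ζ.1| ^ s : ℝ) : ℂ)), Complex.norm_real, Real.norm_of_nonneg h0,
    ENNReal.ofReal_rpow_of_nonneg h0 (by norm_num), ← Real.rpow_mul (abs_nonneg _), mul_comm s 2]
  congr 1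
  exact ENNReal.rpow_natCast _ 2

lemma fin_const {p q : ℝ≥0∞} (hp : p ≠ 0) {K : ℝ≥0∞} (hK : K ≠ ∞)
    (h : ∀ f, Nice f → mixedNorm p q (ev f) ≤ K * W (2 * (1 / (3 * p.toReal))) f ^ (1/2:ℝ)) :
    ∃ C : ℝ, 0 < C ∧ ∀ u₀ : SchwartzMap (ℝ × E2) ℂ,
      mixedNorm p q (kpEvol u₀) ≤
        ENNReal.ofReal C *
          eLpNorm (fun ζ : ℝ × E2 =>
            ((|ζ.1| ^ (1 / (3 * p.toReal)) : ℝ) : ℂ) * ft (fun w => u₀ w) ζ) 2 volume := by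
  refine ⟨K.toReal + 1, by positivity, fun u₀ => ?_⟩
  rw [kp_eq, rhs_eq]
  by_cases hi : Integrable (ft (fun w => u₀ w))
  · refine (h _ (ft_nice u₀ hi)).trans (mul_le_mul_left ?_ _)
    rw [← ENNReal.ofReal_toReal hK, ENNReal.toReal_ofReal (by positivity)]
    exact ENNReal.ofReal_le_ofReal (by linarith)
  · rw [ev_not_int hi, mixed_zero _ _ hp]; exact zero_le

lemma mixed_eq {p q : ℝ≥0∞} (hp : p ≠ ∞) (hq : q ≠ ∞) (hq0 : q ≠ 0) (u) : mixedNorm p q u = mx p.toReal q.toReal u := by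
  unfold mixedNorm lpENN mx
  rw [if_neg hp]
  simp_rw [eLpNorm_eq_lintegral_rpow_enorm_toReal hq0 hq]

lemma main_thm (p q : ℝ≥0∞) (hp : 2 ≤ p) (hpq : 2 / p + 3 / q = 3 / 2) :
    ∃ C : ℝ, 0 < C ∧ ∀ u₀ : SchwartzMap (ℝ × E2) ℂ,
      mixedNorm p q (kpEvol u₀) ≤
        ENNReal.ofReal C *
          eLpNorm (fun ζ : ℝ × E2 =>
            ((|ζ.1| ^ (1 / (3 * p.toReal)) : ℝ) : ℂ) * ft (fun w => u₀ w) ζ) 2 volume := by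
  have hp0 : p ≠ 0 := by rintro rfl; simp at hp
  have hq0 : q ≠ 0 := by
    rintro rfl
    rw [ENNReal.div_zero (by norm_num), add_top] at hpq
    exact absurd hpq.symm (ENNReal.div_ne_top (by norm_num) (by norm_num))
  have hr : 2 / p.toReal + 3 / q.toReal = 3 / 2 := by
    have := congrArg ENNReal.toReal hpq
    rw [ENNReal.toReal_add (ENNReal.div_ne_top (by norm_num) hp0) (ENNReal.div_ne_top (by norm_num) hq0)] at this
    simpa only [ENNReal.toReal_div, ENNReal.toReal_ofNat] using this
  by_cases hpt : p = ∞
  · subst hpt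
    have hqt : q ≠ ∞ := by rintro rfl; norm_num at hr
    have hq2 : q.toReal = 2 := by
      have := ENNReal.toReal_pos hq0 hqt
      simp only [ENNReal.toReal_top, div_zero, zero_add] at hr
      field_simp at hr; linarith
    refine fin_const hp0 (K := C0 ^ (1/2:ℝ)) (ENNReal.rpow_ne_top_of_nonneg (by norm_num) C0_ne) fun f hf => ?_
    unfold mixedNorm lpENN
    rw [if_pos rfl]
    refine essSup_le_of_ae_le _ (Eventually.of_forall fun t => ?_)
    beta_reduce
    rw [eLpNorm_eq_lintegral_rpow_enorm_toReal hq0 hqt, hq2, ← ENNReal.mul_rpow_of_nonneg _ _ (by norm_num)]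
    refine ENNReal.rpow_le_rpow ((blk_two hf t).trans (le_of_eq ?_)) (by norm_num)
    simp [W]
  have hP : 2 ≤ p.toReal := by
    have := ENNReal.toReal_mono hpt hp
    simpa using this
  have hP0 : 0 < p.toReal := by linarith
  have hP1 : 2 / p.toReal ≤ 1 := by rw [div_le_one hP0]; exact hP
  have hqt : q ≠ ∞ := by
    rintro rfl
    simp only [ENNReal.toReal_top, div_zero, add_zero] at hr
    linarith
  have hQ0 := ENNReal.toReal_pos hq0 hqt
  have hQ : 2 ≤ q.toReal := by
    have h1 : 0 < 2 / p.toReal := by positivity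
    have h2 : 3 / q.toReal ≤ 3 / 2 := by linarith
    rw [div_le_div_iff₀ hQ0 (by norm_num)] at h2
    linarith
  have hcore : Core p.toReal q.toReal := by
    rcases hP.eq_or_lt with h | h
    · rw [← h] at hr ⊢
      have : q.toReal = 6 := by
        have h3 : 3 / q.toReal = 1 / 2 := by linarith
        field_simp at h3; linarith
      rw [this]; exact core_two
    · exact core_gen h hr hQ
  obtain ⟨K, hK, h⟩ := full (by linarith) (by linarith) hcore
  refine fin_const hp0 hK fun f hf => ?_
  rw [mixed_eq hpt hqt hq0, show 2 * (1 / (3 * p.toReal)) = 2 / (3 * p.toReal) by ring]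
  exact h f hf


theorem strichartz_kp3d (p q : ℝ≥0∞) (hp : 2 ≤ p) (hpq : 2 / p + 3 / q = 3 / 2) :
    ∃ C : ℝ, 0 < C ∧ ∀ u₀ : SchwartzMap (ℝ × E2) ℂ,
      mixedNorm p q (kpEvol u₀) ≤
        ENNReal.ofReal C *
          eLpNorm (fun ζ : ℝ × E2 =>
            ((|ζ.1| ^ (1 / (3 * p.toReal)) : ℝ) : ℂ) * ft (fun w => u₀ w) ζ) 2 volume := by
  exact main_thm p q hp hpq
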